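/- For rational numbers t and w, the equation w^2 = t^5 + 21t^4 + 26t^3 + 10t^2 + 5t + 1 holds if and only if (t,w) is one of the five points (-1, 0), (0, 1), (0, -1), (1, 8), (1, -8). Equivalently, the set of affine rational points of the genus-2 hyperelliptic curve C: w^2 = (t+1)(t^4+20t^3+6t^2+4t+1) is exactly {(-1,0), (0,±1), (1,±8)}. -/

import Mathlib

/-!
With `Y = (t - 1) / 2` and `W = w / 4` the curve becomes `W² = F(Y)`, where
`F = 4 + 24 Y + 56 Y² + 60 Y³ + 26 Y⁴ + 2 Y⁵ = 2 (1 + Y) g` and `g = Y⁴ + 12 Y³ + 18 Y² + 10 Y + 2` is Eisenstein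
at `2`. The proof is an infinite descent by halving on the Jacobian, carried out near the identity in
the 2-adic topology; it combines the bound on the Selmer group with the 2-adic logarithm that Chabauty's
method would integrate.

*Divisors.* A divisor of degree two is given by its Mumford representation (`OnJ`): `a = Y² + d₁ Y + d₀`
divides `F - b²` with `b` linear. Throughout `P₀ = (0, 2)` up to the sign of `W`, and the class considered
is that of `D - 2 P₀`; it is close to `0` when `a` is 2-adically close to `Y²`.

*The number field.* Let `π` be a root of `g` and `K = ℚ(π)`. The power basis has discriminant `-688`, the
signature is `(2, 1)`, and the Minkowski bound is below `4`, so `𝓞 K` is a principal ideal domain. There is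
a single prime `π` above `2`, with `v(2) = v(π)⁴`. The unit group has rank `2`, and `-1`, `1 + π`, `1 + π - π²`
generate it modulo squares because no nontrivial product of them is a square 2-adically. Consequently
a unit which is 2-adically close enough to a square is a square (`AV.unit_square`).

*Halving.* For a divisor with `a` close to `Y²`, the values `a(π)` and `a(-1)` are squares (`selmer`), hence
the class is divisible by two. The half is explicit (`exists_step`, `OnJ_halve`): from `F = B² + a Y² c` and
`(d + e Y + ℓ Y²)² = a Y² + 2 B s - s² c` one gets `F - (B - s c)² = c (d + e Y + ℓ Y²)²`.

*Descent.* The quantity `5 d₀ - d₁ - d₀² / 2` is, to the precision needed, a 2-adic logarithm. Halving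
lowers its exact valuation by one (`St.step`), whereas a divisor for which the valuation is `2` contradicts
`selmer` (`St.base`). So there is no divisor to which the descent applies (`St.false`).

*Points.* Each rational point with `Y ∉ {0, -1, -1/2}` gives such a divisor (`exists_start`): for `Y` even it
is `P + P₀`, and otherwise it is the residual intersection of the curve with the graph of a polynomial
that has double contact at `P₀` and passes through `P`. For `Y` odd with `1 + Y` of valuation one there is no
point at all (`no_unit_case`). The values `Y = 0, -1, -1/2`, that is `t = 1, -1, 0`, give the five points.
-/

/-! ### The quartic field and its power basis -/

open Polynomial NumberField

/-- The quartic factor `g` of `F = 2 (1 + Y) g`. -/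
noncomputable def gpoly : ℚ[X] := X ^ 4 + 12 * X ^ 3 + 18 * X ^ 2 + 10 * X + 2

lemma gpoly_monic : gpoly.Monic := by
  unfold gpoly; monicity!

lemma gpoly_natDegree : gpoly.natDegree = 4 := by
  unfold gpoly; compute_degree!

lemma gpoly_irreducible : Irreducible gpoly := by
  let h : ℤ[X] := X ^ 4 + 12 * X ^ 3 + 18 * X ^ 2 + 10 * X + 2
  have hm : h.Monic := by simp only [h]; monicity!
  have hd : h.natDegree = 4 := by simp only [h]; compute_degree!
  have hmap : gpoly = h.map (Int.castRingHom ℚ) := by simp [gpoly, h]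
  rw [hmap]
  change Irreducible (h.map (algebraMap ℤ ℚ))
  rw [← hm.irreducible_iff_irreducible_map_fraction_map (K := ℚ)]
  have hP : (Ideal.span {(2 : ℤ)}).IsPrime := by
    rw [Ideal.span_singleton_prime (by norm_num)]; exact Int.prime_two
  have hc : ∀ n, h.coeff n = if n = 4 then 1 else if n = 3 then 12 else if n = 2 then 18 else if n = 1 then 10 else if n = 0 then 2 else 0 := by
    intro n
    simp only [h]
    have : (X ^ 4 + 12 * X ^ 3 + 18 * X ^ 2 + 10 * X + 2 : ℤ[X]) = X ^ 4 + C 12 * X ^ 3 + C 18 * X ^ 2 + C 10 * X + C 2 := by simp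
    rw [this]
    simp only [coeff_add, coeff_X_pow, coeff_C_mul, coeff_X, coeff_C]
    split_ifs <;> first | omega | simp_all
  refine irreducible_of_eisenstein_criterion hP ?_ ?_ ?_ ?_ hm.isPrimitive
  · rw [hm.leadingCoeff, Ideal.mem_span_singleton]; norm_num
  · intro n hn
    have hn' : n < 4 := by
      rw [degree_eq_natDegree hm.ne_zero, hd] at hn; exact_mod_cast hn
    rw [Ideal.mem_span_singleton, hc]
    interval_cases n <;> norm_num
  · rw [degree_eq_natDegree hm.ne_zero, hd]; norm_num
  · rw [hc, Ideal.span_singleton_pow, Ideal.mem_span_singleton]; norm_num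

section field
variable {K : Type} [Field K] [NumberField K] {p : K}

/-- `p` is a root of `g`. Together with `[K : ℚ] = 4` this says `K = ℚ(p)`. -/
def IsRt (p : K) : Prop := p ^ 4 + 12 * p ^ 3 + 18 * p ^ 2 + 10 * p + 2 = 0

lemma IsRt.eq (hp : IsRt p) : p ^ 4 + 12 * p ^ 3 + 18 * p ^ 2 + 10 * p + 2 = 0 := hp

lemma IsRt.aeval (hp : IsRt p) : aeval p gpoly = 0 := by
  have : p ^ 4 + 12 * p ^ 3 + 18 * p ^ 2 + 10 * p + 2 = 0 := hp
  simp only [gpoly, map_add, map_mul, map_pow, aeval_X, map_ofNat]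
  exact this

lemma IsRt.minpoly (hp : IsRt p) : minpoly ℚ p = gpoly :=
  (minpoly.eq_of_irreducible_of_monic gpoly_irreducible hp.aeval gpoly_monic).symm

lemma IsRt.li (hp : IsRt p) : LinearIndependent ℚ (fun i : Fin 4 => p ^ (i : ℕ)) := by
  have := linearIndependent_pow (K := ℚ) p
  rw [hp.minpoly, gpoly_natDegree] at this
  exact this

lemma IsRt.indep (hp : IsRt p) {a b c d : ℚ}
    (h : (a : K) + b * p + c * p ^ 2 + d * p ^ 3 = 0) : a = 0 ∧ b = 0 ∧ c = 0 ∧ d = 0 := by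
  have := Fintype.linearIndependent_iff.mp hp.li ![a, b, c, d] (by
    simp [Fin.sum_univ_four, Algebra.smul_def]; linear_combination h)
  exact ⟨this 0, this 1, this 2, this 3⟩

/-- The power basis `1, p, p², p³` of `K`. -/
noncomputable def IsRt.basis (hp : IsRt p) (hK : Module.finrank ℚ K = 4) : Module.Basis (Fin 4) ℚ K :=
  basisOfLinearIndependentOfCardEqFinrank hp.li (by simp [hK])

lemma IsRt.basis_apply (hp : IsRt p) (hK : Module.finrank ℚ K = 4) (i : Fin 4) :
    hp.basis hK i = p ^ (i : ℕ) := by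
  simp [IsRt.basis]

lemma IsRt.span (hp : IsRt p) (hK : Module.finrank ℚ K = 4) (x : K) :
    ∃ a b c d : ℚ, x = a + b * p + c * p ^ 2 + d * p ^ 3 := by
  refine ⟨(hp.basis hK).repr x 0, (hp.basis hK).repr x 1, (hp.basis hK).repr x 2, (hp.basis hK).repr x 3, ?_⟩
  conv_lhs => rw [← (hp.basis hK).sum_repr x]
  simp [Fin.sum_univ_four, Algebra.smul_def, IsRt.basis_apply]

/-- The matrix of multiplication by `a + b p + c p² + d p³` in the power basis, written as the same
polynomial in the companion matrix of `g`. -/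
def mulMat (a b c d : ℚ) : Matrix (Fin 4) (Fin 4) ℚ :=
  let C : Matrix (Fin 4) (Fin 4) ℚ := !![0,0,0,-2; 1,0,0,-10; 0,1,0,-18; 0,0,1,-12]
  a • (1 : Matrix (Fin 4) (Fin 4) ℚ) + b • C + c • C ^ 2 + d • C ^ 3

lemma IsRt.leftMul (hp : IsRt p) (hK : Module.finrank ℚ K = 4) :
    Algebra.leftMulMatrix (hp.basis hK) p = !![0,0,0,-2; 1,0,0,-10; 0,1,0,-18; 0,0,1,-12] := by
  have h4 : p ^ 4 = (-2 : ℚ) • p ^ 0 + (-10 : ℚ) • p ^ 1 + (-18 : ℚ) • p ^ 2 + (-12 : ℚ) • p ^ 3 := by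
    simp [Algebra.smul_def]; linear_combination hp.eq
  ext i j
  rw [Algebra.leftMulMatrix_eq_repr_mul, IsRt.basis_apply, ← pow_succ']
  fin_cases j
  · have : p ^ (0 + 1) = hp.basis hK 1 := by simp [IsRt.basis_apply]
    simp only [Fin.zero_eta, Fin.val_zero, this]
    fin_cases i <;> simp
  · have : p ^ (1 + 1) = hp.basis hK 2 := by simp [IsRt.basis_apply]
    simp only [Fin.mk_one, Fin.val_one, this]
    fin_cases i <;> simp
  · have : p ^ (2 + 1) = hp.basis hK 3 := by simp [IsRt.basis_apply]
    simp only [Fin.reduceFinMk, Fin.val_two, this]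
    fin_cases i <;> simp
  · have : p ^ (3 + 1) = (-2 : ℚ) • hp.basis hK 0 + (-10 : ℚ) • hp.basis hK 1 + (-18 : ℚ) • hp.basis hK 2 + (-12 : ℚ) • hp.basis hK 3 := by simpa [IsRt.basis_apply] using h4
    have e : (((⟨3, by norm_num⟩ : Fin 4) : Fin 4) : ℕ) + 1 = 3 + 1 := rfl
    rw [e, this]
    fin_cases i <;> simp

lemma IsRt.norm (hp : IsRt p) (hK : Module.finrank ℚ K = 4) (a b c d : ℚ) :
    Algebra.norm ℚ ((a : K) + b * p + c * p ^ 2 + d * p ^ 3) = (mulMat a b c d).det := by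
  rw [Algebra.norm_eq_matrix_det (hp.basis hK), mulMat]
  congr 1
  have : (a : K) + b * p + c * p ^ 2 + d * p ^ 3 = a • 1 + b • p + c • p ^ 2 + d • p ^ 3 := by
    simp [Algebra.smul_def]
  rw [this]
  simp only [map_add, map_smul, map_pow, map_one, hp.leftMul hK]

lemma mulMat_eq (a b c d : ℚ) : mulMat a b c d =
   !![a, -2*d, -2*c+24*d, -2*b+24*c-252*d;
      b, a-10*d, -10*c+118*d, -10*b+118*c-1236*d;
      c, b-18*d, a-18*c+206*d, -18*b+206*c-2150*d;
      d, c-12*d, b-12*c+126*d, a-12*b+126*c-1306*d] := by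
  simp only [mulMat]
  ext i j
  fin_cases i <;> fin_cases j <;>
    simp [pow_succ, Matrix.mul_apply, Fin.sum_univ_four] <;> ring

lemma det4 (M : Matrix (Fin 4) (Fin 4) ℚ) : M.det =
  M 0 0 * (M 1 1 * (M 2 2 * M 3 3 - M 2 3 * M 3 2) - M 1 2 * (M 2 1 * M 3 3 - M 2 3 * M 3 1) + M 1 3 * (M 2 1 * M 3 2 - M 2 2 * M 3 1))
  - M 0 1 * (M 1 0 * (M 2 2 * M 3 3 - M 2 3 * M 3 2) - M 1 2 * (M 2 0 * M 3 3 - M 2 3 * M 3 0) + M 1 3 * (M 2 0 * M 3 2 - M 2 2 * M 3 0))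
  + M 0 2 * (M 1 0 * (M 2 1 * M 3 3 - M 2 3 * M 3 1) - M 1 1 * (M 2 0 * M 3 3 - M 2 3 * M 3 0) + M 1 3 * (M 2 0 * M 3 1 - M 2 1 * M 3 0))
  - M 0 3 * (M 1 0 * (M 2 1 * M 3 2 - M 2 2 * M 3 1) - M 1 1 * (M 2 0 * M 3 2 - M 2 2 * M 3 0) + M 1 2 * (M 2 0 * M 3 1 - M 2 1 * M 3 0)) := by
  rw [Matrix.det_succ_row_zero]
  simp [Fin.sum_univ_four, Matrix.det_fin_three, Fin.succAbove]
  ring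

end field

/-! ### Discriminant and signature -/

section field
variable {K : Type} [Field K] [NumberField K] {p : K}

lemma IsRt.trace (hp : IsRt p) (hK : Module.finrank ℚ K = 4) (a b c d : ℚ) :
    Algebra.trace ℚ K ((a : K) + b * p + c * p ^ 2 + d * p ^ 3)
      = 4 * a - 12 * b + 108 * c - 1110 * d := by
  rw [Algebra.trace_eq_matrix_trace (hp.basis hK)]
  have h1 : (a : K) + b * p + c * p ^ 2 + d * p ^ 3 = a • 1 + b • p + c • p ^ 2 + d • p ^ 3 := by
    simp [Algebra.smul_def]
  have h2 : Algebra.leftMulMatrix (hp.basis hK) ((a : K) + b * p + c * p ^ 2 + d * p ^ 3)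
      = mulMat a b c d := by
    rw [h1, mulMat]
    simp only [map_add, map_smul, map_pow, map_one, hp.leftMul hK]
  rw [h2, mulMat_eq]
  simp [Matrix.trace, Fin.sum_univ_four]
  ring

/-- The power basis has discriminant `-688 = -2⁴ · 43`. -/
lemma IsRt.discr (hp : IsRt p) (hK : Module.finrank ℚ K = 4) :
    Algebra.discr ℚ (fun i : Fin 4 => p ^ (i : ℕ)) = -688 := by
  have t (n : ℕ) (a b c d : ℚ) (h : p ^ n = (a : K) + b * p + c * p ^ 2 + d * p ^ 3) :
      Algebra.trace ℚ K (p ^ n) = 4 * a - 12 * b + 108 * c - 1110 * d := by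
    rw [h, hp.trace hK]
  have e := hp.eq
  have t0 := t 0 1 0 0 0 (by simp)
  have t1 := t 1 0 1 0 0 (by simp)
  have t2 := t 2 0 0 1 0 (by simp)
  have t3 := t 3 0 0 0 1 (by simp)
  have t4 := t 4 (-2) (-10) (-18) (-12) (by push_cast; linear_combination e)
  have t5 := t 5 24 118 206 126 (by push_cast; linear_combination (p - 12) * e)
  have t6 := t 6 (-252) (-1236) (-2150) (-1306) (by push_cast; linear_combination (p ^ 2 - 12 * p + 126) * e)
  rw [Algebra.discr_def]
  have : Algebra.traceMatrix ℚ (fun i : Fin 4 => p ^ (i : ℕ)) =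
    Matrix.of fun i j : Fin 4 => Algebra.trace ℚ K (p ^ ((i : ℕ) + (j : ℕ))) := by
    ext i j
    simp [Algebra.traceMatrix_apply, Algebra.traceForm_apply, pow_add]
  rw [this, det4]
  simp only [Matrix.of_apply, Fin.val_zero, Fin.val_one, Fin.val_two, show ((3 : Fin 4) : ℕ) = 3 from rfl, Nat.reduceAdd, t0, t1, t2, t3, t4, t5, t6]
  norm_num

lemma IsRt.isIntegral (hp : IsRt p) : IsIntegral ℤ p := by
  refine ⟨X ^ 4 + 12 * X ^ 3 + 18 * X ^ 2 + 10 * X + 2, by monicity!, ?_⟩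
  simp only [eval₂_add, eval₂_mul, eval₂_pow, eval₂_X, eval₂_ofNat]
  exact hp.eq

lemma IsRt.discr_eq (hp : IsRt p) (hK : Module.finrank ℚ K = 4) :
    ∃ n : ℤ, n ^ 2 * NumberField.discr K = -688 := by
  classical
  have hc : Fintype.card (Module.Free.ChooseBasisIndex ℤ (𝓞 K)) = Fintype.card (Fin 4) := by
    rw [← Module.finrank_eq_card_chooseBasisIndex, RingOfIntegers.rank, hK]; simp
  let e := Fintype.equivOfCardEq hc
  let B := (integralBasis K).reindex e
  have hB : Algebra.discr ℚ B = NumberField.discr K := by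
    rw [coe_discr, ← Algebra.discr_reindex ℚ (integralBasis K) e]
    congr 1
    ext i
    simp [B]
  let v : Fin 4 → K := fun i => p ^ (i : ℕ)
  have hv : v = Matrix.vecMul B ((B.toMatrix v).map (algebraMap ℚ K)) := by
    ext j
    simp only [Matrix.vecMul, dotProduct, Matrix.map_apply]
    conv_lhs => rw [← B.sum_repr (v j)]
    refine Finset.sum_congr rfl fun i _ => ?_
    rw [Algebra.smul_def, mul_comm]; rfl
  have h_int : ∀ i j, ∃ n : ℤ, (n : ℚ) = B.toMatrix v i j := by
    intro i j
    have hvj : IsIntegral ℤ (v j) := hp.isIntegral.pow _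
    let y : 𝓞 K := ⟨v j, hvj⟩
    refine ⟨(RingOfIntegers.basis K).repr y (e.symm i), ?_⟩
    have := integralBasis_repr_apply K y (e.symm i)
    simp only [Module.Basis.toMatrix_apply, B, Module.Basis.repr_reindex_apply]
    rw [← eq_intCast (algebraMap ℤ ℚ), ← this]
    rfl
  choose Q hQ using h_int
  refine ⟨(Matrix.of Q).det, ?_⟩
  have h1 : B.toMatrix v = (Matrix.of Q).map (Int.castRingHom ℚ) := by
    ext i j; simp [hQ]
  have h2 := hp.discr hK
  change Algebra.discr ℚ v = -688 at h2
  rw [hv, Algebra.discr_of_matrix_vecMul, hB, h1, ← RingHom.mapMatrix_apply, ← RingHom.map_det] at h2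
  have : (((Matrix.of Q).det ^ 2 * NumberField.discr K : ℤ) : ℚ) = ((-688 : ℤ) : ℚ) := by
    rw [Int.cast_mul, Int.cast_pow]; simpa using h2
  exact_mod_cast this

lemma IsRt.discr_bound (hp : IsRt p) (hK : Module.finrank ℚ K = 4) :
    NumberField.discr K < 0 ∧ |NumberField.discr K| ≤ 688 := by
  obtain ⟨n, hn⟩ := hp.discr_eq hK
  have hn0 : 1 ≤ n ^ 2 := by
    have : n ≠ 0 := by rintro rfl; norm_num at hn
    have := sq_pos_of_ne_zero this
    omega
  have h1 : NumberField.discr K < 0 := by nlinarith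
  refine ⟨h1, ?_⟩
  rw [abs_of_neg h1]; nlinarith

/-- A quartic field of negative discriminant has exactly one complex place, because the sign of the
discriminant is `(-1)^r₂`. -/
lemma IsRt.nrComplex (hp : IsRt p) (hK : Module.finrank ℚ K = 4) :
    InfinitePlace.nrComplexPlaces K = 1 ∧ InfinitePlace.nrRealPlaces K = 2 := by
  have h := InfinitePlace.card_add_two_mul_card_eq_rank K
  rw [hK] at h
  have h1 := NumberField.sign_discr K
  rw [Int.sign_eq_neg_one_of_neg (hp.discr_bound hK).1] at h1
  have h2 : InfinitePlace.nrComplexPlaces K ≤ 2 := by omega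
  interval_cases h3 : InfinitePlace.nrComplexPlaces K
  · norm_num at h1
  · omega
  · norm_num at h1
end field

/-! ### Class number one -/

section field
variable {K : Type} [Field K] [NumberField K] {p : K}

/-- The root of `g` as an algebraic integer. -/
def IsRt.int (hp : IsRt p) : 𝓞 K := ⟨p, hp.isIntegral⟩

lemma IsRt.int_coe (hp : IsRt p) : ((hp.int : 𝓞 K) : K) = p := rfl

lemma IsRt.int_eq (hp : IsRt p) :
    hp.int ^ 4 + 12 * hp.int ^ 3 + 18 * hp.int ^ 2 + 10 * hp.int + 2 = 0 := by
  apply RingOfIntegers.ext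
  simp only [map_add, map_mul, map_pow, map_ofNat, map_zero, IsRt.int_coe]
  exact hp.eq

lemma IsRt.norm_p (hp : IsRt p) (hK : Module.finrank ℚ K = 4) : Algebra.norm ℤ hp.int = 2 := by
  have h := hp.norm hK 0 1 0 0
  rw [mulMat_eq, det4] at h
  have h2 : ((Algebra.norm ℤ hp.int : ℤ) : ℚ) = 2 := by
    rw [Algebra.coe_norm_int, IsRt.int_coe]
    simpa using h
  exact_mod_cast h2

/-- The Minkowski bound of `K` is below `4`, so only ideals of norm `2` and `3` matter. -/
lemma IsRt.minkowski (hp : IsRt p) (hK : Module.finrank ℚ K = 4) :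
    (4 / Real.pi) ^ InfinitePlace.nrComplexPlaces K *
      ((Module.finrank ℚ K).factorial / (Module.finrank ℚ K : ℝ) ^ (Module.finrank ℚ K) * √|(NumberField.discr K : ℝ)|) < 4 := by
  rw [(hp.nrComplex hK).1, hK]
  have h1 : |(NumberField.discr K : ℝ)| ≤ 688 := by exact_mod_cast (hp.discr_bound hK).2
  have h2 : √|(NumberField.discr K : ℝ)| ≤ 27 := by
    rw [Real.sqrt_le_left (by norm_num)]; linarith
  have h3 : 4 / Real.pi < 4 / 3 := by
    apply div_lt_div_of_pos_left <;> linarith [Real.pi_gt_three]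
  have h4 : (0 : ℝ) < 4 / Real.pi := by positivity
  have h5 := Real.sqrt_nonneg |(NumberField.discr K : ℝ)|
  have h6 : ((Nat.factorial 4 : ℕ) : ℝ) = 24 := by norm_num [Nat.factorial]
  rw [h6, pow_one]
  push_cast
  nlinarith

/-- An ideal of norm `2` is generated by `π`, which has norm `2`; there is none of norm `3` since `g` has no
root modulo `3`. -/
lemma IsRt.isPID (hp : IsRt p) (hK : Module.finrank ℚ K = 4) : IsPrincipalIdealRing (𝓞 K) := by
  apply RingOfIntegers.isPrincipalIdealRing_of_isPrincipal_of_norm_le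
  rintro ⟨I, hI⟩ hle
  have hn4 : Ideal.absNorm I < 4 := by
    have := lt_of_le_of_lt hle (hp.minkowski hK)
    exact_mod_cast this
  have hI0 : I ≠ ⊥ := nonZeroDivisors.ne_zero hI
  have hn0 : Ideal.absNorm I ≠ 0 := by
    rwa [Ne, Ideal.absNorm_eq_zero_iff]
  have key : ∀ n : ℕ, n.Prime → Ideal.absNorm I = n →
      ∃ f : 𝓞 K →+* ZMod n, RingHom.ker f = I := by
    intro n hn h
    have hc : Nat.card (𝓞 K ⧸ I) = n := by
      rw [← h, Ideal.absNorm_apply, Submodule.cardQuot_apply]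
    have : Finite (𝓞 K ⧸ I) := Nat.finite_of_card_ne_zero (by rw [hc]; exact hn.ne_zero)
    let _ := Fintype.ofFinite (𝓞 K ⧸ I)
    have : Fact n.Prime := ⟨hn⟩
    let e := ZMod.ringEquivOfPrime (𝓞 K ⧸ I) hn (by rw [← Nat.card_eq_fintype_card, hc])
    refine ⟨(e.symm : (𝓞 K ⧸ I) →+* ZMod n).comp (Ideal.Quotient.mk I), ?_⟩
    ext x
    rw [RingHom.mem_ker, ← Ideal.Quotient.eq_zero_iff_mem]
    exact e.symm.map_eq_zero_iff
  have hroot : ∀ n : ℕ, ∀ f : 𝓞 K →+* ZMod n,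
      f hp.int ^ 4 + 12 * f hp.int ^ 3 + 18 * f hp.int ^ 2 + 10 * f hp.int + 2 = 0 := by
    intro n f
    have := congrArg f hp.int_eq
    simpa only [map_add, map_mul, map_pow, map_ofNat, map_zero] using this
  have : Ideal.absNorm I = 1 ∨ Ideal.absNorm I = 2 ∨ Ideal.absNorm I = 3 := by omega
  rcases this with h | h | h
  · rw [Ideal.absNorm_eq_one_iff] at h
    change Submodule.IsPrincipal I
    rw [h]; exact top_isPrincipal
  · obtain ⟨f, hf⟩ := key 2 Nat.prime_two h
    have h0 : f hp.int = 0 := by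
      have := hroot 2 f
      revert this
      generalize f hp.int = x
      revert x; decide
    have hmem : hp.int ∈ I := by rw [← hf]; exact h0
    have hdvd : I ∣ Ideal.span {hp.int} := by
      rw [Ideal.dvd_span_singleton]; exact hmem
    obtain ⟨J, hJ⟩ := hdvd
    have hN := congrArg Ideal.absNorm hJ
    rw [map_mul, Ideal.absNorm_span_singleton, hp.norm_p hK, h] at hN
    have hJ1 : Ideal.absNorm J = 1 := by
      have : (2 : ℤ).natAbs = 2 := rfl
      omega
    rw [Ideal.absNorm_eq_one_iff] at hJ1
    rw [hJ1, Ideal.mul_top] at hJ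
    exact ⟨⟨hp.int, by simpa using hJ.symm⟩⟩
  · obtain ⟨f, hf⟩ := key 3 Nat.prime_three h
    have := hroot 3 f
    exfalso
    revert this
    generalize f hp.int = x
    revert x; decide
end field

/-! ### The 2-adic valuation -/

/-- `q ∈ 2^k ℤ₂`; in particular `D 0 q` says that `q` has odd denominator. -/
def D (k : ℕ) (q : ℚ) : Prop := ∃ z : ℤ_[2], (q : ℚ_[2]) = 2 ^ k * z

lemma D_iff (k : ℕ) (q : ℚ) : D k q ↔ ‖(q : ℚ_[2])‖ ≤ (1 / 2) ^ k := by
  have h2 : ‖(2 : ℚ_[2])‖ = 1 / 2 := by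
    have := Padic.norm_p (p := 2); push_cast at this; rw [this]; norm_num
  have h20 : (2 : ℚ_[2]) ≠ 0 := two_ne_zero
  constructor
  · rintro ⟨z, hz⟩
    rw [hz, norm_mul, norm_pow, h2]
    have := z.2
    have h3 : (0 : ℝ) < (1 / 2) ^ k := by positivity
    change ‖(z : ℚ_[2])‖ ≤ 1 at this
    nlinarith
  · intro h
    refine ⟨⟨(q : ℚ_[2]) / 2 ^ k, ?_⟩, ?_⟩
    · rw [norm_div, norm_pow, h2, div_le_one (by positivity)]; exact h
    · change _ = (2 : ℚ_[2]) ^ k * ((q : ℚ_[2]) / 2 ^ k)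
      field_simp

lemma padic_norm_lt (q : ℚ) (h : ‖(q : ℚ_[2])‖ < 1) : D 1 q := by
  rw [D_iff]
  have := (Padic.norm_le_pow_iff_norm_lt_pow_add_one (p := 2) (q : ℚ_[2]) (-1)).mpr (by simpa using h)
  simpa using this

section av
variable {K : Type} [Field K] [NumberField K] {p : K}

/-- `v` is a nonarchimedean absolute value on `K` extending the 2-adic one of `ℚ`, normalised by
`v 2 = 1 / 2`. -/
structure AV (v : K → ℝ) : Prop where
  mul : ∀ x y, v (x * y) = v x * v y
  add : ∀ x y, v (x + y) ≤ max (v x) (v y)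
  rat : ∀ q : ℚ, v (q : K) = ‖(q : ℚ_[2])‖
  nonneg : ∀ x, 0 ≤ v x
  zero : ∀ x, v x = 0 → x = 0

/-- Such an absolute value is the pull-back of the norm along an embedding into an algebraic closure
of `ℚ₂`. -/
lemma exists_AV (K : Type) [Field K] [NumberField K] : ∃ v : K → ℝ, AV v := by
  let φ : K →ₐ[ℚ] PadicAlgCl 2 := IsAlgClosed.lift
  refine ⟨fun x => ‖φ x‖, ?_, ?_, ?_, ?_, ?_⟩
  · intro x y; simp
  · intro x y; simp only [map_add]; exact PadicAlgCl.isNonarchimedean 2 _ _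
  · intro q
    have h1 : φ (q : K) = algebraMap ℚ_[2] (PadicAlgCl 2) (q : ℚ_[2]) := by
      simp
    simp only [h1]
    exact PadicAlgCl.norm_extends 2 _
  · intro x; exact norm_nonneg _
  · intro x h
    simpa using h

variable {v : K → ℝ}

namespace AV

lemma one (hv : AV v) : v 1 = 1 := by have := hv.rat 1; simpa using this
lemma two (hv : AV v) : v 2 = 1 / 2 := by
  have := hv.rat 2
  have h2 := Padic.norm_p (p := 2)
  push_cast at this h2; rw [this, h2]; norm_num
lemma zero' (hv : AV v) : v 0 = 0 := by have := hv.rat 0; simpa using this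
lemma neg_one (hv : AV v) : v (-1) = 1 := by have := hv.rat (-1); simpa using this
lemma neg (hv : AV v) (x : K) : v (-x) = v x := by
  rw [show -x = (-1) * x by ring, hv.mul, hv.neg_one, one_mul]
lemma pow (hv : AV v) (x : K) (n : ℕ) : v (x ^ n) = v x ^ n := by
  induction n with
  | zero => simp [hv.one]
  | succ n ih => rw [pow_succ, hv.mul, ih, pow_succ]
lemma sub (hv : AV v) (x y : K) : v (x - y) ≤ max (v x) (v y) := by
  rw [sub_eq_add_neg, ← hv.neg y]; exact hv.add _ _
lemma add_lt (hv : AV v) {x y : K} {c : ℝ} (hx : v x < c) (hy : v y < c) : v (x + y) < c :=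
  (hv.add x y).trans_lt (max_lt hx hy)
lemma add_le (hv : AV v) {x y : K} {c : ℝ} (hx : v x ≤ c) (hy : v y ≤ c) : v (x + y) ≤ c :=
  (hv.add x y).trans (max_le hx hy)
lemma sub_le (hv : AV v) {x y : K} {c : ℝ} (hx : v x ≤ c) (hy : v y ≤ c) : v (x - y) ≤ c :=
  (hv.sub x y).trans (max_le hx hy)
lemma add_eq (hv : AV v) {x y : K} (h : v y < v x) : v (x + y) = v x := by
  apply le_antisymm
  · exact hv.add_le le_rfl h.le
  · by_contra hc
    push Not at hc
    have := hv.sub (x + y) y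
    rw [add_sub_cancel_right] at this
    exact absurd (this.trans_lt (max_lt hc h)) (lt_irrefl _)
lemma int (hv : AV v) (n : ℤ) : v (n : K) ≤ 1 := by
  have := hv.rat n
  push_cast at this
  rw [this]; exact Padic.norm_int_le_one n
lemma inv (hv : AV v) (x : K) : v x⁻¹ = (v x)⁻¹ := by
  by_cases h : x = 0
  · subst h; simp [hv.zero']
  · have h1 : v x ≠ 0 := fun h0 => h (hv.zero _ h0)
    have : v x⁻¹ * v x = 1 := by rw [← hv.mul, inv_mul_cancel₀ h, hv.one]
    exact eq_inv_of_mul_eq_one_left this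
lemma div (hv : AV v) (x y : K) : v (x / y) = v x / v y := by
  rw [div_eq_mul_inv, hv.mul, hv.inv, div_eq_mul_inv]

lemma even (hv : AV v) (n : ℤ) : v ((2 * n : ℤ) : K) ≤ 1 / 2 := by
  push_cast
  rw [hv.mul, hv.two]
  have := hv.int n; linarith

/-- `2` is totally ramified: `g` is Eisenstein, so `v(π)⁴ = v(2)`. -/
lemma p4 (hv : AV v) (hp : IsRt p) : v p ^ 4 = 1 / 2 := by
  have e := hp.eq
  have n0 := hv.nonneg p
  have hlt : v p < 1 := by
    by_contra hc
    push Not at hc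
    have h4 : p ^ 4 = -(2 * (6 * p ^ 3 + 9 * p ^ 2 + 5 * p + 1)) := by linear_combination e
    have b : v (6 * p ^ 3 + 9 * p ^ 2 + 5 * p + 1) ≤ v p ^ 3 := by
      have i6 := hv.int 6
      have i9 := hv.int 9
      have i5 := hv.int 5
      push_cast at i6 i9 i5
      have a1 : 1 ≤ v p ^ 2 := one_le_pow₀ hc
      have a2 : v p ^ 2 ≤ v p ^ 3 := pow_le_pow_right₀ hc (by norm_num)
      have a3 : v p ≤ v p ^ 2 := by nlinarith
      refine hv.add_le (hv.add_le (hv.add_le ?_ ?_) ?_) ?_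
      · rw [hv.mul, hv.pow]; nlinarith
      · rw [hv.mul, hv.pow]; nlinarith
      · rw [hv.mul]; nlinarith
      · rw [hv.one]; linarith
    have h5 := congrArg v h4
    rw [hv.neg, hv.mul, hv.two, hv.pow] at h5
    have : v p ^ 3 ≤ v p ^ 4 := pow_le_pow_right₀ hc (by norm_num)
    have : 1 ≤ v p ^ 3 := one_le_pow₀ hc
    linarith
  have h4 : p ^ 4 = -(2 * (1 + p * (6 * p ^ 2 + 9 * p + 5))) := by linear_combination e
  have b : v (p * (6 * p ^ 2 + 9 * p + 5)) < 1 := by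
    have i6 := hv.int 6
    have i9 := hv.int 9
    have i5 := hv.int 5
    push_cast at i6 i9 i5
    have : v (6 * p ^ 2 + 9 * p + 5) ≤ 1 := by
      refine hv.add_le (hv.add_le ?_ ?_) i5
      · rw [hv.mul, hv.pow]; nlinarith [hv.nonneg 6]
      · rw [hv.mul]; nlinarith [hv.nonneg 9]
    rw [hv.mul]; nlinarith [hv.nonneg (6 * p ^ 2 + 9 * p + 5)]
  have h5 := congrArg v h4
  rw [hv.neg, hv.mul, hv.two, hv.pow, hv.add_eq (by rwa [hv.one]), hv.one] at h5
  linarith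

lemma p_pos (hv : AV v) (hp : IsRt p) : 0 < v p := by
  have := hv.p4 hp
  have h := hv.nonneg p
  rcases h.eq_or_lt with h | h
  · rw [← h] at this; norm_num at this
  · exact h

lemma p_lt (hv : AV v) (hp : IsRt p) : v p < 1 := by
  have := hv.p4 hp
  by_contra hc
  push Not at hc
  have := one_le_pow₀ hc (n := 4)
  linarith

lemma rat_lt (hv : AV v) (hp : IsRt p) {q : ℚ} (h : v (q : K) < 1) : v (q : K) ≤ v p ^ 4 := by
  rw [hv.p4 hp]
  rw [hv.rat] at h ⊢
  simpa using (D_iff 1 q).mp (padic_norm_lt q h)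

/-- If the coordinates of `x` are 2-integral, then either all of them are even or `v(x) = v(π)^i` with
`i < 4`. -/
lemma coords1 (hv : AV v) (hp : IsRt p) {a b c d : ℚ} (ha : v (a : K) ≤ 1) (hb : v (b : K) ≤ 1)
    (hc : v (c : K) ≤ 1) (hd : v (d : K) ≤ 1) :
    (v (a : K) ≤ v p ^ 4 ∧ v (b : K) ≤ v p ^ 4 ∧ v (c : K) ≤ v p ^ 4 ∧ v (d : K) ≤ v p ^ 4) ∨
    ∃ i : ℕ, i < 4 ∧ v (a + b * p + c * p ^ 2 + d * p ^ 3) = v p ^ i := by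
  have h0 := hv.p_pos hp
  have h1 := hv.p_lt hp
  have p2 : v p ^ 2 < v p := by nlinarith
  have p3 : v p ^ 3 < v p ^ 2 := by nlinarith [pow_pos h0 2]
  have p4 : v p ^ 4 < v p ^ 3 := by nlinarith [pow_pos h0 3]
  have tb : v (b * p : K) ≤ v p := by rw [hv.mul]; nlinarith
  have tc : v (c * p ^ 2 : K) ≤ v p ^ 2 := by rw [hv.mul, hv.pow]; nlinarith
  have td : v (d * p ^ 3 : K) ≤ v p ^ 3 := by rw [hv.mul, hv.pow]; nlinarith [pow_pos h0 3]
  rcases ha.eq_or_lt with ha | ha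
  · right
    refine ⟨0, by norm_num, ?_⟩
    rw [show (a + b * p + c * p ^ 2 + d * p ^ 3 : K) = a + (b * p + c * p ^ 2 + d * p ^ 3) by ring,
      hv.add_eq, ha, pow_zero]
    rw [ha]
    refine hv.add_lt (hv.add_lt ?_ ?_) ?_ <;> linarith
  replace ha := hv.rat_lt hp ha
  rcases hb.eq_or_lt with hb | hb
  · right
    refine ⟨1, by norm_num, ?_⟩
    have hb' : v (b * p : K) = v p := by rw [hv.mul, hb, one_mul]
    rw [show (a + b * p + c * p ^ 2 + d * p ^ 3 : K) = b * p + (a + c * p ^ 2 + d * p ^ 3) by ring,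
      hv.add_eq, hb', pow_one]
    rw [hb']
    refine hv.add_lt (hv.add_lt ?_ ?_) ?_ <;> linarith
  replace hb := hv.rat_lt hp hb
  have tb : v (b * p : K) ≤ v p ^ 4 := by rw [hv.mul]; nlinarith [hv.nonneg (b : K)]
  rcases hc.eq_or_lt with hc | hc
  · right
    refine ⟨2, by norm_num, ?_⟩
    have hb' : v (c * p ^ 2 : K) = v p ^ 2 := by rw [hv.mul, hc, one_mul, hv.pow]
    rw [show (a + b * p + c * p ^ 2 + d * p ^ 3 : K) = c * p ^ 2 + (a + b * p + d * p ^ 3) by ring,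
      hv.add_eq, hb']
    rw [hb']
    refine hv.add_lt (hv.add_lt ?_ ?_) ?_ <;> linarith
  replace hc := hv.rat_lt hp hc
  have tc : v (c * p ^ 2 : K) ≤ v p ^ 4 := by rw [hv.mul, hv.pow]; nlinarith [hv.nonneg (c : K)]
  rcases hd.eq_or_lt with hd | hd
  · right
    refine ⟨3, by norm_num, ?_⟩
    have hb' : v (d * p ^ 3 : K) = v p ^ 3 := by rw [hv.mul, hd, one_mul, hv.pow]
    rw [show (a + b * p + c * p ^ 2 + d * p ^ 3 : K) = d * p ^ 3 + (a + b * p + c * p ^ 2) by ring,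
      hv.add_eq, hb']
    rw [hb']
    refine hv.add_lt (hv.add_lt ?_ ?_) ?_ <;> linarith
  replace hd := hv.rat_lt hp hd
  exact Or.inl ⟨ha, hb, hc, hd⟩

lemma coords_int (hv : AV v) (hp : IsRt p) (k : ℕ) : ∀ {a b c d : ℚ}, v (a : K) ≤ 1 → v (b : K) ≤ 1 →
    v (c : K) ≤ 1 → v (d : K) ≤ 1 → v (a + b * p + c * p ^ 2 + d * p ^ 3) ≤ (1 / 2) ^ k →
    v (a : K) ≤ (1 / 2) ^ k ∧ v (b : K) ≤ (1 / 2) ^ k ∧ v (c : K) ≤ (1 / 2) ^ k ∧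
      v (d : K) ≤ (1 / 2) ^ k := by
  induction k with
  | zero => intro a b c d ha hb hc hd _; simpa using ⟨ha, hb, hc, hd⟩
  | succ k ih =>
    intro a b c d ha hb hc hd h
    have h4 := hv.p4 hp
    have half : ∀ q : ℚ, v ((q / 2 : ℚ) : K) = 2 * v (q : K) := by
      intro q
      have : ((q / 2 : ℚ) : K) * 2 = q := by push_cast; ring
      have := congrArg v this
      rw [hv.mul, hv.two] at this
      linarith
    rcases hv.coords1 hp ha hb hc hd with ⟨a1, b1, c1, d1⟩ | ⟨i, hi, hi2⟩
    · rw [h4] at a1 b1 c1 d1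
      have e : (a + b * p + c * p ^ 2 + d * p ^ 3 : K) =
          (((a / 2 : ℚ) : K) + ((b / 2 : ℚ) : K) * p + ((c / 2 : ℚ) : K) * p ^ 2 + ((d / 2 : ℚ) : K) * p ^ 3) * 2 := by
        push_cast; ring
      rw [e, hv.mul, hv.two, pow_succ (1 / 2 : ℝ)] at h
      have := ih (a := a / 2) (b := b / 2) (c := c / 2) (d := d / 2) (by rw [half]; linarith) (by rw [half]; linarith) (by rw [half]; linarith)
        (by rw [half]; linarith) (by linarith)
      simp only [half] at this
      rw [pow_succ]
      obtain ⟨q1, q2, q3, q4⟩ := this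
      refine ⟨?_, ?_, ?_, ?_⟩ <;> linarith
    · exfalso
      rw [hi2] at h
      have h5 : v p ^ 4 < v p ^ i := pow_lt_pow_right_of_lt_one₀ (hv.p_pos hp) (hv.p_lt hp) hi
      have h6 : ((1 : ℝ) / 2) ^ (k + 1) ≤ 1 / 2 := by
        rw [pow_succ]
        have : ((1 : ℝ) / 2) ^ k ≤ 1 := pow_le_one₀ (by norm_num) (by norm_num)
        linarith
      linarith

lemma exists_scale (hv : AV v) (q : ℚ) : ∃ n : ℕ, ∀ m : ℕ, n ≤ m → v ((q * 2 ^ m : ℚ) : K) ≤ 1 := by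
  obtain ⟨n, hn⟩ := pow_unbounded_of_one_lt (v (q : K)) (by norm_num : (1 : ℝ) < 2)
  refine ⟨n, fun m hm => ?_⟩
  push_cast
  rw [hv.mul, hv.pow, hv.two]
  have h1 : (2 : ℝ) ^ n ≤ 2 ^ m := pow_le_pow_right₀ (by norm_num) hm
  have h2 : (2 : ℝ) ^ m * (1 / 2) ^ m = 1 := by rw [← mul_pow]; norm_num
  have h3 : (0 : ℝ) < (1 / 2) ^ m := by positivity
  nlinarith

/-- The power basis is a basis of the 2-adic integers of `K`: if `v(x) ≤ v(2)^k`, the coordinates of `x`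
lie in `2^k ℤ₂`. -/
lemma coords (hv : AV v) (hp : IsRt p) (k : ℕ) {a b c d : ℚ}
    (h : v (a + b * p + c * p ^ 2 + d * p ^ 3) ≤ v p ^ (4 * k)) :
    D k a ∧ D k b ∧ D k c ∧ D k d := by
  rw [pow_mul, hv.p4 hp] at h
  obtain ⟨na, ha⟩ := hv.exists_scale a
  obtain ⟨nb, hb⟩ := hv.exists_scale b
  obtain ⟨nc, hc⟩ := hv.exists_scale c
  obtain ⟨nd, hd⟩ := hv.exists_scale d
  let m := na + nb + nc + nd
  have h3 : (0 : ℝ) < (1 / 2) ^ m := by positivity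
  have := hv.coords_int hp (k + m) (ha m (by omega)) (hb m (by omega)) (hc m (by omega)) (hd m (by omega)) (by
    have e : (((a * 2 ^ m : ℚ) : K) + ((b * 2 ^ m : ℚ) : K) * p + ((c * 2 ^ m : ℚ) : K) * p ^ 2 +
      ((d * 2 ^ m : ℚ) : K) * p ^ 3) = (a + b * p + c * p ^ 2 + d * p ^ 3) * 2 ^ m := by push_cast; ring
    rw [e, hv.mul, hv.pow, hv.two, pow_add _ k m]
    exact mul_le_mul_of_nonneg_right h h3.le)
  simp only [D_iff, ← hv.rat]
  have e : ∀ q : ℚ, v ((q * 2 ^ m : ℚ) : K) = v (q : K) * (1 / 2) ^ m := by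
    intro q; push_cast; rw [hv.mul, hv.pow, hv.two]
  simp only [e, pow_add] at this
  exact ⟨le_of_mul_le_mul_right this.1 h3, le_of_mul_le_mul_right this.2.1 h3,
    le_of_mul_le_mul_right this.2.2.1 h3, le_of_mul_le_mul_right this.2.2.2 h3⟩

lemma of_D (hv : AV v) (hp : IsRt p) {k : ℕ} {q : ℚ} (h : D k q) : v (q : K) ≤ v p ^ (4 * k) := by
  rw [pow_mul, hv.p4 hp, hv.rat]; exact (D_iff k q).mp h

/-- The value group is generated by `v(π)`. -/
lemma value (hv : AV v) (hp : IsRt p) (hK : Module.finrank ℚ K = 4) {x : K} (hx : x ≠ 0) :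
    ∃ k : ℤ, v x = v p ^ k := by
  have h4 := hv.p4 hp
  have h0 : 0 < v x := lt_of_le_of_ne (hv.nonneg x) (fun h => hx (hv.zero _ h.symm))
  -- the largest power of 2 dividing x
  obtain ⟨k, hk1, hk2⟩ := exists_mem_Ioc_zpow h0 (by norm_num : (1 : ℝ) < 2)
  have hz : ∀ k : ℤ, v ((2 : K) ^ k) = (1 / 2) ^ k := by
    intro k
    cases k with
    | ofNat n => simp [hv.pow, hv.two]
    | negSucc n => rw [zpow_negSucc, zpow_negSucc, hv.inv, hv.pow, hv.two]
  obtain ⟨a, b, c, d, hy⟩ := hp.span hK (x * 2 ^ (k + 1))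
  have h2 : (2 : ℝ) ^ (k + 1) * (1 / 2) ^ (k + 1) = 1 := by rw [← mul_zpow]; norm_num
  have h3 : (0 : ℝ) < (1 / 2) ^ (k + 1) := by positivity
  have hle : v (x * 2 ^ (k + 1)) ≤ 1 := by rw [hv.mul, hz]; nlinarith
  have hgt : 1 / 2 < v (x * 2 ^ (k + 1)) := by
    rw [hv.mul, hz]
    rw [zpow_add₀ (by norm_num)] at h2 h3 ⊢
    have := mul_lt_mul_of_pos_right hk1 h3
    rw [zpow_add₀ (by norm_num)] at h2
    norm_num at h2 this ⊢
    nlinarith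
  rw [hy] at hle
  have hc := hv.coords hp 0 (by simpa using hle)
  simp only [D_iff, ← hv.rat, pow_zero] at hc
  obtain ⟨ha, hb, hc, hd⟩ := hc
  have hpz : v p ≠ 0 := (hv.p_pos hp).ne'
  have tp : v p ^ (4 * (k + 1)) = (1 / 2) ^ (k + 1) := by
    rw [zpow_mul, ← h4]; norm_cast
  rcases hv.coords1 hp ha hb hc hd with ⟨a1, b1, c1, d1⟩ | ⟨i, hi, hi2⟩
  · exfalso
    rw [hy] at hgt
    have : ∀ (q : ℚ) (i : ℕ), v (q : K) ≤ v p ^ 4 → v (q * p ^ i : K) ≤ 1 / 2 := by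
      intro q i h
      rw [hv.mul, hv.pow]
      have : v p ^ i ≤ 1 := pow_le_one₀ (hv.nonneg p) (hv.p_lt hp).le
      rw [h4] at h
      nlinarith [hv.nonneg (q : K), pow_nonneg (hv.nonneg p) i]
    have h5 := hv.add_le (hv.add_le (hv.add_le (this a 0 a1) (this b 1 b1)) (this c 2 c1)) (this d 3 d1)
    simp only [pow_zero, mul_one, pow_one] at h5
    linarith
  · rw [← hy, hv.mul, hz, ← tp] at hi2
    refine ⟨i - 4 * (k + 1), ?_⟩
    rw [zpow_sub₀ hpz, zpow_natCast, ← hi2]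
    rw [mul_div_assoc, div_self (zpow_ne_zero _ hpz), mul_one]

/-- `y² - 1` never has odd valuation below `8 = v(4)` in terms of `π`: write it as `u (u + 2)` with
`u = y - 1`, where `2` has valuation `4`. -/
lemma sq_ne (hv : AV v) (hp : IsRt p) (hK : Module.finrank ℚ K = 4) (y : K) (k : ℕ) (hk : k < 8) (hodd : k % 2 = 1) :
    v (y ^ 2 - 1) ≠ v p ^ k := by
  intro h
  have h4 := hv.p4 hp
  have p0 := hv.p_pos hp
  have p1 := hv.p_lt hp
  have e : y ^ 2 - 1 = (y - 1) * (y + 1) := by ring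
  rw [e, hv.mul] at h
  have hpk : 0 < v p ^ k := pow_pos p0 k
  have hs : y - 1 ≠ 0 := by
    intro h0; rw [h0, hv.zero', zero_mul] at h; exact hpk.ne h
  have ht : y + 1 ≠ 0 := by
    intro h0; rw [h0, hv.zero', mul_zero] at h; exact hpk.ne h
  obtain ⟨i, hi⟩ := hv.value hp hK hs
  obtain ⟨j, hj⟩ := hv.value hp hK ht
  rw [hi, hj, ← zpow_add₀ p0.ne', ← zpow_natCast] at h
  have hij : i + j = k := zpow_right_injective₀ p0 p1.ne h
  have inj : ∀ a b : ℤ, a < b → v p ^ b < v p ^ a := fun a b hab =>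
    (zpow_lt_zpow_iff_right_of_lt_one₀ p0 p1).mpr hab
  have v2 : v (2 : K) = v p ^ (4 : ℤ) := by rw [hv.two, ← h4]; norm_cast
  rcases lt_trichotomy i j with hlt | heq | hlt
  · have : v (y - 1) = v (-2 : K) := by
      rw [show (-2 : K) = (y - 1) + (-(y + 1)) by ring, hv.add_eq]
      rw [hv.neg, hi, hj]; exact inj _ _ hlt
    rw [hv.neg, v2, hi] at this
    have := zpow_right_injective₀ p0 p1.ne this
    omega
  · omega
  · have : v (y + 1) = v (2 : K) := by
      rw [show (2 : K) = (y + 1) + (-(y - 1)) by ring, hv.add_eq (x := y + 1) (y := -(y - 1))]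
      rw [hv.neg (y - 1), hi, hj]; exact inj _ _ hlt
    rw [v2, hj] at this
    have := zpow_right_injective₀ p0 p1.ne this
    omega

end AV
end av

/-! ### Units modulo squares -/

section units
variable {K : Type} [Field K] [NumberField K] {p : K}

/-- Since the units have rank `2` and cyclic torsion, they have at most `2³` classes modulo squares, so
two of the `16` subproducts of four units differ by a square. -/
lemma units_dep (hr : Units.rank K = 2) (u : Fin 4 → (𝓞 K)ˣ) :
    ∃ s t : Fin 4 → Fin 2, s ≠ t ∧ ∃ z : (𝓞 K)ˣ, (∏ i, u i ^ (s i : ℕ)) * (∏ i, u i ^ (t i : ℕ)) = z ^ 2 := by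
  obtain ⟨τ, hτ⟩ := IsCyclic.exists_generator (α := Units.torsion K)
  have rep : ∀ x : (𝓞 K)ˣ, ∃ c : ℤ × (Fin (Units.rank K) → ℤ),
      x = (τ : (𝓞 K)ˣ) ^ c.1 * ∏ i, Units.fundSystem K i ^ c.2 i := by
    intro x
    obtain ⟨⟨ζ, e⟩, h, -⟩ := Units.exist_unique_eq_mul_prod K x
    obtain ⟨n, hn⟩ := Subgroup.mem_zpowers_iff.mp (hτ ζ)
    refine ⟨(n, e), ?_⟩
    rw [h, ← hn]; simp
  choose c hc using rep
  let f : (Fin 4 → Fin 2) → ZMod 2 × (Fin (Units.rank K) → ZMod 2) := fun s =>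
    (((c (∏ i, u i ^ (s i : ℕ))).1 : ZMod 2), fun j => ((c (∏ i, u i ^ (s i : ℕ))).2 j : ZMod 2))
  obtain ⟨s, t, hst, hf⟩ := Fintype.exists_ne_map_eq_of_card_lt f (by simp [hr, ZMod.card])
  refine ⟨s, t, hst, ?_⟩
  have e1 := congrArg Prod.fst hf
  have e2 := congrArg Prod.snd hf
  simp only [f] at e1 e2
  rw [ZMod.intCast_eq_intCast_iff] at e1
  have ev : ∀ a b : ℤ, a ≡ b [ZMOD (2 : ℕ)] → ∃ k, a + b = k + k := by
    intro a b h
    obtain ⟨k, hk⟩ := h.dvd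
    exact ⟨a + k, by push_cast at hk; omega⟩
  obtain ⟨k0, hk0⟩ := ev _ _ e1
  have : ∀ j, ∃ k, (c (∏ i, u i ^ (s i : ℕ))).2 j + (c (∏ i, u i ^ (t i : ℕ))).2 j = k + k := by
    intro j
    have := congrFun e2 j
    rw [ZMod.intCast_eq_intCast_iff] at this
    exact ev _ _ this
  choose k hk using this
  refine ⟨(τ : (𝓞 K)ˣ) ^ k0 * ∏ i, Units.fundSystem K i ^ k i, ?_⟩
  rw [hc (∏ i, u i ^ (s i : ℕ)), hc (∏ i, u i ^ (t i : ℕ)), mul_mul_mul_comm, ← zpow_add, hk0,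
    ← Finset.prod_mul_distrib, sq, mul_mul_mul_comm, ← zpow_add, ← Finset.prod_mul_distrib]
  congr 1
  refine Finset.prod_congr rfl fun j _ => ?_
  rw [← zpow_add, ← zpow_add, hk j]

lemma IsRt.rank (hp : IsRt p) (hK : Module.finrank ℚ K = 4) : Units.rank K = 2 := by
  have := hp.nrComplex hK
  rw [Units.rank, InfinitePlace.card_eq_nrRealPlaces_add_nrComplexPlaces, this.1, this.2]

/-- The unit `ε₁ = 1 + π`. -/
def IsRt.e1 (hp : IsRt p) : (𝓞 K)ˣ where
  val := 1 + hp.int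
  inv := hp.int ^ 3 + 11 * hp.int ^ 2 + 7 * hp.int + 3
  val_inv := by linear_combination hp.int_eq
  inv_val := by linear_combination hp.int_eq

/-- The unit `ε₂ = 1 + π - π²`. -/
def IsRt.e2 (hp : IsRt p) : (𝓞 K)ˣ where
  val := 1 + hp.int - hp.int ^ 2
  inv := -177 - 603 * hp.int - 626 * hp.int ^ 2 - 55 * hp.int ^ 3
  val_inv := by linear_combination (55 * hp.int - 89) * hp.int_eq
  inv_val := by linear_combination (55 * hp.int - 89) * hp.int_eq

lemma IsRt.e1_coe (hp : IsRt p) : ((hp.e1 : 𝓞 K) : K) = 1 + p := by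
  simp [IsRt.e1, IsRt.int_coe]

lemma IsRt.e2_coe (hp : IsRt p) : ((hp.e2 : 𝓞 K) : K) = 1 + p - p ^ 2 := by
  simp [IsRt.e2, IsRt.int_coe]

variable {v : K → ℝ}

namespace AV

/-- If some `e c²` is at distance `v(π)^k` from `1` with `k < 7` odd, then no `e y²` is within `v(π)^7` of
`1`: otherwise `y / c` would contradict `sq_ne`. -/
lemma far (hv : AV v) (hp : IsRt p) (hK : Module.finrank ℚ K = 4) {e c : K} {k : ℕ} (hk : k < 7)
    (hodd : k % 2 = 1) (hc : v (e * c ^ 2 - 1) = v p ^ k) (y : K) :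
    ¬ v (e * y ^ 2 - 1) ≤ v p ^ 7 := by
  intro h
  have p0 := hv.p_pos hp
  have p1 := hv.p_lt hp
  have h1 : v p ^ 7 < 1 := pow_lt_one₀ p0.le p1 (by norm_num)
  have hey : v (e * y ^ 2) = 1 := by
    rw [show e * y ^ 2 = 1 + (e * y ^ 2 - 1) by ring, hv.add_eq (by rw [hv.one]; linarith), hv.one]
  have hne : e * y ^ 2 ≠ 0 := by
    intro h0; rw [h0, hv.zero'] at hey; norm_num at hey
  have hy : y ≠ 0 := by rintro rfl; simp at hne
  have he : e ≠ 0 := by rintro rfl; simp at hne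
  have e1 : (c / y) ^ 2 - 1 = ((e * c ^ 2 - 1) + (-(e * y ^ 2 - 1))) / (e * y ^ 2) := by
    field_simp; ring
  have hlt : v p ^ 7 < v p ^ k := pow_lt_pow_right_of_lt_one₀ p0 p1 hk
  have e2 : v ((c / y) ^ 2 - 1) = v p ^ k := by
    rw [e1, hv.div, hey, div_one, hv.add_eq (x := e * c ^ 2 - 1), hc]
    rw [hv.neg, hc]; linarith
  exact hv.sq_ne hp hK _ _ (by omega) hodd e2

lemma odd (hv : AV v) (n : ℤ) : v ((2 * n + 1 : ℤ) : K) = 1 := by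
  have e : ((2 * n + 1 : ℤ) : K) = 1 + ((2 * n : ℤ) : K) := by push_cast; ring
  rw [e, hv.add_eq, hv.one]
  have := hv.even n
  rw [hv.one]; linarith

/-- No nontrivial product of `-1`, `ε₁`, `ε₂` becomes congruent to `1` modulo `π⁷` after multiplication by
a square; in particular these units are independent modulo squares. -/
lemma far_units (hv : AV v) (hp : IsRt p) (hK : Module.finrank ℚ K = 4) (a b c : Fin 2) (y : K)
    (hne : ¬ (a = 0 ∧ b = 0 ∧ c = 0)) :
    ¬ v ((-1) ^ (a : ℕ) * (1 + p) ^ (b : ℕ) * (1 + p - p ^ 2) ^ (c : ℕ) * y ^ 2 - 1) ≤ v p ^ 7 := by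
  have p0 := hv.p_pos hp
  have p1 := hv.p_lt hp
  have h4 := hv.p4 hp
  have h2 := hv.two
  have pp2 : v p ^ 2 < v p := by nlinarith
  have pp3 : v p ^ 3 < v p ^ 2 := by nlinarith [pow_pos p0 2]
  have pp4 : v p ^ 4 < v p ^ 3 := by nlinarith [pow_pos p0 3]
  have e := hp.eq
  fin_cases a <;> fin_cases b <;> fin_cases c <;> simp only [Fin.zero_eta, Fin.mk_one, Fin.isValue, Fin.val_zero, Fin.val_one, pow_zero, pow_one, one_mul, mul_one]
  · simp at hne
  · refine hv.far hp hK (c := 1) (k := 1) (by norm_num) rfl ?_ y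
    rw [show (1 + p - p ^ 2) * 1 ^ 2 - 1 = p + (-p ^ 2) by ring, hv.add_eq, pow_one]
    rw [hv.neg, hv.pow]; exact pp2
  · refine hv.far hp hK (c := 1) (k := 1) (by norm_num) rfl ?_ y
    rw [show (1 + p) * 1 ^ 2 - 1 = p by ring, pow_one]
  · refine hv.far hp hK (c := 1) (k := 3) (by norm_num) rfl ?_ y
    rw [show (1 + p) * (1 + p - p ^ 2) * 1 ^ 2 - 1 = -p ^ 3 + 2 * p by ring, hv.add_eq, hv.neg, hv.pow]
    rw [hv.neg, hv.pow, hv.mul, hv.two]; nlinarith [pow_pos p0 3]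
  · refine hv.far hp hK (c := 1 + p ^ 2) (k := 5) (by norm_num) rfl ?_ y
    rw [show -1 * (1 + p ^ 2) ^ 2 - 1 = 2 * (p * (5 + p * (8 + 6 * p))) by linear_combination -e,
      hv.mul, hv.mul, h2, ← h4, hv.add_eq]
    · have := hv.odd 2; norm_num at this; rw [this]; ring
    · have := hv.odd 2; norm_num at this; rw [this]
      have h8 := hv.int 8
      have h6 := hv.int 6
      push_cast at h8 h6
      have : v (8 + 6 * p) ≤ 1 := by
        refine hv.add_le h8 ?_
        rw [hv.mul]; nlinarith
      rw [hv.mul]; nlinarith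
  · refine hv.far hp hK (c := 1) (k := 1) (by norm_num) rfl ?_ y
    rw [show -1 * (1 + p - p ^ 2) * 1 ^ 2 - 1 = -p + (p ^ 2 - 2) by ring, hv.add_eq (x := -p), hv.neg, pow_one]
    rw [hv.neg]
    refine (hv.sub _ _).trans_lt (max_lt ?_ ?_)
    · rwa [hv.pow]
    · rw [h2]; linarith
  · refine hv.far hp hK (c := 1) (k := 1) (by norm_num) rfl ?_ y
    rw [show -1 * (1 + p) * 1 ^ 2 - 1 = -p + (- 2) by ring, hv.add_eq (x := -p), hv.neg, pow_one]
    rw [hv.neg, hv.neg, h2]; linarith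
  · refine hv.far hp hK (c := 1) (k := 3) (by norm_num) rfl ?_ y
    rw [show -1 * (1 + p) * (1 + p - p ^ 2) * 1 ^ 2 - 1 = p ^ 3 + (-(2 * p) - 2) by ring, hv.add_eq (x := p ^ 3), hv.pow]
    rw [hv.pow]
    refine (hv.sub _ _).trans_lt (max_lt ?_ ?_)
    · rw [hv.neg, hv.mul, hv.two]; nlinarith [pow_pos p0 3]
    · rw [h2]; linarith

/-- A unit which is `1` modulo `π⁷` up to squares is a square in `K`: by Dirichlet it is a product of `-1`,
`ε₁`, `ε₂` times a square, and `far_units` forces the product to be trivial. -/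
lemma unit_square (hv : AV v) (hp : IsRt p) (hK : Module.finrank ℚ K = 4) (u : (𝓞 K)ˣ) (y : K)
    (h : v (((u : 𝓞 K) : K) * y ^ 2 - 1) ≤ v p ^ 7) : ∃ z : K, ((u : 𝓞 K) : K) = z ^ 2 := by
  obtain ⟨s, t, hst, z, hz⟩ := units_dep (hp.rank hK) ![u, -1, hp.e1, hp.e2]
  have hz' := congrArg (fun x : (𝓞 K)ˣ => ((x : 𝓞 K) : K)) hz
  simp only [Fin.prod_univ_four] at hz'
  simp only [Matrix.cons_val_zero, Matrix.cons_val_one, Matrix.cons_val, Units.val_mul,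
    Units.val_pow_eq_pow_val, Units.val_neg, Units.val_one, map_mul, map_pow, map_neg, map_one,
    hp.e1_coe, hp.e2_coe] at hz'
  set U : K := ((u : 𝓞 K) : K) with hU
  set Z : K := ((z : 𝓞 K) : K) with hZ
  have U0 : U ≠ 0 := Units.coe_ne_zero u
  have Z0 : Z ≠ 0 := Units.coe_ne_zero z
  have E1 : 1 + p ≠ 0 := by rw [← hp.e1_coe]; exact Units.coe_ne_zero _
  have E2 : 1 + p - p ^ 2 ≠ 0 := by rw [← hp.e2_coe]; exact Units.coe_ne_zero _
  -- exponents modulo 2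
  have par : ∀ a b : Fin 2, ∃ (c : Fin 2) (d : ℕ), (a : ℕ) + b = c + 2 * d ∧ (c = 0 → a = b) := by
    intro a b
    fin_cases a <;> fin_cases b
    exacts [⟨0, 0, by decide⟩, ⟨1, 0, by decide⟩, ⟨1, 0, by decide⟩, ⟨0, 1, by decide⟩]
  obtain ⟨c0, d0, h0, g0⟩ := par (s 0) (t 0)
  obtain ⟨c1, d1, h1, g1⟩ := par (s 1) (t 1)
  obtain ⟨c2, d2, h2, g2⟩ := par (s 2) (t 2)
  obtain ⟨c3, d3, h3, g3⟩ := par (s 3) (t 3)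
  set M : K := U ^ d0 * (-1) ^ d1 * (1 + p) ^ d2 * (1 + p - p ^ 2) ^ d3 with hM
  set e : K := (-1) ^ (c1 : ℕ) * (1 + p) ^ (c2 : ℕ) * (1 + p - p ^ 2) ^ (c3 : ℕ) with he
  have M0 : M ≠ 0 := by
    have : (-1 : K) ≠ 0 := by norm_num
    simp only [hM]; positivity
  have e0 : e ≠ 0 := by
    have : (-1 : K) ≠ 0 := by norm_num
    simp only [he]; positivity
  have key : U ^ (c0 : ℕ) * e * M ^ 2 = Z ^ 2 := by
    have r0 : U ^ (s 0 : ℕ) * U ^ (t 0 : ℕ) = U ^ (c0 : ℕ) * (U ^ d0) ^ 2 := by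
      rw [← pow_add, h0, pow_add, pow_mul']
    have r1 : (-1 : K) ^ (s 1 : ℕ) * (-1) ^ (t 1 : ℕ) = (-1) ^ (c1 : ℕ) * ((-1) ^ d1) ^ 2 := by
      rw [← pow_add, h1, pow_add, pow_mul']
    have r2 : (1 + p) ^ (s 2 : ℕ) * (1 + p) ^ (t 2 : ℕ) = (1 + p) ^ (c2 : ℕ) * ((1 + p) ^ d2) ^ 2 := by
      rw [← pow_add, h2, pow_add, pow_mul']
    have r3 : (1 + p - p ^ 2) ^ (s 3 : ℕ) * (1 + p - p ^ 2) ^ (t 3 : ℕ) =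
        (1 + p - p ^ 2) ^ (c3 : ℕ) * ((1 + p - p ^ 2) ^ d3) ^ 2 := by
      rw [← pow_add, h3, pow_add, pow_mul']
    rw [← hz', hM, he]
    calc _ = (U ^ (c0 : ℕ) * (U ^ d0) ^ 2) * ((-1) ^ (c1 : ℕ) * ((-1) ^ d1) ^ 2) *
          ((1 + p) ^ (c2 : ℕ) * ((1 + p) ^ d2) ^ 2) *
          ((1 + p - p ^ 2) ^ (c3 : ℕ) * ((1 + p - p ^ 2) ^ d3) ^ 2) := by ring
      _ = _ := by rw [← r0, ← r1, ← r2, ← r3]; ring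
  have hc0 : c0 = 0 ∨ c0 = 1 := by fin_cases c0 <;> simp
  by_cases hc : c1 = 0 ∧ c2 = 0 ∧ c3 = 0
  · obtain ⟨k1, k2, k3⟩ := hc
    rcases hc0 with k0 | k0
    · exfalso
      apply hst
      ext i
      fin_cases i
      exacts [congrArg _ (g0 k0), congrArg _ (g1 k1), congrArg _ (g2 k2), congrArg _ (g3 k3)]
    · refine ⟨Z / M, ?_⟩
      have : e = 1 := by rw [he, k1, k2, k3]; simp
      rw [this, k0] at key
      field_simp
      rw [← key]; simp
  · exfalso
    rcases hc0 with k0 | k0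
    · apply hv.far_units hp hK c1 c2 c3 (M / Z) hc
      rw [← he]
      have : e * (M / Z) ^ 2 - 1 = 0 := by
        rw [k0] at key; field_simp; rw [← key]; simp
      rw [this, hv.zero']
      exact pow_nonneg (hv.nonneg p) 7
    · apply hv.far_units hp hK c1 c2 c3 (y * Z / (e * M)) hc
      rw [← he]
      have : e * (y * Z / (e * M)) ^ 2 = U * y ^ 2 := by
        rw [k0] at key; field_simp; rw [← key]; simp; ring
      rw [this]; exact h

end AV
end units

/-! ### Parity of valuations of a divisor at the roots of F -/

section parity
variable {O K : Type*} [CommRing O] [IsDomain O] [UniqueFactorizationMonoid O] [Field K] [Algebra O K]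
  [IsFractionRing O K]

omit [UniqueFactorizationMonoid O] in
lemma odd_even_val {p : O} (hp : Prime p) {i j : ℕ} {x y : O} (h : p ^ (2 * j) * x = p ^ (2 * i + 1) * y)
    (hx : ¬ p ∣ x) (hy : ¬ p ∣ y) : False := by
  rcases Nat.lt_or_ge (2 * j) (2 * i + 1) with hlt | hge
  · obtain ⟨k, hk⟩ := Nat.exists_eq_add_of_lt hlt
    rw [hk, show 2 * j + k + 1 = 2 * j + (k + 1) by ring, pow_add, mul_assoc] at h
    have := mul_left_cancel₀ (pow_ne_zero _ hp.ne_zero) h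
    exact hx ⟨p ^ k * y, by rw [this]; ring⟩
  · obtain ⟨k, hk⟩ := Nat.exists_eq_add_of_lt (show 2 * i + 1 < 2 * j by omega)
    rw [hk, show 2 * i + 1 + k + 1 = 2 * i + 1 + (k + 1) by ring, pow_add, mul_assoc] at h
    have := mul_left_cancel₀ (pow_ne_zero _ hp.ne_zero) h
    exact hy ⟨p ^ k * x, by rw [← this]; ring⟩

lemma exists_val {p : O} (hp : Prime p) {x : O} (hx : x ≠ 0) : ∃ (n : ℕ) (y : O), ¬ p ∣ y ∧ x = p ^ n * y := by
  obtain ⟨n, y, h1, h2⟩ := WfDvdMonoid.max_power_factor hx hp.irreducible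
  exact ⟨n, y, h1, h2⟩

/-- The lemma of Gauss localised at a prime `p`: if `A` is not divisible by `p` and divides `N` over the
fraction field, then it divides a multiple of `N` by a constant prime to `p`. -/
lemma gauss {p : O} (hp : Prime p) {A N : O[X]} (hA : ¬ C p ∣ A)
    (hd : A.map (algebraMap O K) ∣ N.map (algebraMap O K)) :
    ∃ (r : O) (c : O[X]), ¬ p ∣ r ∧ C r * N = A * c := by
  obtain ⟨c, hc⟩ := hd
  obtain ⟨⟨b, hb⟩, hb2⟩ := IsLocalization.integerNormalization_map_to_map (nonZeroDivisors O) c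
  have hb0 : b ≠ 0 := nonZeroDivisors.ne_zero hb
  set c' := IsLocalization.integerNormalization (nonZeroDivisors O) c
  have h1 : C b * N = A * c' := by
    apply Polynomial.map_injective (algebraMap O K) (IsFractionRing.injective O K)
    rw [Polynomial.map_mul, Polynomial.map_mul, hb2, hc, map_C]
    simp only [Submonoid.smul_def, Algebra.smul_def]
    rw [IsScalarTower.algebraMap_apply O K K[X], Polynomial.algebraMap_eq]; ring
  obtain ⟨n, r, hr, hbr⟩ := exists_val hp hb0
  have hCp : Prime (C p : O[X]) := prime_C_iff.mpr hp
  clear hb2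
  generalize c' = c1 at h1
  clear hb hb0
  induction n generalizing b c1 with
  | zero => exact ⟨r, c1, hr, by rw [← h1, hbr]; simp⟩
  | succ n ih =>
    have : C p ∣ A * c1 := ⟨C (p ^ n * r) * N, by rw [← h1, hbr, pow_succ]; simp only [C_mul, C_pow]; ring⟩
    obtain ⟨c2, rfl⟩ := (hCp.dvd_or_dvd this).resolve_left hA
    refine ih (p ^ n * r) rfl c2 ?_
    apply mul_left_cancel₀ hCp.ne_zero
    have e : C p * (A * c2) = A * (C p * c2) := by ring
    rw [e, ← h1, hbr, pow_succ]; simp only [C_mul, C_pow]; ring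

/-- A nonzero vector over the fraction field can be scaled to an integral vector that is primitive
at `p`. -/
lemma prim_scale {p : O} (hp : Prime p) (x y z : K) (h : ¬ (x = 0 ∧ y = 0 ∧ z = 0)) :
    ∃ (l : K) (a b c : O), ¬ (p ∣ a ∧ p ∣ b ∧ p ∣ c) ∧ algebraMap O K a = l * x ∧
      algebraMap O K b = l * y ∧ algebraMap O K c = l * z := by
  classical
  obtain ⟨⟨d, hd⟩, hd2⟩ := IsLocalization.exist_integer_multiples_of_finset (nonZeroDivisors O) ({x, y, z} : Finset K)
  obtain ⟨a, ha⟩ := hd2 x (by simp)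
  obtain ⟨b, hb⟩ := hd2 y (by simp)
  obtain ⟨c, hc⟩ := hd2 z (by simp)
  simp only [Algebra.smul_def] at ha hb hc
  have hd0 : algebraMap O K d ≠ 0 := by
    have := IsLocalization.to_map_ne_zero_of_mem_nonZeroDivisors K (le_refl _) hd
    exact this
  -- remove the common power of p
  have main : ∀ n : ℕ, ∀ (l : K) (a b c : O), l ≠ 0 → (∃ t ∈ ({a, b, c} : Finset O), ¬ p ^ n ∣ t) →
     algebraMap O K a = l * x → algebraMap O K b = l * y → algebraMap O K c = l * z →
     ∃ (l : K) (a b c : O), ¬ (p ∣ a ∧ p ∣ b ∧ p ∣ c) ∧ algebraMap O K a = l * x ∧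
      algebraMap O K b = l * y ∧ algebraMap O K c = l * z := by
    intro n
    induction n with
    | zero => rintro l a b c _ ⟨t, _, h⟩; simp at h
    | succ n ih =>
      rintro l a b c hl ⟨t, ht, hnt⟩ h1 h2 h3
      by_cases hall : p ∣ a ∧ p ∣ b ∧ p ∣ c
      · obtain ⟨⟨a, rfl⟩, ⟨b, rfl⟩, ⟨c, rfl⟩⟩ := hall
        have hpK : algebraMap O K p ≠ 0 := by
          simpa using hp.ne_zero
        refine ih (l / algebraMap O K p) a b c (div_ne_zero hl hpK) ?_ ?_ ?_ ?_
        · simp only [Finset.mem_insert, Finset.mem_singleton] at ht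
          rcases ht with rfl | rfl | rfl
          · exact ⟨a, by simp, fun h => hnt (by rw [pow_succ']; exact mul_dvd_mul_left p h)⟩
          · exact ⟨b, by simp, fun h => hnt (by rw [pow_succ']; exact mul_dvd_mul_left p h)⟩
          · exact ⟨c, by simp, fun h => hnt (by rw [pow_succ']; exact mul_dvd_mul_left p h)⟩
        · rw [map_mul] at h1; field_simp; linear_combination h1
        · rw [map_mul] at h2; field_simp; linear_combination h2
        · rw [map_mul] at h3; field_simp; linear_combination h3
      · exact ⟨l, a, b, c, hall, h1, h2, h3⟩
  have hne : ∃ t ∈ ({a, b, c} : Finset O), t ≠ 0 := by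
    by_contra hcon
    push Not at hcon
    apply h
    have ha0 := hcon a (by simp)
    have hb0 := hcon b (by simp)
    have hc0 := hcon c (by simp)
    rw [ha0, map_zero] at ha
    rw [hb0, map_zero] at hb
    rw [hc0, map_zero] at hc
    exact ⟨(mul_eq_zero.mp ha.symm).resolve_left hd0, (mul_eq_zero.mp hb.symm).resolve_left hd0,
      (mul_eq_zero.mp hc.symm).resolve_left hd0⟩
  obtain ⟨t, ht, ht0⟩ := hne
  obtain ⟨n, y', hy', hty⟩ := exists_val hp ht0
  refine main (n + 1) (algebraMap O K d) a b c hd0 ⟨t, ht, ?_⟩ ha hb hc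
  rw [hty, pow_succ]
  intro hdvd
  exact hy' ((mul_dvd_mul_iff_left (pow_ne_zero _ hp.ne_zero)).mp hdvd)

/-- The polynomial of degree at most `7` with the given coefficients. -/
noncomputable def oct {R : Type*} [CommRing R] (a0 a1 a2 a3 a4 a5 a6 a7 : R) : R[X] :=
  C a0 + C a1 * X + C a2 * X ^ 2 + C a3 * X ^ 3 + C a4 * X ^ 4 + C a5 * X ^ 5 + C a6 * X ^ 6 + C a7 * X ^ 7

lemma oct_coeff {R : Type*} [CommRing R] (a0 a1 a2 a3 a4 a5 a6 a7 : R) :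
   (oct a0 a1 a2 a3 a4 a5 a6 a7).coeff 0 = a0 ∧ (oct a0 a1 a2 a3 a4 a5 a6 a7).coeff 1 = a1 ∧
   (oct a0 a1 a2 a3 a4 a5 a6 a7).coeff 2 = a2 ∧ (oct a0 a1 a2 a3 a4 a5 a6 a7).coeff 3 = a3 ∧
   (oct a0 a1 a2 a3 a4 a5 a6 a7).coeff 4 = a4 ∧ (oct a0 a1 a2 a3 a4 a5 a6 a7).coeff 5 = a5 ∧
   (oct a0 a1 a2 a3 a4 a5 a6 a7).coeff 6 = a6 ∧ (oct a0 a1 a2 a3 a4 a5 a6 a7).coeff 7 = a7 := by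
  refine ⟨?_, ?_, ?_, ?_, ?_, ?_, ?_, ?_⟩ <;>
    simp [oct, coeff_X, coeff_C, coeff_X_pow]

lemma quad_mul_coeff {R : Type*} [CommRing R] (A0 A1 A2 : R) (c : R[X]) :
   ((C A0 + C A1 * X + C A2 * X ^ 2) * c).coeff 0 = A0 * c.coeff 0 ∧
   ((C A0 + C A1 * X + C A2 * X ^ 2) * c).coeff 1 = A0 * c.coeff 1 + A1 * c.coeff 0 ∧
   ∀ n, ((C A0 + C A1 * X + C A2 * X ^ 2) * c).coeff (n + 2) = A0 * c.coeff (n + 2) + A1 * c.coeff (n + 1) + A2 * c.coeff n := by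
  have e : (C A0 + C A1 * X + C A2 * X ^ 2) * c = C A0 * c + C A1 * (X * c) + C A2 * (X ^ 2 * c) := by ring
  rw [e]
  refine ⟨?_, ?_, ?_⟩
  · simp
  · simp [coeff_X_mul, coeff_X_pow_mul']
  · intro n
    simp only [coeff_add, coeff_C_mul, coeff_X_pow_mul]
    rw [show n + 2 = (n + 1) + 1 from rfl, coeff_X_mul]

/-- Let `f = f₁ X + … + f₅ X⁵` with `p ∤ f₁, f₅` and let `A = A₀ + A₁ X + A₂ X²` be primitive at `p`. If `A`
divides `f - b²` over the fraction field, then the valuation of `A(0)` at `p` is not odd. This is the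
statement that `x - T` is unramified at `p` at a simple root of `f`. -/
lemma parity {f1 f2 f3 f4 f5 A0 A1 A2 p m : O} {i : ℕ} {b0 b1 : K} {cc : K[X]} (hp : Prime p)
    (h1 : ¬ p ∣ f1) (h5 : ¬ p ∣ f5) (hA2 : A2 ≠ 0)
    (hprim : ¬ (p ∣ A0 ∧ p ∣ A1 ∧ p ∣ A2)) (hA0 : A0 = p ^ (2 * i + 1) * m) (hm : ¬ p ∣ m)
    (hid : C (algebraMap O K f1) * X + C (algebraMap O K f2) * X ^ 2 + C (algebraMap O K f3) * X ^ 3 +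
      C (algebraMap O K f4) * X ^ 4 + C (algebraMap O K f5) * X ^ 5 - (C b0 + C b1 * X) ^ 2 =
      (C (algebraMap O K A0) + C (algebraMap O K A1) * X + C (algebraMap O K A2) * X ^ 2) *
        cc) : False := by
  have hpA0 : p ∣ A0 := ⟨p ^ (2 * i) * m, by rw [hA0]; ring⟩
  set A : O[X] := C A0 + C A1 * X + C A2 * X ^ 2 with hA
  have hAp : ¬ C p ∣ A := by
    rw [C_dvd_iff_dvd_coeff]
    intro h
    apply hprim
    have h0 := h 0; have h1 := h 1; have h2 := h 2
    simp [hA, coeff_X, coeff_C] at h0 h1 h2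
    exact ⟨h0, h1, h2⟩
  have hAmap : A.map (algebraMap O K) = C (algebraMap O K A0) + C (algebraMap O K A1) * X + C (algebraMap O K A2) * X ^ 2 := by
    simp [hA]
  have hAdeg : A.natDegree = 2 := by
    rw [hA]; compute_degree!
  have hA00 : A ≠ 0 := by
    intro h; rw [h] at hAdeg; simp at hAdeg
  have cond0 : ∀ {r q C0 : O}, ¬ p ∣ r → r * q ^ 2 = A0 * C0 → p ∣ q ∧ p ∣ C0 := by
    intro r q C0 hr h
    have hq : p ∣ q := by
      have : p ∣ r * q ^ 2 := h ▸ hpA0.mul_right C0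
      exact hp.dvd_of_dvd_pow ((hp.dvd_or_dvd this).resolve_left hr)
    refine ⟨hq, ?_⟩
    by_contra hC0
    by_cases hq0 : q = 0
    · rw [hq0] at h
      have : A0 * C0 = 0 := by rw [← h]; ring
      rcases mul_eq_zero.mp this with h | h
      · rw [hA0] at h
        rcases mul_eq_zero.mp h with h | h
        · exact pow_ne_zero _ hp.ne_zero h
        · exact hm (h ▸ dvd_zero p)
      · exact hC0 (h ▸ dvd_zero p)
    · obtain ⟨j, y, hy, hqy⟩ := exists_val hp hq0
      refine odd_even_val hp (j := j) (x := r * y ^ 2) (i := i) (y := m * C0) ?_ ?_ ?_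
      · rw [hqy, hA0] at h; rw [pow_mul']; linear_combination h
      · intro hd
        rcases hp.dvd_or_dvd hd with h | h
        · exact hr h
        · exact hy (hp.dvd_of_dvd_pow h)
      · intro hd
        rcases hp.dvd_or_dvd hd with h | h
        · exact hm h
        · exact hC0 h
  -- Clearing denominators in `(b, 1)` produces `p0 + p1 X` and `v0`, primitive at `p`, with
  -- `A ∣ (p0 + p1 X)² - v0² f`; if `p ∤ A2` the coefficients contradict the parity.
  have hpA2 : p ∣ A2 := by
    obtain ⟨l, p0, p1, v0, hnd, e0, e1, e2⟩ := prim_scale (O := O) hp b0 b1 (1 : K) (by simp)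
    rw [mul_one] at e2
    have hN := gauss (K := K) hp (A := A) (N := oct (p0 ^ 2) (2 * p0 * p1 - v0 ^ 2 * f1) (p1 ^ 2 - v0 ^ 2 * f2)
      (- v0 ^ 2 * f3) (- v0 ^ 2 * f4) (- v0 ^ 2 * f5) 0 0) hAp ⟨-C (l ^ 2) * cc, by
        rw [hAmap]
        simp only [oct, Polynomial.map_sub, Polynomial.map_neg, Polynomial.map_zero, Polynomial.map_ofNat, Polynomial.map_add, Polynomial.map_mul, map_C, Polynomial.map_pow, map_X, map_mul, map_sub, map_pow, map_neg, e0, e1, e2, map_zero, map_ofNat]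
        linear_combination (-C l ^ 2) * hid⟩
    obtain ⟨r, c, hr, hrc⟩ := hN
    have hcdeg : c.natDegree ≤ 3 := by
      have hd : (A * c).natDegree ≤ 5 := by
        rw [← hrc]; unfold oct; simp only [map_zero, zero_mul, add_zero]; compute_degree
      by_cases hc : c = 0
      · simp [hc]
      · rw [natDegree_mul hA00 hc, hAdeg] at hd; omega
    have k4 : c.coeff 4 = 0 := coeff_eq_zero_of_natDegree_lt (by omega)
    have k5 : c.coeff 5 = 0 := coeff_eq_zero_of_natDegree_lt (by omega)
    obtain ⟨q0, q1, q2⟩ := quad_mul_coeff A0 A1 A2 c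
    obtain ⟨o0, o1, o2, o3, o4, o5, -, -⟩ := oct_coeff (p0 ^ 2) (2 * p0 * p1 - v0 ^ 2 * f1) (p1 ^ 2 - v0 ^ 2 * f2)
      (- v0 ^ 2 * f3) (- v0 ^ 2 * f4) (- v0 ^ 2 * f5) 0 0
    have t0 := congrArg (fun q => q.coeff 0) hrc
    have t1 := congrArg (fun q => q.coeff 1) hrc
    have t2 := congrArg (fun q => q.coeff 2) hrc
    have t3 := congrArg (fun q => q.coeff 3) hrc
    have t4 := congrArg (fun q => q.coeff 4) hrc
    have t5 := congrArg (fun q => q.coeff 5) hrc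
    simp only [hA] at t0 t1 t2 t3 t4 t5
    simp only [coeff_C_mul, q0, o0] at t0
    simp only [coeff_C_mul, q1, o1] at t1
    simp only [coeff_C_mul, q2 0, o2] at t2
    simp only [coeff_C_mul, q2 1, o3] at t3
    simp only [coeff_C_mul, q2 2, o4, k4] at t4
    simp only [coeff_C_mul, q2 3, o5, k4, k5] at t5
    simp only [zero_add, Nat.reduceAdd, mul_zero, add_zero] at t2 t3 t4 t5
    obtain ⟨⟨x, rfl⟩, ⟨C0, hC0⟩⟩ := cond0 hr t0
    obtain ⟨a, rfl⟩ := hpA0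
    have hv0 : p ∣ v0 := by
      have : p ∣ r * (v0 ^ 2 * f1) := ⟨2 * x * p1 * r - a * c.coeff 1 - A1 * C0, by
        rw [hC0] at t1; linear_combination - t1⟩
      rcases hp.dvd_or_dvd ((hp.dvd_or_dvd this).resolve_left hr) with h | h
      · exact hp.dvd_of_dvd_pow h
      · exact absurd h h1
    have hp1 : ¬ p ∣ p1 := fun h => hnd ⟨dvd_mul_right p x, h, hv0⟩
    obtain ⟨w, rfl⟩ := hv0
    have hAC : ¬ p ∣ A1 * c.coeff 1 := by
      rintro ⟨y, hy⟩
      have : p ∣ r * p1 ^ 2 := ⟨y + a * c.coeff 2 + A2 * C0 + r * p * w ^ 2 * f2, by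
        rw [hC0] at t2; linear_combination t2 + hy⟩
      exact hp1 (hp.dvd_of_dvd_pow ((hp.dvd_or_dvd this).resolve_left hr))
    by_contra hA2n
    have d3 : p ∣ c.coeff 3 := by
      have : p ∣ A2 * c.coeff 3 := ⟨- r * p * w ^ 2 * f5, by linear_combination - t5⟩
      exact (hp.dvd_or_dvd this).resolve_left hA2n
    obtain ⟨c3', hc3⟩ := d3
    have d2 : p ∣ c.coeff 2 := by
      have : p ∣ A2 * c.coeff 2 := ⟨- r * p * w ^ 2 * f4 - A1 * c3', by rw [hc3] at t4; linear_combination - t4⟩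
      exact (hp.dvd_or_dvd this).resolve_left hA2n
    obtain ⟨c2', hc2⟩ := d2
    have d1 : p ∣ c.coeff 1 := by
      have : p ∣ A2 * c.coeff 1 := ⟨- r * p * w ^ 2 * f3 - A1 * c2' - a * c.coeff 3, by rw [hc2] at t3; linear_combination - t3⟩
      exact (hp.dvd_or_dvd this).resolve_left hA2n
    exact hAC (d1.mul_left _)
  -- A pair `(Q0, V)` with `Q0 ≡ V b mod A`, so that `A ∣ Q0² - V² f`.
  have hA2K : algebraMap O K A2 ≠ 0 := by simpa using hA2
  obtain ⟨V0, V1, Q0, hV, hVb⟩ : ∃ V0 V1 Q0 : K, ¬ (Q0 = 0 ∧ V0 = 0 ∧ V1 = 0) ∧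
      C (algebraMap O K A2) * (C Q0 - (C V0 + C V1 * X) * (C b0 + C b1 * X)) =
       -C (b1 * V1) * A.map (algebraMap O K) := by
    by_cases hb1 : b1 = 0
    · refine ⟨1, 0, b0, by simp, ?_⟩
      simp [hb1]
    · set a1 := algebraMap O K A1 / algebraMap O K A2 with ha1
      set a0 := algebraMap O K A0 / algebraMap O K A2 with ha0
      have r1 : algebraMap O K A1 = algebraMap O K A2 * a1 := by rw [ha1]; field_simp
      have r0 : algebraMap O K A0 = algebraMap O K A2 * a0 := by rw [ha0]; field_simp
      refine ⟨a1 * b1 - b0, b1, b0 * (a1 * b1 - b0) - a0 * b1 ^ 2, fun h => hb1 h.2.2, ?_⟩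
      rw [hAmap, r1, r0]
      simp only [map_sub, map_mul, map_pow]
      ring
  obtain ⟨l, q0, v0, v1, hnd, e0, e1, e2⟩ := prim_scale (O := O) hp Q0 V0 V1 hV
  have hN := gauss (K := K) hp (A := A) (N := oct (q0 ^ 2) (- v0 ^ 2 * f1) (- v0 ^ 2 * f2 - 2 * v0 * v1 * f1)
      (- v0 ^ 2 * f3 - 2 * v0 * v1 * f2 - v1 ^ 2 * f1) (- v0 ^ 2 * f4 - 2 * v0 * v1 * f3 - v1 ^ 2 * f2)
      (- v0 ^ 2 * f5 - 2 * v0 * v1 * f4 - v1 ^ 2 * f3) (- 2 * v0 * v1 * f5 - v1 ^ 2 * f4) (-v1 ^ 2 * f5)) hAp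
      ⟨-C (l ^ 2) * ((C V0 + C V1 * X) ^ 2 * cc
        + C (b1 * V1 / algebraMap O K A2) * (C Q0 + (C V0 + C V1 * X) * (C b0 + C b1 * X))), by
        have hVb' : C Q0 - (C V0 + C V1 * X) * (C b0 + C b1 * X) =
            -C (b1 * V1 / algebraMap O K A2) * A.map (algebraMap O K) := by
          have e : (C (b1 * V1) : K[X]) = C (algebraMap O K A2) * C (b1 * V1 / algebraMap O K A2) := by
            rw [← C_mul]; congr 1; field_simp
          rw [e] at hVb
          apply mul_left_cancel₀ (C_ne_zero.mpr hA2K)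
          rw [hVb]; ring
        rw [← hAmap] at hid
        generalize b1 * V1 / algebraMap O K A2 = W at *
        generalize A.map (algebraMap O K) = A' at *
        simp only [oct, Polynomial.map_sub, Polynomial.map_neg, Polynomial.map_zero, Polynomial.map_ofNat, Polynomial.map_add, Polynomial.map_mul, map_C, Polynomial.map_pow, map_X, map_mul, map_sub, map_pow, map_neg, e0, e1, e2, map_ofNat]
        linear_combination (-C l ^ 2 * (C V0 + C V1 * X) ^ 2) * hid + C l ^ 2 * (C Q0 + (C V0 + C V1 * X) * (C b0 + C b1 * X)) * hVb'⟩
  obtain ⟨r, c, hr, hrc⟩ := hN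
  have hcdeg : c.natDegree ≤ 5 := by
    have hd : (A * c).natDegree ≤ 7 := by
      rw [← hrc]; unfold oct; compute_degree
    by_cases hc : c = 0
    · simp [hc]
    · rw [natDegree_mul hA00 hc, hAdeg] at hd; omega
  have k6 : c.coeff 6 = 0 := coeff_eq_zero_of_natDegree_lt (by omega)
  have k7 : c.coeff 7 = 0 := coeff_eq_zero_of_natDegree_lt (by omega)
  obtain ⟨u0, u1, u2⟩ := quad_mul_coeff A0 A1 A2 c
  have oc := oct_coeff (q0 ^ 2) (- v0 ^ 2 * f1) (- v0 ^ 2 * f2 - 2 * v0 * v1 * f1)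
      (- v0 ^ 2 * f3 - 2 * v0 * v1 * f2 - v1 ^ 2 * f1) (- v0 ^ 2 * f4 - 2 * v0 * v1 * f3 - v1 ^ 2 * f2)
      (- v0 ^ 2 * f5 - 2 * v0 * v1 * f4 - v1 ^ 2 * f3) (- 2 * v0 * v1 * f5 - v1 ^ 2 * f4) (-v1 ^ 2 * f5)
  obtain ⟨o0, o1, -, -, -, -, -, o7⟩ := oc
  have t0 := congrArg (fun q => q.coeff 0) hrc
  have t1 := congrArg (fun q => q.coeff 1) hrc
  have t7 := congrArg (fun q => q.coeff 7) hrc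
  simp only [hA] at t0 t1 t7
  simp only [coeff_C_mul, u0, o0] at t0
  simp only [coeff_C_mul, u1, o1] at t1
  simp only [coeff_C_mul, u2 5, o7, k6, k7] at t7
  simp only [Nat.reduceAdd, k6, k7, mul_zero, zero_add] at t7
  obtain ⟨⟨x, rfl⟩, ⟨C0, hC0⟩⟩ := cond0 hr t0
  obtain ⟨a, rfl⟩ := hpA0
  have hv0 : p ∣ v0 := by
    have : p ∣ r * (v0 ^ 2 * f1) := ⟨- a * c.coeff 1 - A1 * C0, by
      rw [hC0] at t1; linear_combination - t1⟩
    rcases hp.dvd_or_dvd ((hp.dvd_or_dvd this).resolve_left hr) with h | h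
    · exact hp.dvd_of_dvd_pow h
    · exact absurd h h1
  have hv1 : ¬ p ∣ v1 := fun h => hnd ⟨dvd_mul_right p x, hv0, h⟩
  obtain ⟨a2, rfl⟩ := hpA2
  have : p ∣ r * (v1 ^ 2 * f5) := ⟨- a2 * c.coeff 5, by linear_combination - t7⟩
  rcases hp.dvd_or_dvd ((hp.dvd_or_dvd this).resolve_left hr) with h | h
  · exact hv1 (hp.dvd_of_dvd_pow h)
  · exact h5 h

end parity

/-! ### Divisors in Mumford form and squarefree parts -/

/-- The coefficients of `F - (b₀ + b₁ Y)² = (Y² + d₁ Y + d₀) (2 Y³ + c₂ Y² + c₁ Y + c₀)`. -/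
structure OnJc {R : Type*} [CommRing R] (d0 d1 b0 b1 c0 c1 c2 : R) : Prop where
  e0 : 4 - b0 ^ 2 = d0 * c0
  e1 : 24 - 2 * b0 * b1 = d0 * c1 + d1 * c0
  e2 : 56 - b1 ^ 2 = d0 * c2 + d1 * c1 + c0
  e3 : 60 = 2 * d0 + d1 * c2 + c1
  e4 : 26 = 2 * d1 + c2

lemma OnJc.map {R S : Type*} [CommRing R] [CommRing S] (f : R →+* S) {d0 d1 b0 b1 c0 c1 c2 : R}
    (h : OnJc d0 d1 b0 b1 c0 c1 c2) : OnJc (f d0) (f d1) (f b0) (f b1) (f c0) (f c1) (f c2) := by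
  constructor
  · simpa only [map_add, map_sub, map_mul, map_pow, map_ofNat] using congrArg f h.e0
  · simpa only [map_add, map_sub, map_mul, map_pow, map_ofNat] using congrArg f h.e1
  · simpa only [map_add, map_sub, map_mul, map_pow, map_ofNat] using congrArg f h.e2
  · simpa only [map_add, map_sub, map_mul, map_pow, map_ofNat] using congrArg f h.e3
  · simpa only [map_add, map_sub, map_mul, map_pow, map_ofNat] using congrArg f h.e4

lemma OnJc.eval {R : Type*} [CommRing R] {d0 d1 b0 b1 c0 c1 c2 : R}
    (h : OnJc d0 d1 b0 b1 c0 c1 c2) (x : R) :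
    4 + 24 * x + 56 * x ^ 2 + 60 * x ^ 3 + 26 * x ^ 4 + 2 * x ^ 5 - (b0 + b1 * x) ^ 2 =
      (x ^ 2 + d1 * x + d0) * (2 * x ^ 3 + c2 * x ^ 2 + c1 * x + c0) := by
  linear_combination h.e0 + x * h.e1 + x ^ 2 * h.e2 + x ^ 3 * h.e3 + x ^ 4 * h.e4

section
variable {O K : Type*} [CommRing O] [IsDomain O] [UniqueFactorizationMonoid O] [Field K] [Algebra O K]
  [IsFractionRing O K]

/-- For a root `s` of `F` and `c Y² + e Y + d` a primitive integral multiple of `a`, the value at `s` has even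
valuation at each prime not dividing `F'(s)`. Translation by `s` reduces this to `parity`. -/
lemma root_parity {d0 d1 b0 b1 c0 c1 c2 : K} (H : OnJc d0 d1 b0 b1 c0 c1 c2) {s c e d p m : O} {i : ℕ}
    (hs : 4 + 24 * s + 56 * s ^ 2 + 60 * s ^ 3 + 26 * s ^ 4 + 2 * s ^ 5 = 0)
    (he : algebraMap O K e = algebraMap O K c * d1) (hd : algebraMap O K d = algebraMap O K c * d0)
    (hc : c ≠ 0) (hprim : ∃ x y z, x * c + y * e + z * d = 1) (hp : Prime p)
    (h1 : ¬ p ∣ 24 + 112 * s + 180 * s ^ 2 + 104 * s ^ 3 + 10 * s ^ 4) (hm : ¬ p ∣ m) :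
    c * s ^ 2 + e * s + d ≠ p ^ (2 * i + 1) * m := by
  intro hA
  have hcK : algebraMap O K c ≠ 0 := by simpa using hc
  obtain ⟨x, y, z, hx⟩ := hprim
  set σ := algebraMap O K s with hσ
  have hsK : 4 + 24 * σ + 56 * σ ^ 2 + 60 * σ ^ 3 + 26 * σ ^ 4 + 2 * σ ^ 5 = 0 := by
    simpa only [map_add, map_mul, map_pow, map_ofNat, map_zero] using congrArg (algebraMap O K) hs
  refine parity (K := K) (f2 := 56 + 180 * s + 156 * s ^ 2 + 20 * s ^ 3) (f3 := 60 + 104 * s + 20 * s ^ 2)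
    (f4 := 26 + 10 * s) (f5 := 2) (A1 := 2 * c * s + e) (A2 := c) (b0 := b0 + b1 * σ) (b1 := b1)
    (cc := C (algebraMap O K c)⁻¹ * (2 * (X + C σ) ^ 3 + C c2 * (X + C σ) ^ 2 + C c1 * (X + C σ) + C c0))
    hp h1 ?_ hc ?_ hA hm ?_
  · intro h
    apply h1
    exact h.trans ⟨12 + 56 * s + 90 * s ^ 2 + 52 * s ^ 3 + 5 * s ^ 4, by ring⟩
  · rintro ⟨⟨k0, h0⟩, ⟨k1, h1⟩, ⟨k2, h2⟩⟩
    apply hp.not_isUnit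
    apply isUnit_of_dvd_one
    refine ⟨x * k2 + y * (k1 - 2 * s * k2) + z * (k0 - s * k1 + s ^ 2 * k2), ?_⟩
    linear_combination -hx + (x - y * 2 * s + z * s ^ 2) * h2 + (y - z * s) * h1 + z * h0
  · have E := (H.map C).eval (X + C σ)
    simp only [map_add, map_mul, map_pow, map_ofNat, he, hd, ← hσ]
    have e1 : C (algebraMap O K c) * C (algebraMap O K c)⁻¹ = 1 := by
      rw [← C_mul, mul_inv_cancel₀ hcK, C_1]
    have e2 := congrArg (C : K → K[X]) hsK
    simp only [map_add, map_mul, map_pow, map_ofNat, map_zero] at e2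
    linear_combination E - e2 - ((X + C σ) ^ 2 + C d1 * (X + C σ) + C d0) * (2 * (X + C σ) ^ 3 + C c2 * (X + C σ) ^ 2 + C c1 * (X + C σ) + C c0) * e1

/-- The leading coefficient of a primitive integral multiple of `a` has even valuation at each prime not
dividing `2`. The substitution `Y = -1 + 1/X` reduces this to `parity`. -/
lemma inf_parity {d0 d1 b0 b1 c0 c1 c2 : K} (H : OnJc d0 d1 b0 b1 c0 c1 c2) {c e d p m : O} {i : ℕ}
    (he : algebraMap O K e = algebraMap O K c * d1) (hd : algebraMap O K d = algebraMap O K c * d0)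
    (hc : c - e + d ≠ 0) (hc0 : c ≠ 0) (hprim : ∃ x y z, x * c + y * e + z * d = 1) (hp : Prime p)
    (h1 : ¬ p ∣ 2) (hm : ¬ p ∣ m) :
    c ≠ p ^ (2 * i + 1) * m := by
  intro hA
  have hcK0 : algebraMap O K c ≠ 0 := by simpa using hc0
  have hcK : 1 - d1 + d0 ≠ 0 := by
    have : algebraMap O K (c - e + d) ≠ 0 := by simpa only [ne_eq, map_eq_zero_iff _ (IsFractionRing.injective O K)] using hc
    intro h
    apply this
    rw [map_add, map_sub, he, hd]; linear_combination algebraMap O K c * h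
  obtain ⟨x, y, z, hx⟩ := hprim
  -- remainder of X³ b(-1 + 1/X) modulo the reversed polynomial
  set n := 1 - d1 + d0 with hn
  obtain ⟨q1, hq1⟩ : ∃ q1, b0 - b1 = n * q1 := ⟨(b0 - b1) / n, by field_simp⟩
  obtain ⟨q0, hq0⟩ : ∃ q0, b1 = n * q0 + (d1 - 2) * q1 := ⟨(b1 - (d1 - 2) * q1) / n, by field_simp; ring⟩
  refine parity (K := K) (f1 := 2) (f2 := 16) (f3 := -24) (f4 := 12) (f5 := -2) (A1 := e - 2 * c) (A2 := c - e + d)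
    (b0 := - q0) (b1 := - q1 - (d1 - 2) * q0)
    (cc := C (algebraMap O K c)⁻¹ * (X * (2 * (1 - X) ^ 3 + C c2 * (1 - X) ^ 2 * X + C c1 * (1 - X) * X ^ 2 + C c0 * X ^ 3) +
      (C q0 + C q1 * X) * (2 * (C (-q0) + C (- q1 - (d1 - 2) * q0) * X) +  (1 + (C d1 - 2) * X + C n * X ^ 2) * (C q0 + C q1 * X))))
    hp h1 ?_ hc ?_ hA hm ?_
  · intro h
    exact h1 ((dvd_neg).mp h)
  · rintro ⟨⟨k0, h0⟩, ⟨k1, h1⟩, ⟨k2, h2⟩⟩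
    apply hp.not_isUnit
    apply isUnit_of_dvd_one
    refine ⟨x * k0 + y * (k1 + 2 * k0) + z * (k2 + k1 + k0), ?_⟩
    linear_combination -hx + (x + 2 * y + z) * h0 + (y + z) * h1 + z * h2
  · have HC := H.map C
    simp only [map_add, map_sub, map_mul, map_pow, map_ofNat, map_neg, he, hd]
    have e1 : C (algebraMap O K c) * C (algebraMap O K c)⁻¹ = 1 := by
      rw [← C_mul, mul_inv_cancel₀ hcK0, C_1]
    have e2 := congrArg (C : K → K[X]) hn
    have e3 := congrArg (C : K → K[X]) hq1
    have e4 := congrArg (C : K → K[X]) hq0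
    simp only [map_add, map_sub, map_mul, map_pow, map_ofNat, map_one] at e2 e3 e4
    generalize (C n : K[X]) = N at *
    generalize (C d1 : K[X]) = D1 at *
    generalize (C d0 : K[X]) = D0 at *
    generalize (C q0 : K[X]) = Q0 at *
    generalize (C q1 : K[X]) = Q1 at *
    generalize (C b0 : K[X]) = B0 at *
    generalize (C b1 : K[X]) = B1 at *
    generalize (C c0 : K[X]) = C0 at *
    generalize (C c1 : K[X]) = C1 at *
    generalize (C c2 : K[X]) = C2 at *
    generalize (C (algebraMap O K c) : K[X]) = G at *
    generalize (C (algebraMap O K c)⁻¹ : K[X]) = G' at *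
    subst e2
    have E : 2 * X * (1-X)^5+ (26 * X ^ 2 * (1 - X) ^ 4 + 60 * X ^ 3 * (1 - X) ^ 3 + 56 * X ^ 4 * (1 - X) ^ 2 + 24 * X ^ 5 * (1 - X) + 4 * X ^ 6) - (B0 * X ^ 3 + B1 * X ^ 2 * (1 - X)) ^ 2 =
       (1 + (D1 - 2) * X + (1 - D1 + D0) * X ^ 2) * (X * (2 * (1 - X) ^ 3 + C2 * (1 - X) ^ 2 * X + C1 * (1 - X) * X ^ 2 + C0 * X ^ 3)) := by
      linear_combination HC.e0 * X ^ 6 + HC.e1 * X ^ 5 * (1 - X) + HC.e2 * X ^ 4 * (1 - X) ^ 2 + HC.e3 * X ^ 3 * (1 - X) ^ 3 + HC.e4 * X ^ 2 * (1 - X) ^ 4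
    have e5 : B0 * X ^ 3 + B1 * X ^ 2 * (1 - X) = (1 + (D1 - 2) * X + (1 - D1 + D0) * X ^ 2) * (Q0 + Q1 * X) + (- Q0 + (- Q1 - (D1 - 2) * Q0) * X) := by
      linear_combination X ^ 3 * e3 + X ^ 2 * e4
    rw [e5] at E
    linear_combination E - (1 + (D1 - 2) * X + (1 - D1 + D0) * X ^ 2) * (X * (2 * (1 - X) ^ 3 + C2 * (1 - X) ^ 2 * X + C1 * (1 - X) * X ^ 2 + C0 * X ^ 3) +
      (Q0 + Q1 * X) * (2 * (-Q0 + (- Q1 - (D1 - 2) * Q0) * X) +  (1 + (D1 - 2) * X + (1 - D1 + D0) * X ^ 2) * (Q0 + Q1 * X))) * e1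

omit [Algebra O K] [IsFractionRing O K] [Field K] in
lemma squarefree_part {x : O} (hx : x ≠ 0) : ∃ d y, x = d * y ^ 2 ∧ Squarefree d := by
  induction x using UniqueFactorizationMonoid.induction_on_prime with
  | h₁ => exact absurd rfl hx
  | h₂ x h => exact ⟨x, 1, by ring, h.squarefree⟩
  | h₃ a p ha hp ih =>
    obtain ⟨d, y, h1, h2⟩ := ih ha
    by_cases hpd : p ∣ d
    · obtain ⟨d', rfl⟩ := hpd
      exact ⟨d', p * y, by rw [h1]; ring, h2.of_mul_right⟩
    · refine ⟨p * d, y, by rw [h1]; ring, ?_⟩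
      rw [squarefree_mul_iff]
      exact ⟨(hp.irreducible.isRelPrime_iff_not_dvd).mpr hpd, hp.irreducible.squarefree, h2⟩

lemma squarefree_dvd {d f : O} (hd : Squarefree d) (h : ∀ p, Prime p → p ∣ d → p ∣ f) : d ∣ f := by
  induction d using UniqueFactorizationMonoid.induction_on_prime with
  | h₁ => exact absurd hd not_squarefree_zero
  | h₂ x hu => exact hu.dvd
  | h₃ a p ha hp ih =>
    obtain ⟨k, rfl⟩ := ih hd.of_mul_right (fun q hq hqa => h q hq (hqa.mul_left p))
    have := h p hp (dvd_mul_right p a)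
    rw [squarefree_mul_iff] at hd
    have hpa : ¬ p ∣ a := (hp.irreducible.isRelPrime_iff_not_dvd).mp hd.1
    obtain ⟨k', rfl⟩ := (hp.dvd_or_dvd this).resolve_left hpa
    exact ⟨k', by ring⟩

/-- If `x` has even valuation at all primes not dividing `f`, then it is a square times a squarefree
divisor of `f`. -/
lemma decomp {x f : O} (hx : x ≠ 0) (h : ∀ p m : O, ∀ i : ℕ, Prime p → ¬ p ∣ f → ¬ p ∣ m → x ≠ p ^ (2 * i + 1) * m) :
    ∃ d y, x = d * y ^ 2 ∧ Squarefree d ∧ d ∣ f := by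
  obtain ⟨d, y, h1, h2⟩ := squarefree_part hx
  refine ⟨d, y, h1, h2, squarefree_dvd h2 ?_⟩
  intro p hp hpd
  by_contra hf
  have hy : y ≠ 0 := by rintro rfl; apply hx; rw [h1]; ring
  obtain ⟨n, m, hm, rfl⟩ := exists_val hp hy
  obtain ⟨d', rfl⟩ := hpd
  have hpd' : ¬ p ∣ d' := by
    intro hd'
    have := h2 p (mul_dvd_mul_left p hd')
    exact hp.not_isUnit this
  refine h p (d' * m ^ 2) n hp hf ?_ ?_
  · intro hd
    rcases hp.dvd_or_dvd hd with h | h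
    · exact hpd' h
    · exact hm (hp.dvd_of_dvd_pow h)
  · rw [h1]; ring

end

/-! ### The Selmer condition -/

/-- The pair `a = Y² + d₁ Y + d₀`, `b = b₀ + b₁ Y` is the Mumford representation of a rational divisor of
degree `2` on `W² = F(Y)`, that is, `a` divides `F - b²`. -/
def OnJ (d0 d1 b0 b1 : ℚ) : Prop := ∃ c0 c1 c2 : ℚ, OnJc d0 d1 b0 b1 c0 c1 c2

/-- Primitive integral coordinates `(c : e : d)` of the point `(1 : x : y)`, with a Bézout relation. -/
lemma prim_rat (x y : ℚ) : ∃ c e d : ℤ, c ≠ 0 ∧ (e : ℚ) = c * x ∧ (d : ℚ) = c * y ∧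
    ∃ r s t, r * c + s * e + t * d = 1 := by
  obtain ⟨d, e, c, hnd, h1, h2⟩ : ∃ c e d : ℤ, c ≠ 0 ∧ (e : ℚ) = c * x ∧ (d : ℚ) = c * y :=
    ⟨x.den * y.den, x.num * y.den, y.num * x.den, by positivity, by
      push_cast; nth_rewrite 3 [← Rat.num_div_den x]; field_simp, by
      push_cast; nth_rewrite 3 [← Rat.num_div_den y]; field_simp⟩
  obtain ⟨g, hg⟩ := (IsPrincipalIdealRing.principal (Ideal.span {d, e, c} : Ideal ℤ)).principal
  have m1 : d ∈ Ideal.span {d, e, c} := Ideal.subset_span (by simp)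
  have m2 : e ∈ Ideal.span {d, e, c} := Ideal.subset_span (by simp)
  have m3 : c ∈ Ideal.span {d, e, c} := Ideal.subset_span (by simp)
  have m0 : g ∈ Ideal.span {d, e, c} := by rw [hg]; exact Submodule.mem_span_singleton_self g
  rw [hg] at m1 m2 m3
  obtain ⟨k1, hk1⟩ := Ideal.mem_span_singleton'.mp m1
  obtain ⟨k2, hk2⟩ := Ideal.mem_span_singleton'.mp m2
  obtain ⟨k3, hk3⟩ := Ideal.mem_span_singleton'.mp m3
  obtain ⟨r, z, hz, hr⟩ := Ideal.mem_span_insert.mp m0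
  obtain ⟨s, t, hst⟩ := Ideal.mem_span_pair.mp hz
  have hg0 : g ≠ 0 := by rintro rfl; apply hnd; rw [← hk1]; ring
  have hgQ : (g : ℚ) ≠ 0 := by exact_mod_cast hg0
  refine ⟨k1, k2, k3, ?_, ?_, ?_, r, s, t, ?_⟩
  · rintro rfl; apply hnd; rw [← hk1]; ring
  · rw [← hk1, ← hk2] at h1; push_cast at h1
    apply mul_right_cancel₀ hgQ; linear_combination h1
  · rw [← hk1, ← hk3] at h2; push_cast at h2
    apply mul_right_cancel₀ hgQ; linear_combination h2
  · apply mul_right_cancel₀ hg0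
    linear_combination -hr + hst + r * hk1 + s * hk2 + t * hk3

lemma dvd_two {d : ℤ} (h : d ∣ 2) : d = 1 ∨ d = -1 ∨ d = 2 ∨ d = -2 := by
  have : d.natAbs ∣ 2 := by simpa using Int.natAbs_dvd_natAbs.mpr h
  have := (Nat.dvd_prime Nat.prime_two).mp this
  omega

section
variable {K : Type} [Field K] [NumberField K] {p : K} {v : K → ℝ}

lemma AV.integral (hv : AV v) {x : K} (hx : IsIntegral ℤ x) : v x ≤ 1 := by
  by_contra! hlt
  obtain ⟨f, hf, hfx⟩ := hx
  have hsum : ∀ n : ℕ, v (∑ i ∈ Finset.range n, ((f.coeff i : ℤ) : K) * x ^ i) * v x ≤ v x ^ n := by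
    intro n
    induction n with
    | zero => simp [hv.zero']
    | succ n ih =>
      rw [Finset.sum_range_succ, pow_succ]
      refine mul_le_mul_of_nonneg_right (hv.add_le ?_ ?_) (by linarith)
      · have h0 := hv.nonneg (∑ i ∈ Finset.range n, ((f.coeff i : ℤ) : K) * x ^ i)
        nlinarith
      · rw [hv.mul, hv.pow]
        have := hv.int (f.coeff n)
        have := pow_pos (show 0 < v x by linarith) n
        nlinarith
  rw [eval₂_eq_sum_range, Finset.sum_range_succ] at hfx
  have h1 := hsum f.natDegree
  rw [hf.coeff_natDegree] at hfx
  simp only [eq_intCast, Int.cast_one, one_mul] at hfx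
  rw [eq_neg_of_add_eq_zero_left hfx, hv.neg, hv.pow] at h1
  have := pow_pos (show 0 < v x by linarith) f.natDegree
  nlinarith

lemma AV.unit (hv : AV v) (u : (𝓞 K)ˣ) : v ((u : 𝓞 K) : K) = 1 := by
  refine le_antisymm (hv.integral (u : 𝓞 K).2) ?_
  change 1 ≤ v ((u : 𝓞 K) : K)
  have h2 : v (((u⁻¹ : (𝓞 K)ˣ) : 𝓞 K) : K) ≤ 1 := hv.integral ((u⁻¹ : (𝓞 K)ˣ) : 𝓞 K).2
  have h3 : v ((u : 𝓞 K) : K) * v (((u⁻¹ : (𝓞 K)ˣ) : 𝓞 K) : K) = 1 := by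
    rw [← hv.mul, ← map_mul, ← Units.val_mul, mul_inv_cancel, Units.val_one, map_one, hv.one]
  have h1 := hv.nonneg ((u : 𝓞 K) : K)
  have h4 := mul_le_mul_of_nonneg_left h2 h1
  linarith

lemma IsRt.unit_of_norm (x : 𝓞 K) (h : (Algebra.norm ℤ x).natAbs = 1) : IsUnit x := by
  rw [← Ideal.span_singleton_eq_top, ← Ideal.absNorm_eq_one_iff, Ideal.absNorm_span_singleton, h]

/-- `2` is a unit times `π⁴`. -/
lemma IsRt.two (hp : IsRt p) (hK : Module.finrank ℚ K = 4) :
    ∃ u : (𝓞 K)ˣ, (2 : K) = (u : 𝓞 K) * p ^ 4 := by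
  have hu : IsUnit (-(6 * hp.int ^ 3 + 9 * hp.int ^ 2 + 5 * hp.int + 1)) := by
    have e : hp.int ^ 4 = -(6 * hp.int ^ 3 + 9 * hp.int ^ 2 + 5 * hp.int + 1) * 2 := by
      linear_combination hp.int_eq
    apply IsRt.unit_of_norm
    have h := congrArg (Algebra.norm ℤ) e
    rw [map_pow, map_mul, hp.norm_p hK] at h
    have h2 : Algebra.norm ℤ (2 : 𝓞 K) = 16 := by
      have := Algebra.norm_algebraMap (S := 𝓞 K) (2 : ℤ)
      rw [RingOfIntegers.rank, hK] at this
      simpa using this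
    rw [h2] at h
    omega
  obtain ⟨u, hu⟩ := hu
  refine ⟨u⁻¹, ?_⟩
  have h1 : ((u : 𝓞 K) : K) * ((u⁻¹ : (𝓞 K)ˣ) : 𝓞 K) = 1 := by
    rw [← map_mul, ← Units.val_mul, mul_inv_cancel, Units.val_one, map_one]
  have h2 : ((u : 𝓞 K) : K) = -(6 * p ^ 3 + 9 * p ^ 2 + 5 * p + 1) := by
    rw [hu]; simp only [map_neg, map_add, map_mul, map_pow, map_ofNat, map_one, hp.int_coe]
  linear_combination -2 * h1 - ((u⁻¹ : (𝓞 K)ˣ) : 𝓞 K) * hp.eq + 2 * ((u⁻¹ : (𝓞 K)ˣ) : 𝓞 K) * h2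

/-- The product of the values of `a` at all roots of `F`, times `4`, is the square of the resultant of
`a` and `b`. The norm of `a(π)` appears as the determinant of its multiplication matrix. -/
lemma OnJ.res {d0 d1 b0 b1 : ℚ} (H : OnJ d0 d1 b0 b1) : ∃ s : ℚ,
    4 * (1 - d1 + d0) * (mulMat d0 d1 1 0).det = s ^ 2 := by
  obtain ⟨c0, c1, c2, H⟩ := H
  have h2 : c2 = 26 - 2 * d1 := by linear_combination -H.e4
  have h1 : c1 = 60 - 2 * d0 - d1 * (26 - 2 * d1) := by rw [← h2]; linear_combination -H.e3
  have h0 : c0 = 56 - b1 ^ 2 - d0 * c2 - d1 * c1 := by linear_combination - H.e2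
  have k0 : b0 ^ 2 - d0 * b1 ^ 2 = 4 - d0 * (56 - d0 * c2 - d1 * c1) := by
    linear_combination -H.e0 - d0 * h0
  have k1 : 2 * b0 * b1 - d1 * b1 ^ 2 = 24 - d0 * c1 - d1 * (56 - d0 * c2 - d1 * c1) := by
    linear_combination -H.e1 - d1 * h0
  refine ⟨b0 ^ 2 - d1 * b0 * b1 + d0 * b1 ^ 2, ?_⟩
  have e : (b0 ^ 2 - d1 * b0 * b1 + d0 * b1 ^ 2) ^ 2 =
     (b0 ^ 2 - d0 * b1 ^ 2) ^ 2 - d1 * (b0 ^ 2 - d0 * b1 ^ 2) * (2 * b0 * b1 - d1 * b1 ^ 2) +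
      d0 * (2 * b0 * b1 - d1 * b1 ^ 2) ^ 2 := by ring
  rw [e, k0, k1, h1, h2, mulMat_eq, det4]
  simp
  ring

end

lemma int_decomp {x f : ℤ} (hx : x ≠ 0) (hf : f ∣ 2) (h : ∀ p m : ℤ, ∀ i : ℕ, Prime p → ¬ p ∣ f → ¬ p ∣ m → x ≠ p ^ (2 * i + 1) * m) :
    ∃ d y : ℤ, x = d * y ^ 2 ∧ (d = 1 ∨ d = -1 ∨ d = 2 ∨ d = -2) := by
  obtain ⟨d, y, h1, -, h2⟩ := decomp hx h
  exact ⟨d, y, h1, dvd_two (h2.trans hf)⟩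

section
variable {K : Type} [Field K] [NumberField K] {p : K} {v : K → ℝ}

lemma AV.small (hv : AV v) (hp : IsRt p) {d0 d1 : ℚ} (h0 : D 3 d0) (h1 : D 2 d1) : v (d1 * p + d0) ≤ v p ^ 9 := by
  have p0 := hv.p_pos hp
  have p1 := hv.p_lt hp
  refine hv.add_le ?_ ?_
  · rw [hv.mul, pow_succ]
    exact mul_le_mul_of_nonneg_right (hv.of_D hp h1) p0.le
  · exact (hv.of_D hp h0).trans (pow_le_pow_of_le_one p0.le p1.le (by norm_num))

lemma AV.value_a (hv : AV v) (hp : IsRt p) {d0 d1 : ℚ} (h0 : D 3 d0) (h1 : D 2 d1) : v (p ^ 2 + d1 * p + d0) = v p ^ 2 := by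
  rw [add_assoc, hv.add_eq, hv.pow]
  rw [hv.pow]
  exact (hv.small hp h0 h1).trans_lt (pow_lt_pow_right_of_lt_one₀ (hv.p_pos hp) (hv.p_lt hp) (by norm_num))

lemma AV.a_ne (hv : AV v) (hp : IsRt p) {d0 d1 : ℚ} (h0 : D 3 d0) (h1 : D 2 d1) : 1 - d1 + d0 ≠ 0 := by
  intro h
  have p0 := hv.p_pos hp
  have p1 := hv.p_lt hp
  have e : (1 : K) = d1 - d0 := by
    have : (1 : ℚ) = d1 - d0 := by linear_combination h
    exact_mod_cast congrArg (fun q : ℚ => (q : K)) this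
  have h2 : v (d1 - d0) ≤ v p ^ 8 := hv.sub_le (hv.of_D hp h1)
    ((hv.of_D hp h0).trans (pow_le_pow_of_le_one p0.le p1.le (by norm_num)))
  rw [← e, hv.one] at h2
  have := pow_lt_one₀ p0.le p1 (show 8 ≠ 0 by norm_num)
  linarith

/-- The norm of `F'(π)` divides `11008 = 2⁸ · 43`. -/
lemma ratio_norm (hp : IsRt p) (hK : Module.finrank ℚ K = 4) :
    Algebra.norm ℤ (24 + 112 * hp.int + 180 * hp.int ^ 2 + 104 * hp.int ^ 3 + 10 * hp.int ^ 4) ∣ 11008 := by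
  have e : ((24 + 112 * hp.int + 180 * hp.int ^ 2 + 104 * hp.int ^ 3 + 10 * hp.int ^ 4 : 𝓞 K) : K) =
     ((4 : ℚ) : K) + (12 : ℚ) * p + (0 : ℚ) * p ^ 2 + (-16 : ℚ) * p ^ 3 := by
    simp only [map_add, map_mul, map_pow, map_ofNat, hp.int_coe]
    push_cast
    linear_combination 10 * hp.eq
  have h := hp.norm hK 4 12 0 (-16)
  have hdet : (mulMat 4 12 0 (-16)).det = 11008 := by
    rw [mulMat_eq, det4]; simp; norm_num
  rw [← e, hdet] at h
  rw [← Algebra.coe_norm_int] at h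
  have hnorm : Algebra.norm ℤ (24 + 112 * hp.int + 180 * hp.int ^ 2 + 104 * hp.int ^ 3 + 10 * hp.int ^ 4) = 11008 := by
    exact_mod_cast h
  rw [hnorm]

/-- The square relation of `OnJ.res` excludes the prime `43` from the norm of the squarefree part of
`a(π)`. -/
lemma sq43 {n : ℤ} (hn : n ∣ 11008) {d1 d2 : ℤ} (h1 : d1 = 1 ∨ d1 = -1 ∨ d1 = 2 ∨ d1 = -2)
    (h2 : d2 = 1 ∨ d2 = -1 ∨ d2 = 2 ∨ d2 = -2) (h : IsSquare ((n * d1 * d2 : ℤ) : ℚ)) : n ∣ 2 ^ 8 := by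
  rw [Rat.isSquare_intCast_iff] at h
  obtain ⟨z, hz⟩ := h
  by_cases h43 : (43 : ℤ) ∣ n
  · exfalso
    have hp : Prime (43 : ℤ) := Int.prime_iff_natAbs_prime.mpr (by norm_num)
    have h3 : (43 : ℤ) ∣ z := by
      have : (43 : ℤ) ∣ z * z := by rw [← hz, mul_assoc]; exact h43.mul_right _
      rcases hp.dvd_or_dvd this with h | h <;> exact h
    have h4 : (43 * 43 : ℤ) ∣ n * d1 * d2 := by rw [hz]; exact mul_dvd_mul h3 h3
    have h5 : n * d1 * d2 ∣ 11008 * 2 * 2 := by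
      refine mul_dvd_mul (mul_dvd_mul hn ?_) ?_
      · rcases h1 with rfl | rfl | rfl | rfl <;> norm_num
      · rcases h2 with rfl | rfl | rfl | rfl <;> norm_num
    have := h4.trans h5
    norm_num at this
  · have hp : Prime (43 : ℤ) := Int.prime_iff_natAbs_prime.mpr (by norm_num)
    have hc : IsCoprime n 43 := ((hp.irreducible.coprime_iff_not_dvd).mpr h43).symm
    have : n ∣ 2 ^ 8 * 43 := by norm_num; exact hn
    exact hc.dvd_of_dvd_mul_right this

/-- `π` is the only prime above `2`, so a squarefree integer with norm a power of `2` is a unit or a unit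
times `π`. -/
lemma IsRt.dvd_int (hp : IsRt p) (hK : Module.finrank ℚ K = 4) [UniqueFactorizationMonoid (𝓞 K)] {d : 𝓞 K} (hd : Squarefree d)
    (hn : Algebra.norm ℤ d ∣ 2 ^ 8) : ∃ u : (𝓞 K)ˣ, d = u ∨ d = u * hp.int := by
  have h1 : d ∣ hp.int := by
    refine squarefree_dvd hd fun q hq hqd => ?_
    have h2 : d ∣ ((Ideal.absNorm (Ideal.span {d}) : ℕ) : 𝓞 K) :=
      Ideal.mem_span_singleton.mp (Ideal.absNorm_mem _)
    rw [Ideal.absNorm_span_singleton] at h2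
    have h3 : ((Algebra.norm ℤ d).natAbs : 𝓞 K) ∣ 2 ^ 8 := by
      have : (Algebra.norm ℤ d).natAbs ∣ 2 ^ 8 := by
        have := Int.natAbs_dvd_natAbs.mpr hn
        simpa using this
      exact_mod_cast Nat.cast_dvd_cast (α := 𝓞 K) this
    have h4 : q ∣ 2 := hq.dvd_of_dvd_pow ((hqd.trans h2).trans h3)
    have h5 : (2 : 𝓞 K) ∣ hp.int ^ 4 := ⟨-(6 * hp.int ^ 3 + 9 * hp.int ^ 2 + 5 * hp.int + 1), by
      linear_combination hp.int_eq⟩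
    exact hq.dvd_of_dvd_pow (h4.trans h5)
  obtain ⟨e, he⟩ := h1
  have hN := congrArg (fun x => (Algebra.norm ℤ x).natAbs) he
  simp only [map_mul, Int.natAbs_mul, hp.norm_p hK] at hN
  have h6 : (Algebra.norm ℤ d).natAbs ∣ 2 := ⟨_, hN⟩
  rcases (Nat.dvd_prime Nat.prime_two).mp h6 with h | h
  · obtain ⟨u, hu⟩ := IsRt.unit_of_norm _ h
    exact ⟨u, Or.inl hu.symm⟩
  · have : (Algebra.norm ℤ e).natAbs = 1 := by
      rw [h] at hN
      have : (2 : ℤ).natAbs = 2 := rfl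
      omega
    obtain ⟨u, rfl⟩ := IsRt.unit_of_norm _ this
    refine ⟨u⁻¹, Or.inr ?_⟩
    rw [he, mul_comm d, ← mul_assoc, Units.inv_mul, one_mul]

/-- For a divisor `D` with `a` 2-adically close to `Y²`, the values of `a` at the roots `π` and `-1` of `F`
are squares. By parity their squarefree parts are supported at `2` and `43`; `OnJ.res` removes `43`,
2-adic closeness removes `π`, and the remaining units are squares by `unit_square`. -/
theorem selmer (hv : AV v) (hp : IsRt p) (hK : Module.finrank ℚ K = 4) {d0 d1 b0 b1 : ℚ}
    (H : OnJ d0 d1 b0 b1) (h0 : D 3 d0) (h1 : D 2 d1) :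
    (∃ z : K, p ^ 2 + d1 * p + d0 = z ^ 2) ∧ ∃ q : ℚ, 1 - d1 + d0 = q ^ 2 := by
  have p0 := hv.p_pos hp
  have p1 := hv.p_lt hp
  have hpne : p ≠ 0 := by rintro rfl; rw [hv.zero'] at p0; exact lt_irrefl _ p0
  have : IsPrincipalIdealRing (𝓞 K) := hp.isPID hK
  have hva := hv.value_a hp h0 h1
  have ha0 : p ^ 2 + d1 * p + d0 ≠ 0 := by
    intro h
    rw [h, hv.zero'] at hva
    exact absurd hva (pow_pos p0 2).ne
  have ha1 := hv.a_ne hp h0 h1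
  obtain ⟨s, hs⟩ := H.res
  obtain ⟨c0, c1, c2, HJ⟩ := H
  obtain ⟨c, e, d, hc, he, hd, x, y, z, hxyz⟩ := prim_rat d1 d0
  have hcQ : (c : ℚ) ≠ 0 := by exact_mod_cast hc
  have hcK : (c : K) ≠ 0 := by exact_mod_cast hc
  have heK : (e : K) = c * d1 := by exact_mod_cast congrArg (fun q : ℚ => (q : K)) he
  have hdK : (d : K) = c * d0 := by exact_mod_cast congrArg (fun q : ℚ => (q : K)) hd
  -- the value at `-1`
  have hA1 : c * (-1) ^ 2 + e * (-1) + d ≠ 0 := by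
    intro h
    have h' : (c : ℚ) - e + d = 0 := by
      have := congrArg (fun n : ℤ => (n : ℚ)) h
      push_cast at this
      linear_combination this
    rw [he, hd] at h'
    apply ha1
    apply mul_left_cancel₀ hcQ
    linear_combination h'
  obtain ⟨g1, y1, hA1', hg1⟩ := int_decomp (f := -2) hA1 (by norm_num) (by
    intro q m i hq hq2 hm
    refine root_parity (K := ℚ) HJ (s := -1) (by norm_num) (by simpa using he) (by simpa using hd) hc
      ⟨x, y, z, hxyz⟩ hq ?_ hm
    norm_num at hq2 ⊢; exact hq2)
  -- the value at infinity
  obtain ⟨g2, y2, hA2', hg2⟩ := int_decomp (f := 2) hc (by norm_num) (by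
    intro q m i hq hq2 hm
    refine inf_parity (K := ℚ) HJ (c := c) (e := e) (d := d) (by simpa using he) (by simpa using hd) ?_ hc
      ⟨x, y, z, hxyz⟩ hq hq2 hm
    intro h; apply hA1; linear_combination h)
  -- the value at `π`
  set A : 𝓞 K := (c : 𝓞 K) * hp.int ^ 2 + (e : 𝓞 K) * hp.int + (d : 𝓞 K) with hA
  have hAK : (A : K) = c * (p ^ 2 + d1 * p + d0) := by
    rw [hA]; simp only [map_add, map_mul, map_pow, map_intCast, hp.int_coe]
    rw [heK, hdK]; ring
  have hAne : A ≠ 0 := by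
    intro h
    rw [h] at hAK
    simp only [map_zero] at hAK
    exact mul_ne_zero hcK ha0 hAK.symm
  obtain ⟨δ, γ, hδ, hsq, hδf⟩ := decomp (x := A) (f := 24 + 112 * hp.int + 180 * hp.int ^ 2 + 104 * hp.int ^ 3 + 10 * hp.int ^ 4) hAne (by
    intro q m i hq hq2 hm
    refine root_parity (K := K) (HJ.map (algebraMap ℚ K)) (s := hp.int) (c := (c : 𝓞 K)) (e := (e : 𝓞 K)) (d := (d : 𝓞 K)) ?_ ?_ ?_ ?_
      ⟨x, y, z, by exact_mod_cast congrArg (fun n : ℤ => (n : 𝓞 K)) hxyz⟩ hq hq2 hm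
    · linear_combination (2 * hp.int + 2) * hp.int_eq
    · simpa using heK
    · simpa using hdK
    · exact_mod_cast hc)
  have hγ : γ ≠ 0 := by rintro rfl; apply hAne; rw [hδ]; ring
  have hNγ : Algebra.norm ℤ γ ≠ 0 := by simpa [Algebra.norm_eq_zero_iff] using hγ
  have hn1 : Algebra.norm ℤ δ ∣ 11008 := (map_dvd (Algebra.norm ℤ) hδf).trans (ratio_norm hp hK)
  have hN : ((Algebra.norm ℤ A : ℤ) : ℚ) = c ^ 4 * (mulMat d0 d1 1 0).det := by
    have : (A : K) = ((d : ℚ) : K) + (e : ℚ) * p + (c : ℚ) * p ^ 2 + (0 : ℚ) * p ^ 3 := by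
      rw [hA]; simp only [map_add, map_mul, map_pow, map_intCast, hp.int_coe]
      push_cast; ring
    rw [Algebra.coe_norm_int, this, hp.norm hK, he, hd, mulMat_eq, mulMat_eq, det4, det4]
    simp
    ring
  have hy1 : y1 ≠ 0 := by rintro rfl; apply hA1; rw [hA1']; ring
  have hg2' : (g2 : ℚ) ≠ 0 := by rcases hg2 with rfl | rfl | rfl | rfl <;> norm_num
  have hNs : IsSquare ((Algebra.norm ℤ δ * g1 * g2 : ℤ) : ℚ) := by
    have e1 : ((Algebra.norm ℤ A : ℤ) : ℚ) = (Algebra.norm ℤ δ : ℤ) * ((Algebra.norm ℤ γ : ℤ) : ℚ) ^ 2 := by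
      rw [hδ, map_mul, map_pow]; push_cast; ring
    have e2 : (c : ℚ) * (1 - d1 + d0) = g1 * y1 ^ 2 := by
      have := congrArg (fun n : ℤ => (n : ℚ)) hA1'
      push_cast at this
      rw [← this, he, hd]; ring
    have e3 : (c : ℚ) = g2 * y2 ^ 2 := by exact_mod_cast congrArg (fun n : ℤ => (n : ℚ)) hA2'
    have hyQ : (y1 : ℚ) ≠ 0 := by exact_mod_cast hy1
    have hNQ : ((Algebra.norm ℤ γ : ℤ) : ℚ) ≠ 0 := by exact_mod_cast hNγ
    refine ⟨g2 * (g2 ^ 2 * y2 ^ 5 * s) / (2 * (Algebra.norm ℤ γ : ℤ) * y1), ?_⟩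
    push_cast
    generalize ((Algebra.norm ℤ γ : ℤ) : ℚ) = Nγ at *
    generalize ((Algebra.norm ℤ δ : ℤ) : ℚ) = Nδ at *
    generalize ((Algebra.norm ℤ A : ℤ) : ℚ) = NA at *
    have e4 : 4 * (g1 * y1 ^ 2) * (Nδ * Nγ ^ 2) = (g2 * y2 ^ 2) ^ 5 * s ^ 2 := by
      rw [← e1, ← e2, hN, ← e3, ← hs]; ring
    field_simp
    linear_combination e4
  obtain ⟨u, hu⟩ := hp.dvd_int hK hsq (sq43 hn1 hg1 hg2 hNs)
  obtain ⟨u2, hu2⟩ := hp.two hK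
  -- the leading coefficient is a unit times a square in `K`
  obtain ⟨w, t, ht⟩ : ∃ (w : (𝓞 K)ˣ) (t : K), (c : K) = ((w : 𝓞 K) : K) * t ^ 2 := by
    have hcy : (c : K) = g2 * y2 ^ 2 := by exact_mod_cast congrArg (fun n : ℤ => (n : K)) hA2'
    rcases hg2 with rfl | rfl | rfl | rfl
    · exact ⟨1, y2, by rw [hcy]; simp⟩
    · exact ⟨-1, y2, by rw [hcy]; simp⟩
    · exact ⟨u2, p ^ 2 * y2, by rw [hcy]; push_cast; rw [hu2]; ring⟩
    · exact ⟨-u2, p ^ 2 * y2, by rw [hcy]; simp only [Units.val_neg, map_neg]; push_cast; rw [hu2]; ring⟩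
  have ht0 : t ≠ 0 := by rintro rfl; apply hcK; rw [ht]; ring
  have hw0 : ((w : 𝓞 K) : K) ≠ 0 := Units.coe_ne_zero w
  have hγK : (γ : K) ≠ 0 := by simpa using hγ
  have hwi : ((w : 𝓞 K) : K) * ((w⁻¹ : (𝓞 K)ˣ) : 𝓞 K) = 1 := by
    rw [← map_mul, ← Units.val_mul, mul_inv_cancel, Units.val_one, map_one]
  have key : p ^ 2 + d1 * p + d0 = (((w⁻¹ : (𝓞 K)ˣ) : 𝓞 K) : K) * (δ : K) * ((γ : K) / t) ^ 2 := by
    have h2 := congrArg (fun x : 𝓞 K => (x : K)) hδ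
    simp only [map_mul, map_pow] at h2
    rw [hAK, ht] at h2
    field_simp
    linear_combination (((w⁻¹ : (𝓞 K)ˣ) : 𝓞 K) : K) * h2 - t ^ 2 * (p ^ 2 + d1 * p + d0) * hwi
  have hsqK : ∃ z : K, p ^ 2 + d1 * p + d0 = z ^ 2 := by
    rcases hu with rfl | rfl
    · obtain ⟨z, hz⟩ := hv.unit_square hp hK (w⁻¹ * u) (γ / t / p) (by
        have e1 : (((w⁻¹ * u : (𝓞 K)ˣ) : 𝓞 K) : K) * (γ / t / p) ^ 2 - 1 = (d1 * p + d0) / p ^ 2 := by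
          simp only [Units.val_mul, map_mul]
          rw [eq_div_iff (pow_ne_zero 2 hpne)]
          have : (((w⁻¹ : (𝓞 K)ˣ) : 𝓞 K) : K) * ((u : 𝓞 K) : K) * (γ / t / p) ^ 2 * p ^ 2 = p ^ 2 + d1 * p + d0 := by
            rw [key]; field_simp
          linear_combination this
        rw [e1, hv.div, hv.pow, div_le_iff₀ (pow_pos p0 2), ← pow_add]
        exact hv.small hp h0 h1)
      refine ⟨z * (γ / t), ?_⟩
      rw [key, mul_pow, ← hz]
      simp only [Units.val_mul, map_mul]
    · exfalso
      rw [key] at hva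
      simp only [map_mul] at hva
      rw [hv.mul, hv.mul, hv.mul, hv.unit, hv.unit, show algebraMap (𝓞 K) K hp.int = p from rfl, hv.pow] at hva
      obtain ⟨k, hk⟩ := hv.value hp hK (div_ne_zero hγK ht0)
      rw [hk, one_mul, one_mul, ← zpow_natCast, ← zpow_natCast, ← zpow_mul, ← zpow_one_add₀ p0.ne'] at hva
      have := zpow_right_injective₀ p0 p1.ne hva
      push_cast at this
      omega
  refine ⟨hsqK, ?_⟩
  obtain ⟨ζ, hζ⟩ := hsqK
  have hNs2 : (mulMat d0 d1 1 0).det = (Algebra.norm ℚ ζ) ^ 2 := by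
    rw [← map_pow, ← hζ, ← hp.norm hK]
    congr 1; push_cast; ring
  have hζ0 : ζ ≠ 0 := by rintro rfl; apply ha0; rw [hζ]; ring
  have hNζ : Algebra.norm ℚ ζ ≠ 0 := by simpa [Algebra.norm_eq_zero_iff] using hζ0
  refine ⟨s / (2 * Algebra.norm ℚ ζ), ?_⟩
  rw [hNs2] at hs
  field_simp
  linear_combination hs

end

/-! ### 2-adic divisibility of rationals -/

@[simp, norm_cast] lemma cast2 : ((2 : ℤ_[2]) : ℚ_[2]) = 2 := rfl

lemma par (z : ℤ_[2]) : (∃ k, z = 2 * k) ∨ ∃ k, z = 1 + 2 * k := by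
  obtain ⟨n, hn, h⟩ := PadicInt.exists_mem_range (p := 2) z
  rw [PadicInt.maximalIdeal_eq_span_p, Ideal.mem_span_singleton] at h
  obtain ⟨k, hk⟩ := h
  interval_cases n
  · left; exact ⟨k, by push_cast at hk; linear_combination hk⟩
  · right; exact ⟨k, by push_cast at hk; linear_combination hk⟩

lemma not_even_odd {a b : ℤ_[2]} (h : 2 * a = 1 + 2 * b) : False := by
  have h1 : (2 : ℤ_[2]) * (a - b) = 1 := by linear_combination h
  have h2 : ((2 : ℕ) : ℤ_[2]) * (a - b) = 1 := by exact_mod_cast h1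
  exact PadicInt.prime_p.not_isUnit (IsUnit.of_mul_eq_one _ h2)

lemma odd_inv (k : ℤ_[2]) : ∃ m, (1 + 2 * k) * (1 + 2 * m) = 1 := by
  have hu : IsUnit (1 + 2 * k) := by
    by_contra h
    have : 1 + 2 * k ∈ IsLocalRing.maximalIdeal ℤ_[2] := h
    rw [PadicInt.maximalIdeal_eq_span_p, Ideal.mem_span_singleton] at this
    obtain ⟨m, hm⟩ := this
    exact not_even_odd (a := m) (b := k) (by rw [hm]; push_cast; ring)
  obtain ⟨x, hx⟩ := hu.exists_right_inv
  rcases par x with ⟨m, rfl⟩ | ⟨m, rfl⟩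
  · exact (not_even_odd (a := (1 + 2 * k) * m) (b := 0) (by linear_combination hx)).elim
  · exact ⟨m, hx⟩

/-- `q ∈ 1 + 2 ℤ₂`. -/
def Od (q : ℚ) : Prop := ∃ z : ℤ_[2], (q : ℚ_[2]) = 1 + 2 * z

namespace D
variable {j k : ℕ} {x y : ℚ}

lemma mono (h : D k x) (hj : j ≤ k) : D j x := by
  obtain ⟨z, hz⟩ := h
  obtain ⟨m, rfl⟩ := Nat.exists_eq_add_of_le hj
  exact ⟨2 ^ m * z, by rw [hz]; push_cast; ring⟩

lemma add (hx : D k x) (hy : D k y) : D k (x + y) := by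
  obtain ⟨a, ha⟩ := hx; obtain ⟨b, hb⟩ := hy
  exact ⟨a + b, by push_cast; rw [ha, hb]; ring⟩

lemma sub (hx : D k x) (hy : D k y) : D k (x - y) := by
  obtain ⟨a, ha⟩ := hx; obtain ⟨b, hb⟩ := hy
  exact ⟨a - b, by push_cast; rw [ha, hb]; ring⟩

lemma neg (hx : D k x) : D k (-x) := by
  obtain ⟨a, ha⟩ := hx
  exact ⟨-a, by push_cast; rw [ha]; ring⟩

lemma mul (hx : D j x) (hy : D k y) : D (j + k) (x * y) := by
  obtain ⟨a, ha⟩ := hx; obtain ⟨b, hb⟩ := hy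
  exact ⟨a * b, by push_cast; rw [ha, hb]; ring⟩

lemma mul' {n : ℕ} (hx : D j x) (hy : D k y) (h : n ≤ j + k) : D n (x * y) := (hx.mul hy).mono h

lemma int (n : ℤ) : D 0 (n : ℚ) := ⟨n, by push_cast; ring⟩

lemma two : D 1 2 := ⟨1, by push_cast; ring⟩

lemma zero : D k 0 := ⟨0, by push_cast; ring⟩

lemma div_od (hx : D k x) (hy : Od y) : D k (x / y) := by
  obtain ⟨a, ha⟩ := hx; obtain ⟨b, hb⟩ := hy
  obtain ⟨m, hm⟩ := odd_inv b
  refine ⟨a * (1 + 2 * m), ?_⟩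
  have h1 : (1 + 2 * (b : ℚ_[2])) * (1 + 2 * m) = 1 := by exact_mod_cast congrArg (fun z : ℤ_[2] => (z : ℚ_[2])) hm
  have h2 : (1 + 2 * (b : ℚ_[2])) ≠ 0 := left_ne_zero_of_mul_eq_one h1
  push_cast
  rw [ha, hb, div_eq_iff h2]
  linear_combination (-2 ^ k * (a : ℚ_[2])) * h1

lemma of_two_mul (h : D (k + j) (2 ^ j * x)) : D k x := by
  obtain ⟨a, ha⟩ := h
  refine ⟨a, ?_⟩
  push_cast at ha
  have h2 : (2 : ℚ_[2]) ^ j ≠ 0 := pow_ne_zero _ two_ne_zero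
  apply mul_left_cancel₀ h2
  rw [ha]; ring

lemma od_of_sub (h : D 1 (x - 1)) : Od x := by
  obtain ⟨a, ha⟩ := h
  refine ⟨a, ?_⟩
  push_cast at ha
  linear_combination ha
end D

namespace Od
variable {x y : ℚ}
lemma D0 (h : Od x) : D 0 x := by
  obtain ⟨a, ha⟩ := h
  exact ⟨1 + 2 * a, by push_cast; rw [ha]; ring⟩

lemma sub_one (h : Od x) : D 1 (x - 1) := by
  obtain ⟨a, ha⟩ := h
  exact ⟨a, by push_cast; rw [ha]; ring⟩

lemma ne_zero (h : Od x) : x ≠ 0 := by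
  rintro rfl
  obtain ⟨a, ha⟩ := h
  have : (2 : ℤ_[2]) * 0 = 1 + 2 * a := by
    have : ((0 : ℤ_[2]) : ℚ_[2]) = ((1 + 2 * a : ℤ_[2]) : ℚ_[2]) := by push_cast; simpa using ha
    rw [mul_zero]; exact Subtype.ext this
  exact not_even_odd this

lemma add (h : Od x) (hy : D 1 y) : Od (x + y) := by
  obtain ⟨a, ha⟩ := h; obtain ⟨b, hb⟩ := hy
  exact ⟨a + b, by push_cast; rw [ha, hb]; ring⟩

lemma mul (h : Od x) (hy : Od y) : Od (x * y) := by
  obtain ⟨a, ha⟩ := h; obtain ⟨b, hb⟩ := hy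
  exact ⟨a + b + 2 * a * b, by push_cast; rw [ha, hb]; ring⟩

lemma inv (h : Od x) : Od x⁻¹ := by
  have h0 := h.ne_zero
  obtain ⟨a, ha⟩ := h
  obtain ⟨m, hm⟩ := odd_inv a
  refine ⟨m, ?_⟩
  have h1 : (1 + 2 * (a : ℚ_[2])) * (1 + 2 * m) = 1 := by exact_mod_cast congrArg (fun z : ℤ_[2] => (z : ℚ_[2])) hm
  push_cast
  rw [ha, inv_eq_of_mul_eq_one_right h1]

lemma div (h : Od x) (hy : Od y) : Od (x / y) := by
  rw [div_eq_mul_inv]; exact h.mul hy.inv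
end Od

lemma D.par {x : ℚ} (h : D 0 x) : D 1 x ∨ Od x := by
  obtain ⟨z, hz⟩ := h
  rcases _root_.par z with ⟨k, rfl⟩ | ⟨k, rfl⟩
  · exact Or.inl ⟨k, by rw [hz]; push_cast; ring⟩
  · exact Or.inr ⟨k, by rw [hz]; push_cast; ring⟩

lemma D.not_od {x : ℚ} (h : D 1 x) (ho : Od x) : False := by
  obtain ⟨a, ha⟩ := h; obtain ⟨b, hb⟩ := ho
  rw [ha] at hb
  exact not_even_odd (a := a) (b := b) (by
    have : ((2 * a : ℤ_[2]) : ℚ_[2]) = ((1 + 2 * b : ℤ_[2]) : ℚ_[2]) := by push_cast; linear_combination hb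
    exact Subtype.ext this)

lemma Od.mod4 {x : ℚ} (h : Od x) : D 2 (x - 1) ∨ D 2 (x + 1) := by
  obtain ⟨a, ha⟩ := h
  rcases _root_.par a with ⟨k, rfl⟩ | ⟨k, rfl⟩
  · exact Or.inl ⟨k, by push_cast; rw [ha]; push_cast; ring⟩
  · exact Or.inr ⟨1 + k, by push_cast; rw [ha]; push_cast; ring⟩

lemma Od.of_sq {x : ℚ} (h : D 0 x) (h2 : Od (x ^ 2)) : Od x := by
  rcases h.par with h1 | h1
  · exact ((h1.mul' h1 (n := 1) (by norm_num)).not_od (by rwa [pow_two] at h2)).elim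
  · exact h1

lemma D.of_sq {x : ℚ} (h2 : D 0 (x ^ 2)) : D 0 x := by
  rw [D_iff] at h2 ⊢
  push_cast at h2
  rw [norm_pow, pow_zero] at h2
  rw [pow_zero]
  exact (pow_le_one_iff_of_nonneg (norm_nonneg _) two_ne_zero).mp h2

/-! ### Halving a divisor -/

lemma OnJ.neg {d0 d1 b0 b1 : ℚ} (h : OnJ d0 d1 b0 b1) : OnJ d0 d1 (-b0) (-b1) := by
  obtain ⟨c0, c1, c2, h⟩ := h
  exact ⟨c0, c1, c2, by linear_combination h.e0, by linear_combination h.e1, by linear_combination h.e2, h.e3, h.e4⟩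

/-- The coefficients of `F = (2 + 6 Y + (5 + x₀) Y² + x₁ Y³)² + a Y² (c₀ + c₁ Y + c₂ Y²)`. The cubic, called `B`
below, passes through the divisor of `a` and has double contact with the curve at `P₀ = (0, 2)`. -/
structure Half (d0 d1 x0 x1 c0 c1 c2 : ℚ) : Prop where
  h0 : d0 * c0 = -4 * x0
  h1 : d1 * c0 + d0 * c1 = -4 * x1 - 12 * x0
  h2 : c0 = 1 - 12 * x1 - 10 * x0 - x0 ^ 2 - d1 * c1 - d0 * c2
  h3 : c1 = 2 - 10 * x1 - 2 * x0 * x1 - d1 * c2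
  h4 : c2 = - x1 ^ 2

/-- The cubic `B` is `±b` modulo `a` and `2 + 6 Y` modulo `Y²`; it exists, with 2-adically integral data,
because `b` agrees with `2 + 6 Y + 5 Y²` modulo `a` up to the sign and a small error. -/
lemma OnJ.half {d0 d1 t0 t1 : ℚ} (H : OnJ d0 d1 (2 * t0) (2 * t1)) (h0 : D 3 d0) (h1 : D 3 d1)
    (ht0 : D 0 t0) (ht1 : D 0 t1) : ∃ x0 x1 c0 c1 c2, D 1 x0 ∧ D 1 x1 ∧ Half d0 d1 x0 x1 c0 c1 c2 := by
  -- normalise the sign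
  wlog hs : D 2 (t0 - 1) generalizing t0 t1
  · refine this (t0 := -t0) (t1 := -t1) ?_ ht0.neg ht1.neg ?_
    · have := H.neg; convert this using 1 <;> ring
    · obtain ⟨c0, c1, c2, H⟩ := H
      have k2 : D 1 c2 := by
        rw [show c2 = 2 * (13 - d1) by linear_combination -H.e4]
        exact D.two.mul' ((D.int 13).sub (h1.mono (by norm_num))) (by norm_num)
      have k1 : D 2 c1 := by
        rw [show c1 = 2 * 2 * 15 - 2 * d0 - d1 * c2 by linear_combination -H.e3]
        exact (((D.two.mul D.two).mul (D.int 15)).sub (D.two.mul' h0 (by norm_num))).sub (h1.mul' k2 (by norm_num))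
      have k0 : D 2 c0 := by
        rw [show c0 = 2 * 2 * (14 - t1 * t1) - d0 * c2 - d1 * c1 by linear_combination - H.e2]
        exact (((D.two.mul D.two).mul ((D.int 14).sub (ht1.mul ht1))).sub (h0.mul' k2 (by norm_num))).sub (h1.mul' k1 (by norm_num))
      have k3 : D 3 (t0 ^ 2 - 1) := by
        apply D.of_two_mul (j := 2)
        rw [show 2 ^ 2 * (t0 ^ 2 - 1) = -(d0 * c0) by linear_combination -H.e0]
        exact (h0.mul' k0 (by norm_num)).neg
      have k4 : Od t0 := Od.of_sq ht0 (D.od_of_sub (k3.mono (by norm_num)))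
      rcases k4.mod4 with h | h
      · exact absurd h hs
      · convert h.neg using 1; ring
  obtain ⟨c0, c1, c2, H⟩ := H
  have k2 : D 1 c2 := by
    rw [show c2 = 2 * (13 - d1) by linear_combination -H.e4]
    exact D.two.mul' ((D.int 13).sub (h1.mono (by norm_num))) (by norm_num)
  have k1 : D 2 c1 := by
    rw [show c1 = 2 * 2 * 15 - 2 * d0 - d1 * c2 by linear_combination -H.e3]
    exact (((D.two.mul D.two).mul (D.int 15)).sub (D.two.mul' h0 (by norm_num))).sub (h1.mul' k2 (by norm_num))
  have k0 : D 2 c0 := by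
    rw [show c0 = 2 * 2 * (14 - t1 * t1) - d0 * c2 - d1 * c1 by linear_combination - H.e2]
    exact (((D.two.mul D.two).mul ((D.int 14).sub (ht1.mul ht1))).sub (h0.mul' k2 (by norm_num))).sub (h1.mul' k1 (by norm_num))
  have k3 : D 2 (t1 - 3) := by
    have k4 : D 2 (t0 * t1 - 3) := by
      apply D.of_two_mul (j := 3)
      rw [show 2 ^ 3 * (t0 * t1 - 3) = -(d0 * c1) - d1 * c0 by linear_combination -H.e1]
      exact (h0.mul' k1 (by norm_num)).neg.sub (h1.mul' k0 (by norm_num))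
    rw [show t1 - 3 = t0 * t1 - 3 - (t0 - 1) * t1 by ring]
    exact k4.sub (hs.mul' ht1 (by norm_num))
  obtain ⟨U0, hU0⟩ : ∃ U0, U0 = (t0 + 1) / 2 - 5 / 4 * d0 := ⟨_, rfl⟩
  obtain ⟨U1, hU1⟩ : ∃ U1, U1 = (t1 + 3) / 2 - 5 / 4 * d1 := ⟨_, rfl⟩
  have o0 : Od U0 := by
    apply D.od_of_sub
    apply D.of_two_mul (j := 2)
    rw [show 2 ^ 2 * (U0 - 1) = 2 * (t0 - 1) - 5 * d0 by rw [hU0]; ring]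
    exact (D.two.mul' hs (by norm_num)).sub ((D.int 5).mul' h0 (by norm_num))
  have o1 : D 0 U1 := by
    apply D.of_two_mul (j := 2)
    rw [show 2 ^ 2 * U1 = 2 * (t1 - 3) + 2 * 2 * 3 - 5 * d1 by rw [hU1]; ring]
    exact ((D.two.mul' k3 (by norm_num)).add ((D.two.mul D.two).mul' (D.int 3) (by norm_num))).sub ((D.int 5).mul' h1 (by norm_num))
  obtain ⟨n, hn⟩ : ∃ n, n = U0 * U0 - d1 * (U0 * U1) + d0 * (U1 * U1) := ⟨_, rfl⟩
  have on : Od n := by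
    rw [hn]
    have := (o0.mul o0).add ((h0.mul' (o1.mul o1) (n := 1) (by norm_num)).sub (h1.mul' (o0.D0.mul o1) (n := 1) (by norm_num)))
    convert this using 1; ring
  have n0 := on.ne_zero
  -- The correction `χ = x0 + x1 Y` is `S (U0 - d1 U1 - U1 Y) / (4 n)`, with `S = Y² (1 + 2 Y) mod a`.
  obtain ⟨S0, hS0⟩ : ∃ S0, S0 = -d0 + 2 * d0 * d1 := ⟨_, rfl⟩
  obtain ⟨S1, hS1⟩ : ∃ S1, S1 = -d1 + 2 * (d1 * d1 - d0) := ⟨_, rfl⟩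
  have s0 : D 3 S0 := by
    rw [hS0]
    exact h0.neg.add ((D.two.mul h0).mul' h1 (by norm_num))
  have s1 : D 3 S1 := by
    rw [hS1]
    exact h1.neg.add (D.two.mul' ((h1.mul' h1 (n := 3) (by norm_num)).sub h0) (by norm_num))
  obtain ⟨x0, hx0⟩ : ∃ x0, x0 = (S0 * (U0 - d1 * U1) + d0 * (S1 * U1)) / n / 4 := ⟨_, rfl⟩
  obtain ⟨x1, hx1⟩ : ∃ x1, x1 = (S1 * (U0 - d1 * U1) - S0 * U1 + d1 * (S1 * U1)) / n / 4 := ⟨_, rfl⟩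
  have dx0 : D 1 x0 := by
    apply D.of_two_mul (j := 2)
    rw [show 2 ^ 2 * x0 = (S0 * (U0 - d1 * U1) + d0 * (S1 * U1)) / n by rw [hx0]; ring]
    exact ((s0.mul' (o0.D0.sub (h1.mul' o1 (by norm_num))) (by norm_num)).add (h0.mul' (s1.mul o1) (by norm_num))).div_od on
  have dx1 : D 1 x1 := by
    apply D.of_two_mul (j := 2)
    rw [show 2 ^ 2 * x1 = (S1 * (U0 - d1 * U1) - S0 * U1 + d1 * (S1 * U1)) / n by rw [hx1]; ring]
    exact (((s1.mul' (o0.D0.sub (h1.mul' o1 (by norm_num))) (by norm_num)).sub (s0.mul' o1 (by norm_num))).add (h1.mul' (s1.mul o1) (by norm_num))).div_od on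
  have G0 : 4 * (x0 * U0 - d0 * x1 * U1) = S0 := by
    rw [hx0, hx1]; field_simp; rw [hn]; ring
  have G1 : 4 * (x0 * U1 + x1 * U0 - d1 * x1 * U1) = S1 := by
    rw [hx0, hx1]; field_simp; rw [hn]; ring
  -- `Y² χ ≡ b - B₀ mod a`
  obtain ⟨R0, hR0⟩ : ∃ R0, R0 = 2 * t0 - 2 + 5 * d0 + d0 * x0 - d0 * d1 * x1 := ⟨_, rfl⟩
  obtain ⟨R1, hR1⟩ : ∃ R1, R1 = 2 * t1 - 6 + 5 * d1 + d1 * x0 - (d1 ^ 2 - d0) * x1 := ⟨_, rfl⟩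
  have q0 : R0 * U0 - d0 * R1 * U1 = 0 := by
    simp only [hU0, hU1, hS0, hS1, hR0, hR1] at G0 G1 ⊢
    linear_combination (1 / 4) * (-(H.e0 - d0 * H.e2 + d0 * d1 * H.e3 - d0 * (d1 ^ 2 - d0) * H.e4)) - 1 / 4 * (-d0 * G0 + d0 * d1 * G1)
  have q1 : R0 * U1 + R1 * U0 - d1 * R1 * U1 = 0 := by
    simp only [hU0, hU1, hS0, hS1, hR0, hR1] at G0 G1 ⊢
    linear_combination (1 / 4) * (-(H.e1 - d1 * H.e2 + (d1 ^ 2 - d0) * H.e3 + (2 * d0 * d1 - d1 ^ 3) * H.e4)) - 1 / 4 * (-d1 * G0 + (d1 ^ 2 - d0) * G1)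
  have r0 : R0 = 0 := by
    apply (mul_eq_zero.mp (show n * R0 = 0 by rw [hn]; linear_combination (U0 - d1 * U1) * q0 + d0 * U1 * q1)).resolve_left n0
  have r1 : R1 = 0 := by
    apply (mul_eq_zero.mp (show n * R1 = 0 by rw [hn]; linear_combination U0 * q1 - U1 * q0)).resolve_left n0
  refine ⟨x0, x1, 1 - 12 * x1 - 10 * x0 - x0 ^ 2 - d1 * (2 - 10 * x1 - 2 * x0 * x1 - d1 * (- x1 ^ 2)) - d0 * (- x1 ^ 2),
     2 - 10 * x1 - 2 * x0 * x1 - d1 * (- x1 ^ 2), -x1 ^ 2, dx0, dx1, ?_, ?_, rfl, rfl, rfl⟩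
  · simp only [hU0, hU1, hS0, hS1, hR0, hR1] at G0 G1 r0 r1
    linear_combination G0 - x0 * r0 + d0 * x1 * r1
  · simp only [hU0, hU1, hS0, hS1, hR0, hR1] at G0 G1 r0 r1
    linear_combination G1 - (x0 * r1 + x1 * r0 - d1 * x1 * r1)

section
variable {K : Type} [Field K] [NumberField K] {p : K} {v : K → ℝ}

lemma Half.eval {d0 d1 x0 x1 c0 c1 c2 : ℚ} (H : Half d0 d1 x0 x1 c0 c1 c2) (Y : K) :
    2 * (1 + Y) * (Y ^ 4 + 12 * Y ^ 3 + 18 * Y ^ 2 + 10 * Y + 2) =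
      (2 + 6 * Y + (5 + x0) * Y ^ 2 + x1 * Y ^ 3) ^ 2 +
      (Y ^ 2 + d1 * Y + d0) * Y ^ 2 * (c0 + c1 * Y + c2 * Y ^ 2) := by
  have h0 : (d0 : K) * c0 = -4 * x0 := by exact_mod_cast H.h0
  have h1 : (d1 : K) * c0 + d0 * c1 = -4 * x1 - 12 * x0 := by exact_mod_cast H.h1
  have h2 : (c0 : K) = 1 - 12 * x1 - 10 * x0 - x0 ^ 2 - d1 * c1 - d0 * c2 := by exact_mod_cast H.h2
  have h3 : (c1 : K) = 2 - 10 * x1 - 2 * x0 * x1 - d1 * c2 := by exact_mod_cast H.h3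
  have h4 : (c2 : K) = - x1 ^ 2 := by exact_mod_cast H.h4
  linear_combination (-Y^2) * h0 + (-Y^3) * h1 + (-Y^4) * h2 + (-Y^5) * h3 - Y ^ 6 * h4

/-- Up to sign, a square root of `a(π)` is congruent to `π` modulo `π⁷`, since the square root divided by
`π` has a square close to `1`. -/
lemma exists_root_near (hv : AV v) (hp : IsRt p) {d0 d1 : ℚ} (h0 : D 3 d0) (h1 : D 3 d1)
    (hz : ∃ z : K, p ^ 2 + d1 * p + d0 = z ^ 2) :
    ∃ z : K, p ^ 2 + d1 * p + d0 = z ^ 2 ∧ v (z - p) ≤ v p ^ 7 := by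
  obtain ⟨z, hz⟩ := hz
  by_cases h2 : v (z - p) ≤ v p ^ 7
  · exact ⟨z, hz, h2⟩
  by_cases h3 : v (z + p) ≤ v p ^ 7
  · refine ⟨-z, by rw [hz]; ring, ?_⟩
    rw [← hv.neg]; convert h3 using 2; ring
  exfalso
  push Not at h2 h3
  have hr := hv.p_pos hp
  have hr1 := hv.p_lt hp
  have hprod : v (z - p) * v (z + p) ≤ v p ^ 12 := by
    rw [← hv.mul, show (z - p) * (z + p) = d1 * p + d0 by linear_combination -hz]
    refine hv.add_le ?_ (hv.of_D hp h0)
    rw [hv.mul]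
    exact (mul_le_of_le_one_right (hv.nonneg _) hr1.le).trans (hv.of_D hp h1)
  have h7 : (0 : ℝ) < v p ^ 7 := by positivity
  have e12 : v p ^ 12 = v p ^ 7 * v p ^ 5 := by ring
  have l1 : v (z - p) < v p ^ 5 := by
    by_contra h; push Not at h
    have : v p ^ 5 * v p ^ 7 < v (z - p) * v (z + p) := by
      apply mul_lt_mul' h h3 h7.le (lt_of_lt_of_le (by positivity) h)
    linarith
  have l2 : v (z + p) < v p ^ 5 := by
    by_contra h; push Not at h
    have : v p ^ 7 * v p ^ 5 < v (z - p) * v (z + p) := by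
      apply mul_lt_mul h2 h (by positivity) (hv.nonneg _)
    linarith
  have l3 := hv.add_lt l2 (by rw [hv.neg]; exact l1 : v (-(z - p)) < v p ^ 5)
  rw [show z + p + -(z - p) = 2 * p by ring, hv.mul, hv.two, ← hv.p4 hp] at l3
  have : v p ^ 4 * v p = v p ^ 5 := by ring
  linarith

/-- The square root of `a(-1)` with the sign making it `1` modulo `4`. -/
lemma exists_rat_root {d0 d1 : ℚ} (h0 : D 3 d0) (h1 : D 3 d1) (hq : ∃ q : ℚ, 1 - d1 + d0 = q ^ 2) :
    ∃ q : ℚ, 1 - d1 + d0 = q ^ 2 ∧ D 2 (q - 1) := by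
  obtain ⟨q, hq⟩ := hq
  have h2 : Od (q ^ 2) := by
    rw [← hq]
    apply D.od_of_sub
    rw [show 1 - d1 + d0 - 1 = d0 - d1 by ring]
    exact (h0.sub h1).mono (by norm_num)
  rcases (Od.of_sq (D.of_sq h2.D0) h2).mod4 with h | h
  · exact ⟨q, hq, h⟩
  · refine ⟨-q, by rw [hq]; ring, ?_⟩
    convert h.neg using 1; ring

/-- The coefficients of `(d + e Y + ℓ Y²)² = a Y² + 2 B s - s² c` with `s = s₀ + s₁ Y` and `a`, `B`, `c` as in
`Half`. Multiplication by `c` gives `F - (B - s c)² = c (d + e Y + ℓ Y²)²`, so that `a' = d + e Y + ℓ Y²`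
describes a divisor `D'` with `2 (D' - 2 P₀) ~ D - 2 P₀` up to sign. -/
structure Step (d0 d1 x0 x1 c0 c1 c2 s0 s1 d e l : ℚ) : Prop where
  y0 : d ^ 2 = 4 * s0 - s0 ^ 2 * c0
  y1 : 2 * d * e = 12 * s0 + 4 * s1 - (s0 ^ 2 * c1 + 2 * s0 * s1 * c0)
  y2 : e ^ 2 + 2 * d * l = d0 + 2 * (s0 * (5 + x0) + 6 * s1) - (s0 ^ 2 * c2 + 2 * s0 * s1 * c1 + s1 ^ 2 * c0)
  y3 : 2 * e * l = d1 + 2 * (s0 * x1 + s1 * (5 + x0)) - (2 * s0 * s1 * c2 + s1 ^ 2 * c1)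
  y4 : l ^ 2 = 1 + 2 * s1 * x1 - s1 ^ 2 * c2

/-- In the algebra `ℚ[Y] / (1 + Y) g` take a square root `θ` of `a Y²`, which exists by the square
conditions, and put `κ = B / θ`, so that `κ² = -c`. The linear polynomial `s` is determined by asking
that the representative of `θ + s κ` of degree at most `4` have degree at most `2`; its square is then
`a Y² + 2 B s - s² c` identically, and the choice of the roots makes all the data 2-adically small. -/
theorem exists_step (hv : AV v) (hp : IsRt p) (hK : Module.finrank ℚ K = 4) {d0 d1 x0 x1 c0 c1 c2 : ℚ}
    (h0 : D 3 d0) (h1 : D 3 d1) (hx0 : D 1 x0) (hx1 : D 1 x1)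
    (H : Half d0 d1 x0 x1 c0 c1 c2)
    (hz : ∃ z : K, p ^ 2 + d1 * p + d0 = z ^ 2) (hq : ∃ q : ℚ, 1 - d1 + d0 = q ^ 2) :
    ∃ s0 s1 d e l : ℚ, D 2 s0 ∧ D 2 s1 ∧ D 2 d ∧ D 2 e ∧ D 2 (l - 1) ∧
      Step d0 d1 x0 x1 c0 c1 c2 s0 s1 d e l := by
  obtain ⟨z, hz, hzp⟩ := exists_root_near hv hp h0 h1 hz
  obtain ⟨q, hq, hq1⟩ := exists_rat_root h0 h1 hq
  have hr := hv.p_pos hp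
  have hr1 := hv.p_lt hp
  have oq : Od q := D.od_of_sub (hq1.mono (by norm_num))
  have q0 := oq.ne_zero
  have hp0 : p ≠ 0 := by
    rintro rfl; rw [hv.zero'] at hr; exact lt_irrefl _ hr
  have vz : v z = v p := by
    rw [show z = p + (z - p) by ring]
    apply hv.add_eq
    refine lt_of_le_of_lt hzp ?_
    calc v p ^ 7 < v p ^ 1 := pow_lt_pow_right_of_lt_one₀ hr hr1 (by norm_num)
      _ = v p := pow_one _
  have hz0 : z ≠ 0 := by
    rintro rfl; rw [hv.zero'] at vz; linarith
  -- `θ(p) = p z`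
  obtain ⟨e0, e1, e2, e3, he⟩ := hp.span hK (p * (z - p))
  have ve : v (p * (z - p)) ≤ v p ^ 8 := by
    rw [hv.mul]
    calc v p * v (z - p) ≤ v p * v p ^ 7 := mul_le_mul_of_nonneg_left hzp hr.le
      _ = v p ^ 8 := by ring
  obtain ⟨de0, de1, de2, de3⟩ := hv.coords hp 2 (by rw [← he]; exact ve)
  -- `κ(p) = B(p) / θ(p)`
  obtain ⟨k, hk⟩ : ∃ k : K, k * (p * z) = 2 + 6 * p + (5 + x0) * p ^ 2 + x1 * p ^ 3 :=
    ⟨_, div_mul_cancel₀ _ (mul_ne_zero hp0 hz0)⟩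
  obtain ⟨n0, n1, n2, n3, hn⟩ := hp.span hK (k - (7 + 24 * p + 23 * p ^ 2 + 2 * p ^ 3))
  have vk : v (k - (7 + 24 * p + 23 * p ^ 2 + 2 * p ^ 3)) ≤ v p ^ 4 := by
    have a1 : (k - (7 + 24 * p + 23 * p ^ 2 + 2 * p ^ 3)) * (p * z) =
        (x0 + x1 * p) * p ^ 2 - (7 + 24 * p + 23 * p ^ 2 + 2 * p ^ 3) * (p * (z - p)) := by
      linear_combination hk - (2 * p - 1) * hp.eq
    have a2 : v (7 + 24 * p + 23 * p ^ 2 + 2 * p ^ 3) ≤ 1 := by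
      have : IsIntegral ℤ (7 + 24 * p + 23 * p ^ 2 + 2 * p ^ 3) := by
        have i := hp.isIntegral
        have hn (n : ℕ) : IsIntegral ℤ (n : K) := by simpa using (isIntegral_algebraMap (R := ℤ) (A := K) (x := (n : ℤ)))
        exact ((((hn 7).add ((hn 24).mul i)).add ((hn 23).mul (i.pow 2))).add ((hn 2).mul (i.pow 3)))
      exact hv.integral this
    have a3 : v (x0 + x1 * p) ≤ v p ^ 4 := by
      refine hv.add_le (hv.of_D hp hx0) ?_
      rw [hv.mul]
      exact (mul_le_of_le_one_right (hv.nonneg _) hr1.le).trans (hv.of_D hp hx1)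
    have a4 : v ((k - (7 + 24 * p + 23 * p ^ 2 + 2 * p ^ 3)) * (p * z)) ≤ v p ^ 6 := by
      rw [a1]
      refine hv.sub_le ?_ ?_
      · rw [hv.mul, hv.pow]
        calc _ ≤ v p ^ 4 * v p ^ 2 := mul_le_mul_of_nonneg_right a3 (by positivity)
          _ = _ := by ring
      · rw [hv.mul]
        calc _ ≤ 1 * v p ^ 8 := mul_le_mul a2 ve (hv.nonneg _) zero_le_one
          _ ≤ _ := by rw [one_mul]; exact pow_le_pow_of_le_one hr.le hr1.le (by norm_num)
    rw [hv.mul, hv.mul, vz] at a4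
    refine le_of_mul_le_mul_right (a := v p * v p) ?_ (by positivity)
    calc _ ≤ _ := a4
      _ = _ := by ring
  obtain ⟨dn0, dn1, dn2, dn3⟩ := hv.coords hp 1 (by rw [← hn]; simpa using vk)
  have hsq : k ^ 2 = -(c0 + c1 * p + c2 * p ^ 2) := by
    have h := H.eval p
    have : (k ^ 2 + (c0 + c1 * p + c2 * p ^ 2)) * (p * z) ^ 2 = 0 := by
      linear_combination (k * (p * z) + (2 + 6 * p + (5 + x0) * p ^ 2 + x1 * p ^ 3)) * hk - h
        + 2 * (1 + p) * hp.eq - p ^ 2 * (c0 + c1 * p + c2 * p ^ 2) * hz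
    have := (mul_eq_zero.mp this).resolve_right (pow_ne_zero 2 (mul_ne_zero hp0 hz0))
    linear_combination this
  -- coordinates in `ℚ[Y] / (1 + Y) g`
  obtain ⟨C, hC⟩ : ∃ C, C = 1 + (e0 - e1 + e2 - e3) - q := ⟨_, rfl⟩
  have dC : D 2 C := by
    rw [show C = (e0 - e1 + e2 - e3) - (q - 1) by rw [hC]; ring]
    exact (((de0.sub de1).add de2).sub de3).sub hq1
  obtain ⟨E, hE⟩ : ∃ E, E = 4 + (n0 - n1 + n2 - n3) - (1 + x0 - x1) / q := ⟨_, rfl⟩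
  have oE : Od E := by
    have o1 : Od ((1 + x0 - x1) / q) := by
      refine Od.div (D.od_of_sub ?_) oq
      rw [show 1 + x0 - x1 - 1 = x0 - x1 by ring]
      exact hx0.sub hx1
    have d1 : D 1 (4 + (n0 - n1 + n2 - n3)) := by
      have : D 1 4 := by
        have := D.two.mul' (D.int 2) (n := 1) (by norm_num); norm_num at this; exact this
      exact this.add (((dn0.sub dn1).add dn2).sub dn3)
    have dm : D 1 (-2 * ((1 + x0 - x1) / q)) := D.two.neg.mul' o1.D0 (by norm_num)
    have := o1.add (d1.add dm)
    convert this using 1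
    rw [hE]; ring
  obtain ⟨k0, hk0⟩ : ∃ k0, k0 = 7 + n0 + 2 * E := ⟨_, rfl⟩
  obtain ⟨k1, hk1⟩ : ∃ k1, k1 = 24 + n1 + 10 * E := ⟨_, rfl⟩
  obtain ⟨k2, hk2⟩ : ∃ k2, k2 = 23 + n2 + 18 * E := ⟨_, rfl⟩
  obtain ⟨k3, hk3⟩ : ∃ k3, k3 = 2 + n3 + 12 * E := ⟨_, rfl⟩
  obtain ⟨t0, ht0⟩ : ∃ t0, t0 = e0 + 2 * C := ⟨_, rfl⟩
  obtain ⟨t1, ht1⟩ : ∃ t1, t1 = e1 + 10 * C := ⟨_, rfl⟩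
  obtain ⟨t2, ht2⟩ : ∃ t2, t2 = 1 + e2 + 18 * C := ⟨_, rfl⟩
  obtain ⟨t3, ht3⟩ : ∃ t3, t3 = e3 + 12 * C := ⟨_, rfl⟩
  have I (n : ℤ) {k : ℕ} {x : ℚ} (h : D k x) : D k (n * x) := (D.int n).mul' h (by simp)
  have dk0 : D 0 k0 := by rw [hk0]; exact ((D.int 7).add (dn0.mono (by norm_num))).add (I 2 oE.D0)
  have dk1 : D 0 k1 := by rw [hk1]; exact ((D.int 24).add (dn1.mono (by norm_num))).add (I 10 oE.D0)
  have dk2 : D 0 k2 := by rw [hk2]; exact ((D.int 23).add (dn2.mono (by norm_num))).add (I 18 oE.D0)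
  have dk3 : D 1 k3 := by
    rw [show k3 = 2 + n3 + 2 * (6 * E) by rw [hk3]; ring]
    exact (D.two.add dn3).add (D.two.mul' (I 6 oE.D0) (by norm_num))
  have ok2 : Od k2 := by
    apply D.od_of_sub
    rw [show k2 - 1 = 2 * (11 + 9 * E) + n2 by rw [hk2]; ring]
    exact (D.two.mul' ((D.int 11).add (I 9 oE.D0)) (by norm_num)).add dn2
  have dt0 : D 2 t0 := by rw [ht0]; exact de0.add (I 2 dC)
  have dt1 : D 2 t1 := by rw [ht1]; exact de1.add (I 10 dC)
  have dt2 : D 2 (t2 - 1) := by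
    rw [show t2 - 1 = e2 + 18 * C by rw [ht2]; ring]; exact de2.add (I 18 dC)
  have dt3 : D 2 t3 := by rw [ht3]; exact de3.add (I 12 dC)
  obtain ⟨det, hdet⟩ : ∃ det, det = k3 * (k3 - 13 * E) - E * (k2 - 30 * E) := ⟨_, rfl⟩
  have odet : Od det := by
    have := (oE.mul ok2).add (((dk3.mul' ((dk3.mono (by norm_num)).sub (I 13 oE.D0)) (n := 1) (by norm_num)).add
      (D.two.mul' (I 15 (oE.D0.mul oE.D0)) (n := 1) (by norm_num))).sub (D.two.mul' (oE.D0.mul dk2) (n := 1) (by norm_num)))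
    convert this using 1
    rw [hdet]; push_cast; ring
  have det0 := odet.ne_zero
  obtain ⟨s0, hs0⟩ : ∃ s0, s0 = (C * (k2 - 30 * E) - t3 * (k3 - 13 * E)) / det := ⟨_, rfl⟩
  obtain ⟨s1, hs1⟩ : ∃ s1, s1 = (E * t3 - k3 * C) / det := ⟨_, rfl⟩
  have ds0 : D 2 s0 := by
    rw [hs0]
    exact ((dC.mul' (dk2.sub (I 30 oE.D0)) (by norm_num)).sub
      (dt3.mul' ((dk3.mono (by norm_num)).sub (I 13 oE.D0)) (by norm_num))).div_od odet
  have ds1 : D 2 s1 := by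
    rw [hs1]
    exact ((oE.D0.mul' dt3 (by norm_num)).sub (dk3.mul' dC (by norm_num))).div_od odet
  have E3 : t3 + s0 * k3 + s1 * (k2 - 30 * E) = 0 := by
    rw [hs0, hs1]; field_simp; rw [hdet]; ring
  have E4 : C + s0 * E + s1 * (k3 - 13 * E) = 0 := by
    rw [hs0, hs1]; field_simp; rw [hdet]; ring
  obtain ⟨d, hd⟩ : ∃ d, d = t0 + s0 * k0 - 2 * (s1 * E) := ⟨_, rfl⟩
  obtain ⟨e, he'⟩ : ∃ e, e = t1 + s0 * k1 + s1 * (k0 - 12 * E) := ⟨_, rfl⟩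
  obtain ⟨l, hl⟩ : ∃ l, l = t2 + s0 * k2 + s1 * (k1 - 28 * E) := ⟨_, rfl⟩
  -- the value at `-1`
  have F1 : d - e + l = q + (s0 - s1) * ((1 + x0 - x1) / q) := by
    rw [hd, he', hl, hk0, hk1, hk2, ht0, ht1, ht2]
    rw [hk3] at E3 E4; rw [hk2, ht3] at E3
    have hE' : (1 + x0 - x1) / q = 4 + (n0 - n1 + n2 - n3) - E := by rw [hE]; ring
    rw [hE']
    linear_combination E3 - E4 - hC
  -- the value at `p`
  have F2 : (d : K) + e * p + l * p ^ 2 = p * z + (s0 + s1 * p) * k := by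
    have hk' : k = (7 + 24 * p + 23 * p ^ 2 + 2 * p ^ 3) + (n0 + n1 * p + n2 * p ^ 2 + n3 * p ^ 3) := by
      rw [← hn]; ring
    have hz' : p * z = p ^ 2 + (e0 + e1 * p + e2 * p ^ 2 + e3 * p ^ 3) := by rw [← he]; ring
    have E3' : (t3 : K) + s0 * k3 + s1 * (k2 - 30 * E) = 0 := by exact_mod_cast E3
    have E4' : (C : K) + s0 * E + s1 * (k3 - 13 * E) = 0 := by exact_mod_cast E4
    rw [hk', hz', hd, he', hl]
    rw [hk3] at E3' E4'; rw [hk2, ht3] at E3'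
    rw [hk0, hk1, hk2, ht0, ht1, ht2]
    push_cast at E3' E4' ⊢
    have hg := hp.eq
    linear_combination (-p ^ 3) * E3' - p ^ 4 * E4' + (C + (s0 + s1 * p) * E - s1 * E * (1 + p)) * hg
  have G1 : (d - e + l) ^ 2 = q ^ 2 + 2 * (s0 - s1) * (1 + x0 - x1) - (s0 - s1) ^ 2 * (c0 - c1 + c2) := by
    have h5 : (1 + x0 - x1) ^ 2 = - q ^ 2 * (c0 - c1 + c2) := by
      rw [← hq]
      linear_combination H.h0 - H.h1 + H.h2 - H.h3 + H.h4
    rw [F1]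
    field_simp
    linear_combination (s0 - s1) ^ 2 * h5
  have G2 : ((d : K) + e * p + l * p ^ 2) ^ 2 = p ^ 2 * (p ^ 2 + d1 * p + d0) +
      2 * (s0 + s1 * p) * (2 + 6 * p + (5 + x0) * p ^ 2 + x1 * p ^ 3) - (s0 + s1 * p) ^ 2 * (c0 + c1 * p + c2 * p ^ 2) := by
    rw [F2, hz]
    linear_combination 2 * (s0 + s1 * p) * hk + (s0 + s1 * p) ^ 2 * hsq
  obtain ⟨z0, hz0⟩ : ∃ z, z = d ^ 2 - (4 * s0 - s0 ^ 2 * c0) := ⟨_, rfl⟩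
  obtain ⟨z1, hz1⟩ : ∃ z, z = 2 * d * e - (12 * s0 + 4 * s1 - (s0 ^ 2 * c1 + 2 * s0 * s1 * c0)) := ⟨_, rfl⟩
  obtain ⟨z2, hz2⟩ : ∃ z, z = e ^ 2 + 2 * d * l - (d0 + 2 * (s0 * (5 + x0) + 6 * s1) - (s0 ^ 2 * c2 + 2 * s0 * s1 * c1 + s1 ^ 2 * c0)) := ⟨_, rfl⟩
  obtain ⟨z3, hz3⟩ : ∃ z, z = 2 * e * l - (d1 + 2 * (s0 * x1 + s1 * (5 + x0)) - (2 * s0 * s1 * c2 + s1 ^ 2 * c1)) := ⟨_, rfl⟩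
  obtain ⟨z4, hz4⟩ : ∃ z, z = l ^ 2 - (1 + 2 * s1 * x1 - s1 ^ 2 * c2) := ⟨_, rfl⟩
  have J1 : z0 - z1 + z2 - z3 + z4 = 0 := by
    rw [hz0, hz1, hz2, hz3, hz4]; rw [← hq] at G1
    linear_combination G1
  have J2 : ((z0 - 2 * z4 : ℚ) : K) + ((z1 - 10 * z4 : ℚ) : K) * p + ((z2 - 18 * z4 : ℚ) : K) * p ^ 2 + ((z3 - 12 * z4 : ℚ) : K) * p ^ 3 = 0 := by
    have : (z0 : K) + z1 * p + z2 * p ^ 2 + z3 * p ^ 3 + z4 * p ^ 4 = 0 := by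
      rw [hz0, hz1, hz2, hz3, hz4]; push_cast
      linear_combination G2
    push_cast
    linear_combination this - z4 * hp.eq
  obtain ⟨j0, j1, j2, j3⟩ := hp.indep J2
  have j4 : z4 = 0 := by linear_combination j0 - j1 + j2 - j3 - J1
  rw [j4] at j0 j1 j2 j3
  refine ⟨s0, s1, d, e, l, ds0, ds1, ?_, ?_, ?_, ⟨?_, ?_, ?_, ?_, ?_⟩⟩
  · rw [hd]
    exact (dt0.add (ds0.mul' dk0 (by norm_num))).sub (I 2 (ds1.mul' oE.D0 (by norm_num)))
  · rw [he']
    exact (dt1.add (ds0.mul' dk1 (by norm_num))).add (ds1.mul' (dk0.sub (I 12 oE.D0)) (by norm_num))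
  · rw [show l - 1 = (t2 - 1) + s0 * k2 + s1 * (k1 - 28 * E) by rw [hl]; ring]
    exact (dt2.add (ds0.mul' dk2 (by norm_num))).add (ds1.mul' (dk1.sub (I 28 oE.D0)) (by norm_num))
  · linear_combination j0 - hz0
  · linear_combination j1 - hz1
  · linear_combination j2 - hz2
  · linear_combination j3 - hz3
  · linear_combination j4 - hz4

end

/-! ### Local analysis of the halving step -/

section
variable {R : Type*} [CommRing R]

/-- For `X₀` even the equations of `Loc` are used modulo `8 y²`; the `caseB` lemmas are the resulting
identities in a ring where `8 y² = 0` and the image `G` of the logarithm satisfies `2 G = 0`. -/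
lemma caseB1 {y y1 g g1 l li : R}
   (hy : y = 2 * y1) (hg : g = 2 * g1) (hl : l * li = 1)
   (h8 : 8 * y ^ 2 = 0) (hG : 2 * (5 * y * l - g * l - 2 * y ^ 2) = 0) :
   2 * y * g = 2 * y ^ 2 ∧ 2 * g ^ 2 = 2 * y ^ 2 := by
  have r1 : 2 * g = 10 * y - 4 * y ^ 2 * li := by linear_combination (-li)*hG + (10*y-2*g)*hl
  have r2 : 2 * y * g = 2 * y ^ 2 := by subst hy; linear_combination 2 * y1*r1 + (1 - y1*li)*h8
  have r4 : 2 * g ^ 2 = 2 * y ^ 2 := by subst hg; linear_combination (2 * g1)*r1+5*r2+(1 - g1*li)*h8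
  exact ⟨r2, r4⟩

/-- With the relation for `y g` from `caseB1`, the equation `y1` of `Loc` gives `w = -x`. -/
lemma caseB2 {y y1 x x1 w w1 g  c0 c1 c3 : R}
   (hy : y = 2 * y1) (h8 : 8 * y ^ 2 = 0) (hx : x = y ^ 2 * (1 + 4 * x1)) (hw : w = 2 * y * w1) (hc1 : c1 = 2 * c3)
   (e1 : 2 * y * g = 3 * x + w - 2 * x * w * c0 - x ^ 2 * c1) (r : 2 * y * g = 2 * y ^ 2) : w = - x := by
  have r1 : 2 * x * w = 0 := by subst hx hw hy; linear_combination y1*(1+4*x1)*w1*h8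
  have r2 : x ^ 2 * c1 = 0 := by subst hx hc1 hy; linear_combination y1 ^ 2*c3*(1+4*x1)^2*h8
  linear_combination -e1 + r + c0*r1 + r2 - x1*h8 - 2 * hx

/-- The coordinates `X₀` and `y` differ by an odd factor. -/
lemma caseB3 {y y1 x x1 w g l l1 c0 c1 c2 X0 ch0 : R}
   (hy : y = 2 * y1) (h8 : 8 * y ^ 2 = 0) (hx : x = y ^ 2 * (1 + 4 * x1)) (hw : w = -x)
   (hl : l = 1 + 4 * l1) (r : 2 * g ^ 2 = 2 * y ^ 2)
   (y2 : X0 = 2 * g ^ 2 + y * l - x * (5 + ch0) - 6 * w + 2 * (w ^ 2 * c0 + 2 * x * w * c1 + x ^ 2 * c2)) :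
   X0 = y * (1 + 2 * (2 * l1 + y + y1 * (1 + 4 * x1) * (1 - ch0))) := by
  have r1 : x * x * 2 = 0 := by subst hx hy; linear_combination y1 ^ 2 * (1 + 4 * x1) ^ 2 * h8
  subst hw hl
  linear_combination y2 + r + (c0 - 2 * c1 + c2) * r1 + (1 - ch0) * hx + y * (1 + 4 * x1) * (1 - ch0) * hy

/-- The logarithms before and after halving differ by an odd factor. -/
lemma caseB4 {y y1 x x1 w g l c0 c1 c2 c3 X0 X1 X2 ch0 ch1 q : R}
   (hy : y = 2 * y1) (h8 : 8 * y ^ 2 = 0) (hx : x = y ^ 2 * (1 + 4 * x1)) (hw : w = -x)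
   (hch0 : ch0 = - 2 * X0 * c0) (hch1 : ch1 = - 2 * X1 * c0 - 2 * X0 * c1 + 6 * X0 * c0) (hX : X0 = 2 * X2)
   (hX' : X0 = y * (1 + 2 * q)) (hc1 : c1 = 2 * c3)
   (r : 2 * g ^ 2 = 2 * y ^ 2)
   (y2 : X0 = 2 * g ^ 2 + y * l - x * (5 + ch0) - 6 * w + 2 * (w ^ 2 * c0 + 2 * x * w * c1 + x ^ 2 * c2))
   (y3 : X1 = g * l - x * ch1 - w * (5 + ch0) + 2 * (w ^ 2 * c1 + 2 * x * w * c2)) :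
   (5 * X0 - X1 - 4 * X0 ^ 2) * (1 - 2 * c0 * x) = 5 * y * l - g * l - 2 * y ^ 2 := by
  have r1 : x * x * 2 = 0 := by subst hx hy; linear_combination y1 ^ 2 * (1 + 4 * x1) ^ 2 * h8
  have r2 : 8 * x = 0 := by rw [hx]; linear_combination (1 + 4 * x1) * h8
  have r3 : 4 * X0 ^ 2 = 4 * y ^ 2 := by rw [hX']; linear_combination (2 * q + 2 * q ^ 2) * h8
  have r4 : 4 * x * X0 = 0 := by rw [hX]; linear_combination X2 * r2
  have r5 : x * ch0 = - 2 * x * X0 * c0 := by rw [hch0]; ring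
  have r6 : 2 * x * X0 * c1 = 0 := by rw [hc1]; linear_combination c3 * r4
  have r7 : x * ch1 = 2 * c0 * x * (5 * X0 - X1 - 4 * X0 ^ 2) := by
    rw [hch1]; linear_combination -r6 + (2 * X0 - 1) * c0 * r4
  subst hw
  linear_combination 5 * y2 - y3 + 5 * r + r7 - r3 + h8 - 6 * r5 + 3 * c0 * r4 + (5 * c0 - 10 * c1 + 5 * c2 - c1 + 2 * c2) * r1

/-- For `X₀` odd the equations of `Loc` are used modulo `8`. -/
lemma caseA {x t w y y1 g g1 l c0 c1 c2 X0 u X1 al ch0 ch1 : R} (h8 : (8 : R) = 0)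
    (hX0 : X0 = 1 + 2 * u) (hal : 5 * X0 - X1 - 4 * X0 ^ 2 = 2 * al)
    (hc0 : c0 = 1) (hch0 : ch0 = -2 * X0) (hch1 : ch1 = 2 * (2 * al)) (hc1 : c1 = 2) (hc2 : c2 = 0)
    (hx : x = 1 + 4 * t) (hy : y = 2 * y1) (hg : g = 2 * g1)
    (e1 : 2 * y * g = 3 * x + w - 2 * x * w * c0 - x ^ 2 * c1)
    (e2 : X0 = 2 * g ^ 2 + y * l - x * (5 + ch0) - 6 * w + 2 * (w ^ 2 * c0 + 2 * x * w * c1 + x ^ 2 * c2))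
    (e3 : X1 = g * l - x * ch1 - w * (5 + ch0) + 2 * (w ^ 2 * c1 + 2 * x * w * c2)) :
    5 * y * l - g * l - 2 * y ^ 2 = -(2 * al) := by
  have hw : w = 1 + 4 * t := by
    subst hx hy hg hc0 hc1
    linear_combination e1 - (y1 * g1 + 2 * (1 + 4 * t) * t + t * (w - (1 + 4 * t))) * h8
  subst hw hx hy hg hc0 hc1 hc2 hch0 hch1
  rw [hX0] at hal e2 e3
  linear_combination hal - 5 * e2 + e3 + (-2*al*t+2*u^2-5*g1^2-y1^2-25*t-92*t^2-8*u*t) * h8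

/-- The equations of `Half` and `Step` after the scaling `d₀ = 8 X₀`, `d₁ = 8 X₁`, `s₀ = 4 x`, `s₁ = 4 w`,
`d = 4 y`, `e = 4 g`, `x₀ = ch₀`, `x₁ = ch₁`, with powers of `2` cancelled. -/
structure Loc (x w y g l c0 c1 c2 X0 X1 ch0 ch1 : R) : Prop where
  hch0 : ch0 = - 2 * X0 * c0
  hch1 : ch1 = - 2 * X1 * c0 - 2 * X0 * c1 + 6 * X0 * c0
  hc0 : c0 = 1 - 12 * ch1 - 10 * ch0 - ch0 ^ 2 - 8 * X1 * c1 - 8 * X0 * c2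
  hc1 : c1 = 2 - 10 * ch1 - 2 * ch0 * ch1 - 8 * X1 * c2
  hc2 : c2 = - ch1 ^ 2
  y0 : y ^ 2 = x * (1 - c0 * x)
  y1 : 2 * y * g = 3 * x + w - 2 * x * w * c0 - x ^ 2 * c1
  y2 : X0 = 2 * g ^ 2 + y * l - x * (5 + ch0) - 6 * w + 2 * (w ^ 2 * c0 + 2 * x * w * c1 + x ^ 2 * c2)
  y3 : X1 = g * l - x * ch1 - w * (5 + ch0) + 2 * (w ^ 2 * c1 + 2 * x * w * c2)

lemma Loc.map {S : Type*} [CommRing S] (f : R →+* S) {x w y g l c0 c1 c2 X0 X1 ch0 ch1 : R}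
    (h : Loc x w y g l c0 c1 c2 X0 X1 ch0 ch1) :
    Loc (f x) (f w) (f y) (f g) (f l) (f c0) (f c1) (f c2) (f X0) (f X1) (f ch0) (f ch1) := by
  constructor
  · simpa only [map_add, map_sub, map_mul, map_pow, map_ofNat, map_neg, map_one] using congrArg f h.hch0
  · simpa only [map_add, map_sub, map_mul, map_pow, map_ofNat, map_neg, map_one] using congrArg f h.hch1
  · simpa only [map_add, map_sub, map_mul, map_pow, map_ofNat, map_neg, map_one] using congrArg f h.hc0
  · simpa only [map_add, map_sub, map_mul, map_pow, map_ofNat, map_neg, map_one] using congrArg f h.hc1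
  · simpa only [map_add, map_sub, map_mul, map_pow, map_ofNat, map_neg, map_one] using congrArg f h.hc2
  · simpa only [map_add, map_sub, map_mul, map_pow, map_ofNat, map_neg, map_one] using congrArg f h.y0
  · simpa only [map_add, map_sub, map_mul, map_pow, map_ofNat, map_neg, map_one] using congrArg f h.y1
  · simpa only [map_add, map_sub, map_mul, map_pow, map_ofNat, map_neg, map_one] using congrArg f h.y2
  · simpa only [map_add, map_sub, map_mul, map_pow, map_ofNat, map_neg, map_one] using congrArg f h.y3

end

section
variable {x w y g l c0 c1 c2 X0 X1 ch0 ch1 : ℤ_[2]}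

lemma even_or_odd_mul {a b : ℤ_[2]} : (∃ k, a * b = 2 * k) ∨ ∃ m n, a = 1 + 2 * m ∧ b = 1 + 2 * n := by
  rcases par a with ⟨m, rfl⟩ | ⟨m, rfl⟩
  · exact Or.inl ⟨m * b, by ring⟩
  rcases par b with ⟨n, rfl⟩ | ⟨n, rfl⟩
  · exact Or.inl ⟨(1 + 2 * m) * n, by ring⟩
  · exact Or.inr ⟨m, n, rfl, rfl⟩

lemma two_cancel {a b : ℤ_[2]} (h : 2 * a = 2 * b) : a = b := by
  have h2 : (2 : ℤ_[2]) ≠ 0 := two_ne_zero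
  exact mul_left_cancel₀ h2 h

/-- The equations of `Loc` modulo `2`. -/
lemma Loc.parity (L : Loc x w y g l c0 c1 c2 X0 X1 ch0 ch1) (hl : ∃ l1, l = 1 + 4 * l1) :
    (∃ z, c0 = 1 + 2 * z) ∧ (∃ z, c1 = 2 * z) ∧ (∃ z, y = 2 * z) ∧ (∃ z, w = x + 2 * z) ∧
    (∃ z, X0 = x + 2 * z) ∧ ∃ z, g = (5 * X0 - X1 - 4 * X0 ^ 2) + 2 * z := by
  obtain ⟨l1, hl⟩ := hl
  obtain ⟨p0, hp0⟩ : ∃ z, ch0 = 2 * z := ⟨-X0 * c0, by linear_combination L.hch0⟩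
  obtain ⟨p1, hp1⟩ : ∃ z, ch1 = 2 * z := ⟨-X1 * c0 - X0 * c1 + 3 * X0 * c0, by linear_combination L.hch1⟩
  obtain ⟨z0, hz0⟩ : ∃ z, c0 = 1 + 2 * z :=
    ⟨- 6 * ch1 - 5 * ch0 - p0 * ch0 - 4 * X1 * c1 - 4 * X0 * c2, by linear_combination L.hc0 - ch0 * hp0⟩
  obtain ⟨z1, hz1⟩ : ∃ z, c1 = 2 * z :=
    ⟨1 - 5 * ch1 - ch0 * ch1 - 4 * X1 * c2, by linear_combination L.hc1⟩
  obtain ⟨y1, hy1⟩ : ∃ z, y = 2 * z := by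
    rcases par y with h | ⟨z, hz⟩
    · exact h
    exfalso
    rcases even_or_odd_mul (a := x) (b := 1 - c0 * x) with ⟨k, hk⟩ | ⟨m, n, hm, hn⟩
    · exact not_even_odd (a := k) (b := 2 * z + 2 * z ^ 2) (by rw [← hk, ← L.y0, hz]; ring)
    · exact not_even_odd (a := -z0 - m - 2 * z0 * m) (b := n) (by
        rw [hm, hz0] at hn; linear_combination hn)
  obtain ⟨w1, hw1⟩ : ∃ z, w = x + 2 * z := ⟨y * g - 2 * x + x * w * c0 + x ^ 2 * z1, by
    linear_combination -L.y1 + x ^ 2 * hz1⟩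
  refine ⟨⟨z0, hz0⟩, ⟨z1, hz1⟩, ⟨y1, hy1⟩, ⟨w1, hw1⟩,
    ⟨g ^ 2 + y1 * l - x * (3 + p0) - 3 * w + (w ^ 2 * c0 + 2 * x * w * c1 + x ^ 2 * c2), ?_⟩, ?_⟩
  · linear_combination L.y2 + l * hy1 - x * hp0
  · obtain ⟨u, hu⟩ : ∃ z, X0 = x + 2 * z := ⟨g ^ 2 + y1 * l - x * (3 + p0) - 3 * w + (w ^ 2 * c0 + 2 * x * w * c1 + x ^ 2 * c2),
      by linear_combination L.y2 + l * hy1 - x * hp0⟩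
    refine ⟨2 * g * l1 + g - x * p1 - w * (2 + p0) + (w ^ 2 * c1 + 2 * x * w * c2) - 3 * x - 5 * u - w1 + 2 * X0 ^ 2, ?_⟩
    linear_combination L.y3 - 5 * hu + g * hl - x * hp1 - w * hp0 - hw1

/-- For `X₀` odd, the equations modulo `8` express the new logarithm through the old one. -/
lemma Loc.stepA (L : Loc x w y g l c0 c1 c2 X0 X1 ch0 ch1) (hl : ∃ l1, l = 1 + 4 * l1) {al u : ℤ_[2]}
    (hal : 5 * X0 - X1 - 4 * X0 ^ 2 = 2 * al) (hu : X0 = 1 + 2 * u) :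
    ∃ k, 5 * y * l - g * l - 2 * y ^ 2 = -(2 * al) + 8 * k := by
  obtain ⟨⟨z0, hz0⟩, ⟨z1, hz1⟩, ⟨y1, hy1⟩, ⟨w1, hw1⟩, ⟨u1, hu1⟩, g1, hg1⟩ := L.parity hl
  -- `χ₁ ∈ 4`
  obtain ⟨k1, hk1⟩ : ∃ z, ch1 = 4 * z := ⟨-(3 * X0 - 2 * X0 ^ 2 - al) * c0 - X0 * z1 + 2 * X0 * c0, by
    linear_combination L.hch1 + 2 * c0 * hal - 2 * X0 * hz1⟩
  obtain ⟨r, hr⟩ : ∃ z, X0 * c0 = 1 + 2 * z := ⟨u + z0 + 2 * u * z0, by rw [hu, hz0]; ring⟩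
  obtain ⟨a, ha⟩ : ∃ z, c0 = 1 + 8 * z := by
    refine ⟨-6 * k1 - (1 + 2 * r) * (r - 2) - X1 * c1 - X0 * c2, ?_⟩
    have := L.hch0
    rw [show -2 * X0 * c0 = -2 * (X0 * c0) by ring, hr] at this
    linear_combination L.hc0 - 12 * hk1 + (-10 - ch0 + 2 * (1 + 2 * r)) * this
  -- `x ≡ 1 mod 4`
  obtain ⟨t, ht⟩ : ∃ t, x = 1 + 4 * t := by
    obtain ⟨x2, hx2⟩ : ∃ z, x = 1 + 2 * z := ⟨u - u1, by linear_combination hu - hu1⟩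
    rcases par x2 with ⟨t, h⟩ | ⟨t, h⟩
    · exact ⟨t, by rw [hx2, h]; ring⟩
    exfalso
    have e := L.y0
    rw [hy1, ha] at e
    refine not_even_odd (a := -y1 ^ 2 - 2 * a * x ^ 2) (b := 1 + 5 * t + 4 * t ^ 2) (two_cancel ?_)
    have hx3 : x = 3 + 4 * t := by rw [hx2, h]; ring
    rw [hx3] at e ⊢
    linear_combination -e
  let f := Ideal.Quotient.mk (Ideal.span {(8 : ℤ_[2])})
  have h8 : (8 : ℤ_[2] ⧸ Ideal.span {(8 : ℤ_[2])}) = 0 := by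
    have : f 8 = 0 := Ideal.Quotient.eq_zero_iff_mem.mpr (Ideal.mem_span_singleton_self _)
    simpa only [map_ofNat] using this
  have M := L.map f
  have fm {a b : ℤ_[2]} (h : a = b) : f a = f b := congrArg f h
  replace hu := fm hu; replace hal' := fm hal; replace ha := fm ha
  replace ht := fm ht; replace hy1 := fm hy1; replace hk1 := fm hk1
  obtain ⟨g2, hg2⟩ : ∃ z, g = 2 * z := ⟨al + g1, by rw [hg1, hal]; ring⟩
  replace hg2 := fm hg2
  simp only [map_add, map_sub, map_mul, map_pow, map_ofNat, map_neg, map_one] at hu hal' ha ht hy1 hk1 hg2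
  have c01 : f c0 = 1 := by linear_combination ha + f a * h8
  have c11 : f c1 = 2 := by linear_combination M.hc1 - (10 + 2 * f ch0) * hk1 - (5 * f k1 + f ch0 * f k1 + f X1 * f c2) * h8
  have c21 : f c2 = 0 := by
    linear_combination M.hc2 - (f ch1 + 4 * f k1) * hk1 - 2 * f k1 ^ 2 * h8
  have ch01 : f ch0 = -2 * f X0 := by linear_combination M.hch0 - 2 * f X0 * c01
  have ch11 : f ch1 = 2 * (2 * f al) := by
    linear_combination M.hch1 + 2 * hal' + (6 * f X0 - 2 * f X1) * c01 - 2 * f X0 * c11 + (f X0 ^ 2 - f X0) * h8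
  have := caseA h8 hu hal' c01 ch01 ch11 c11 c21 ht hy1 hg2 M.y1 M.y2 M.y3
  have h : f (5 * y * l - g * l - 2 * y ^ 2 + 2 * al) = 0 := by
    simp only [map_add, map_sub, map_mul, map_pow, map_ofNat, map_neg, map_one]
    linear_combination this
  obtain ⟨k, hk⟩ := Ideal.mem_span_singleton.mp (Ideal.Quotient.eq_zero_iff_mem.mp h)
  exact ⟨k, by linear_combination hk⟩

/-- For `X₀` even, the old logarithm equals the new one up to odd factors and multiples of `8 y²`, and `X₀`
equals `y` up to odd factors and multiples of `8 y²` and of twice the new logarithm. -/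
lemma Loc.stepB (L : Loc x w y g l c0 c1 c2 X0 X1 ch0 ch1) (hl : ∃ l1, l = 1 + 4 * l1) {al u : ℤ_[2]}
    (hal : 5 * X0 - X1 - 4 * X0 ^ 2 = 2 * al) (hu : X0 = 2 * u) :
    (∃ r a b, (5 * X0 - X1 - 4 * X0 ^ 2) * (1 + 2 * r) =
      (5 * y * l - g * l - 2 * y ^ 2) * (1 + 2 * b) + 8 * y ^ 2 * a) ∧
    ∃ r a b, X0 = y * (1 + 2 * r) + 8 * y ^ 2 * a + 2 * (5 * y * l - g * l - 2 * y ^ 2) * b := by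
  obtain ⟨⟨z0, hz0⟩, ⟨z1, hz1⟩, ⟨y1, hy1⟩, ⟨w1, hw1⟩, ⟨u1, hu1⟩, g1, hg1⟩ := L.parity hl
  obtain ⟨l1, hl1⟩ := hl
  obtain ⟨g2, hg2⟩ : ∃ z, g = 2 * z := ⟨al + g1, by rw [hg1, hal]; ring⟩
  obtain ⟨x2, hx2⟩ : ∃ z, x = 2 * z := ⟨u - u1, by linear_combination hu - hu1⟩
  have e := L.y0
  obtain ⟨x4, hx4⟩ : ∃ z, x = 4 * z := by
    obtain ⟨m, hm⟩ := odd_inv (- c0 * x2)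
    refine ⟨y1 ^ 2 * (1 + 2 * m), two_cancel ?_⟩
    rw [hx2, hy1] at e
    rw [hx2]
    linear_combination (-4 * x2) * hm - 2 * (1 + 2 * m) * e
  obtain ⟨n, hn⟩ : ∃ n, x = y ^ 2 * (1 + 4 * n) := by
    obtain ⟨m, hm⟩ := odd_inv (- 2 * c0 * x4)
    refine ⟨c0 * x4 * (1 + 2 * m), ?_⟩
    have : 1 + 4 * (c0 * x4 * (1 + 2 * m)) = 1 + 2 * m := by linear_combination -hm
    rw [this, e]
    linear_combination (-x) * hm + c0 * x * (1 + 2 * m) * hx4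
  obtain ⟨w2, hw2⟩ : ∃ z, w = 2 * y * z := by
    obtain ⟨m, hm⟩ := odd_inv (- c0 * x)
    refine ⟨(g - 3 * y1 * (1 + 4 * n) + x * y1 * (1 + 4 * n) * c1) * (1 + 2 * m), ?_⟩
    have e1 := L.y1
    have : w * (1 + 2 * (-c0 * x)) = 2 * y * (g - 3 * y1 * (1 + 4 * n) + x * y1 * (1 + 4 * n) * c1) := by
      linear_combination -e1 + (-3 + x * c1) * hn + (-3 + x * c1) * y * (1 + 4 * n) * hy1
    linear_combination (-w) * hm + (1 + 2 * m) * this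
  obtain ⟨li, hli⟩ : ∃ z, l * z = 1 := by
    obtain ⟨m, hm⟩ := odd_inv (2 * l1)
    exact ⟨1 + 2 * m, by rw [hl1]; linear_combination hm⟩
  set G := 5 * y * l - g * l - 2 * y ^ 2 with hG
  let I : Ideal ℤ_[2] := Ideal.span {8 * y ^ 2, 2 * G}
  let f := Ideal.Quotient.mk I
  have M := L.map f
  have fm {a b : ℤ_[2]} (h : a = b) : f a = f b := congrArg f h
  have i1 : f (8 * y ^ 2) = 0 := Ideal.Quotient.eq_zero_iff_mem.mpr (Ideal.subset_span (by simp))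
  have i2 : f (2 * G) = 0 := Ideal.Quotient.eq_zero_iff_mem.mpr (Ideal.subset_span (by simp))
  rw [hG] at i2
  have hu' := fm hu; have hy1' := fm hy1; have hg2' := fm hg2; have hz1' := fm hz1
  have hn' := fm hn; have hw2' := fm hw2; have hli' := fm hli; have hl1' := fm hl1
  simp only [map_add, map_sub, map_mul, map_pow, map_ofNat, map_neg, map_one] at i1 i2 hu' hy1' hg2' hz1' hn' hw2' hli' hl1'
  obtain ⟨r1, r2⟩ := caseB1 hy1' hg2' hli' i1 i2
  have hw := caseB2 hy1' i1 hn' hw2' hz1' M.y1 r1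
  have hX := caseB3 hy1' i1 hn' hw hl1' r2 M.y2
  have hF := caseB4 (X1 := f X1) (ch1 := f ch1) hy1' i1 hn' hw M.hch0 M.hch1 hu' hX hz1' r2 M.y2 M.y3
  constructor
  · have h : f ((5 * X0 - X1 - 4 * X0 ^ 2) * (1 - 2 * c0 * x) - G) = 0 := by
      simp only [hG, map_add, map_sub, map_mul, map_pow, map_ofNat, map_neg, map_one]
      linear_combination hF
    obtain ⟨a, b, hab⟩ := Ideal.mem_span_pair.mp (Ideal.Quotient.eq_zero_iff_mem.mp h)
    exact ⟨-c0 * x, a, b, by linear_combination -hab⟩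
  · have h : f (X0 - y * (1 + 2 * (2 * l1 + y + y1 * (1 + 4 * n) * (1 - ch0)))) = 0 := by
      simp only [map_add, map_sub, map_mul, map_pow, map_ofNat, map_neg, map_one]
      linear_combination hX
    obtain ⟨a, b, hab⟩ := Ideal.mem_span_pair.mp (Ideal.Quotient.eq_zero_iff_mem.mp h)
    exact ⟨2 * l1 + y + y1 * (1 + 4 * n) * (1 - ch0), a, b, by linear_combination -hab⟩

lemma exists_two_pow {y : ℤ_[2]} (hy : y ≠ 0) : ∃ (k : ℕ) (z : ℤ_[2]), y = 2 ^ k * (1 + 2 * z) := by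
  have h := PadicInt.unitCoeff_spec hy
  rcases par (PadicInt.unitCoeff hy : ℤ_[2]) with ⟨z, hz⟩ | ⟨z, hz⟩
  · obtain ⟨i, hi⟩ := (PadicInt.unitCoeff hy).isUnit.exists_right_inv
    rw [hz] at hi
    exact (not_even_odd (a := z * i) (b := 0) (by linear_combination hi)).elim
  · refine ⟨y.valuation, z, ?_⟩
    rw [hz] at h
    push_cast at h
    linear_combination h

lemma pow_odd_lt {m k : ℕ} {z u : ℤ_[2]} (h : 2 ^ k * (1 + 2 * u) = 2 ^ m * z) : m ≤ k := by
  by_contra hk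
  obtain ⟨j, rfl⟩ := Nat.exists_eq_add_of_lt (not_le.mp hk)
  have h2 : (2 : ℤ_[2]) ^ k ≠ 0 := pow_ne_zero _ two_ne_zero
  refine not_even_odd (a := 2 ^ j * z) (b := u) (mul_left_cancel₀ h2 ?_)
  rw [h]; ring

/-- The scaled logarithm `5 X₀ - X₁ - 4 X₀²` and its counterpart `5 y ℓ - g ℓ - 2 y²` for the halved divisor
have the same exact valuation `m`, and divisibility of the constant coefficient by `2^m` persists. As
the scaling is by `8` before and by `4` after halving, the true valuation drops by one. -/
lemma Loc.main (L : Loc x w y g l c0 c1 c2 X0 X1 ch0 ch1) (hl : ∃ l1, l = 1 + 4 * l1) {m : ℕ} {a z : ℤ_[2]}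
    (hA : 5 * X0 - X1 - 4 * X0 ^ 2 = 2 ^ m * (1 + 2 * a)) (hX : 4 * X0 = 2 ^ m * z) :
    (∃ a', 5 * y * l - g * l - 2 * y ^ 2 = 2 ^ m * (1 + 2 * a')) ∧ ∃ z', 4 * y = 2 ^ m * z' := by
  obtain ⟨⟨z0, hz0⟩, ⟨z1, hz1⟩, ⟨y1, hy1⟩, ⟨w1, hw1⟩, ⟨u1, hu1⟩, g1, hg1⟩ := L.parity hl
  rcases m with _ | m
  · obtain ⟨l1, hl1⟩ := hl
    rw [pow_zero, one_mul] at hA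
    refine ⟨⟨5 * y1 * l - (1 + a + g1) * l + 2 * l1 - y ^ 2, ?_⟩, 4 * y, by ring⟩
    rw [pow_zero, one_mul]
    linear_combination 5 * l * hy1 - l * hg1 - l * hA + hl1
  have hal : 5 * X0 - X1 - 4 * X0 ^ 2 = 2 * (2 ^ m * (1 + 2 * a)) := by rw [hA]; ring
  rcases par X0 with ⟨u, hu⟩ | ⟨u, hu⟩
  swap
  · obtain ⟨k, hk⟩ := L.stepA hl hal hu
    have hm : m + 1 ≤ 2 := pow_odd_lt (u := u) (z := z) (by rw [← hX, hu]; ring)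
    rw [hk]
    have : m = 0 ∨ m = 1 := by omega
    rcases this with rfl | rfl
    · exact ⟨⟨-1 - a + 2 * k, by ring⟩, 4 * y1, by rw [hy1]; ring⟩
    · exact ⟨⟨-1 - a + k, by ring⟩, 2 * y1, by rw [hy1]; ring⟩
  obtain ⟨⟨r, p, q, h1⟩, r', p', q', h2⟩ := L.stepB hl hal hu
  rw [hA] at h1
  by_cases hq : ∃ s, 8 * y ^ 2 = 2 ^ (m + 2) * s
  · obtain ⟨s, hs⟩ := hq
    obtain ⟨i, hi⟩ := odd_inv q
    have hG : 5 * y * l - g * l - 2 * y ^ 2 =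
        2 ^ (m + 1) * (1 + 2 * (a + r + 2 * a * r - s * p + i + 2 * (a + r + 2 * a * r - s * p) * i)) := by
      linear_combination (-(5 * y * l - g * l - 2 * y ^ 2)) * hi - (1 + 2 * i) * h1 - (1 + 2 * i) * p * hs
    refine ⟨⟨_, hG⟩, ?_⟩
    rw [hG] at h2
    obtain ⟨i', hi'⟩ := odd_inv r'
    obtain ⟨v, hv⟩ : ∃ v, 4 * y * (1 + 2 * r') = 2 ^ (m + 1) * v :=
      ⟨z - 8 * s * p' - 8 * ((1 + 2 * (a + r + 2 * a * r - s * p + i + 2 * (a + r + 2 * a * r - s * p) * i))) * q', by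
        linear_combination hX - 4 * h2 - 4 * p' * hs⟩
    exact ⟨v * (1 + 2 * i'), by linear_combination (1 + 2 * i') * hv - 4 * y * hi'⟩
  exfalso
  have hy0 : y ≠ 0 := by rintro rfl; exact hq ⟨0, by ring⟩
  obtain ⟨k, t, ht⟩ := exists_two_pow hy0
  have hk : 2 * k + 3 ≤ m + 1 := by
    by_contra hk
    obtain ⟨j, hj⟩ := Nat.exists_eq_add_of_lt (not_le.mp hk)
    refine hq ⟨2 ^ j * (1 + 2 * t) ^ 2, ?_⟩
    rw [ht]
    calc _ = 2 ^ (2 * k + 3) * (1 + 2 * t) ^ 2 := by ring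
      _ = _ := by rw [hj]; ring
  obtain ⟨j, hj⟩ := Nat.exists_eq_add_of_le hk
  obtain ⟨i, hi⟩ := odd_inv q
  have h8 : 8 * y ^ 2 = 2 ^ (k + 1) * (2 ^ (k + 2) * (1 + 2 * t) ^ 2) := by rw [ht]; ring
  obtain ⟨v, hv⟩ : ∃ v, 5 * y * l - g * l - 2 * y ^ 2 = 2 ^ (k + 1) * v := by
    refine ⟨(2 ^ (k + 2) * 2 ^ j * (1 + 2 * a) * (1 + 2 * r) - 2 ^ (k + 2) * (1 + 2 * t) ^ 2 * p) * (1 + 2 * i), ?_⟩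
    have : (2 : ℤ_[2]) ^ (m + 1) = 2 ^ (k + 1) * (2 ^ (k + 2) * 2 ^ j) := by rw [hj]; ring
    rw [this] at h1
    linear_combination (-(5 * y * l - g * l - 2 * y ^ 2)) * hi - (1 + 2 * i) * h1 - (1 + 2 * i) * p * h8
  have := pow_odd_lt (k := k + 2) (m := m + 1) (z := z)
    (u := t + r' + 2 * t * r' + 2 ^ (k + 2) * (1 + 2 * t) ^ 2 * p' + 2 * v * q') (by
      rw [← hX]
      have h4 : 2 ^ (k + 2) * (1 + 2 * t) = 4 * y := by rw [ht]; ring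
      have h2k : (2 : ℤ_[2]) ^ (k + 1) = 2 * 2 ^ k := by ring
      have h3k : (2 : ℤ_[2]) ^ (k + 2) = 4 * 2 ^ k := by ring
      rw [hv, h8] at h2
      rw [h3k] at h4 h2 ⊢
      rw [h2k] at h2
      linear_combination (1 + 2 * r') * h4 - 4 * h2)
  omega

end

/-! ### Descent states -/

lemma poly6_zero {k0 k1 k2 k3 k4 k5 k6 : ℚ}
    (h : ∀ Y : ℚ, k0 + k1 * Y + k2 * Y ^ 2 + k3 * Y ^ 3 + k4 * Y ^ 4 + k5 * Y ^ 5 + k6 * Y ^ 6 = 0) :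
    k0 = 0 ∧ k1 = 0 ∧ k2 = 0 ∧ k3 = 0 ∧ k4 = 0 ∧ k5 = 0 ∧ k6 = 0 := by
  have h0 := h 0
  have h1 := h 1
  have h2 := h (-1)
  have h3 := h 2
  have h4 := h (-2)
  have h5 := h 3
  have h6 := h (-3)
  norm_num at h0 h1 h2 h3 h4 h5 h6
  refine ⟨h0, ?_, ?_, ?_, ?_, ?_, ?_⟩ <;> linarith

/-- A cubic `M` with `a ∣ F - M²` gives the Mumford pair of `a` and `M mod a`. -/
lemma OnJ_reduce {m0 m1 m2 m3 n0 n1 n2 n3 n4 d0 d1 : ℚ}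
    (h : ∀ Y : ℚ, 4 + 24 * Y + 56 * Y ^ 2 + 60 * Y ^ 3 + 26 * Y ^ 4 + 2 * Y ^ 5 -
      (m0 + m1 * Y + m2 * Y ^ 2 + m3 * Y ^ 3) ^ 2 =
      (Y ^ 2 + d1 * Y + d0) * (n0 + n1 * Y + n2 * Y ^ 2 + n3 * Y ^ 3 + n4 * Y ^ 4)) :
    OnJ d0 d1 (m0 - d0 * (m2 - d1 * m3)) (m1 - d1 * (m2 - d1 * m3) - d0 * m3) := by
  obtain ⟨h0, h1, h2, h3, h4, h5, h6⟩ := poly6_zero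
    (k0 := 4 - m0 ^ 2 - d0 * n0) (k1 := 24 - 2 * m0 * m1 - d0 * n1 - d1 * n0)
    (k2 := 56 - m1 ^ 2 - 2 * m0 * m2 - d0 * n2 - d1 * n1 - n0)
    (k3 := 60 - 2 * m0 * m3 - 2 * m1 * m2 - d0 * n3 - d1 * n2 - n1)
    (k4 := 26 - m2 ^ 2 - 2 * m1 * m3 - d0 * n4 - d1 * n3 - n2)
    (k5 := 2 - 2 * m2 * m3 - d1 * n4 - n3)
    (k6 := - m3 ^ 2 - n4) (fun Y => by linear_combination h Y)
  obtain rfl : n4 = -m3 ^ 2 := by linear_combination -h6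
  obtain rfl : n3 = 2 - 2 * m2 * m3 + d1 * m3 ^ 2 := by linear_combination -h5
  refine ⟨n0 + 2 * (m0 - d0 * (m2 - d1 * m3)) * (m2 - d1 * m3) + d0 * (m2 - d1 * m3) ^ 2,
    n1 + 2 * ((m0 - d0 * (m2 - d1 * m3)) * m3 + (m1 - d1 * (m2 - d1 * m3) - d0 * m3) * (m2 - d1 * m3)) +
      d1 * (m2 - d1 * m3) ^ 2 + 2 * d0 * (m2 - d1 * m3) * m3,
    n2 + 2 * (m1 - d1 * (m2 - d1 * m3) - d0 * m3) * m3 + (m2 - d1 * m3) ^ 2 +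
      2 * d1 * (m2 - d1 * m3) * m3 + d0 * m3 ^ 2, ?_, ?_, ?_, ?_, ?_⟩
  · linear_combination h0
  · linear_combination h1
  · linear_combination h2
  · linear_combination h3
  · linear_combination h4

/-- The halved divisor: `a' = d + e Y + ℓ Y²` made monic, together with `B - s c` modulo `a'`. -/
lemma OnJ_halve {d0 d1 x0 x1 c0 c1 c2 s0 s1 d e l : ℚ} (H : Half d0 d1 x0 x1 c0 c1 c2)
    (S : Step d0 d1 x0 x1 c0 c1 c2 s0 s1 d e l) (hl : l ≠ 0) :
    OnJ (d / l) (e / l)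
      (2 - s0 * c0 - d / l * (5 + x0 - s0 * c2 - s1 * c1 - e / l * (x1 - s1 * c2)))
      (6 - s0 * c1 - s1 * c0 - e / l * (5 + x0 - s0 * c2 - s1 * c1 - e / l * (x1 - s1 * c2)) -
        d / l * (x1 - s1 * c2)) := by
  refine OnJ_reduce (n0 := l * (d * c0)) (n1 := l * (d * c1 + e * c0)) (n2 := l * (d * c2 + e * c1 + l * c0))
    (n3 := l * (e * c2 + l * c1)) (n4 := l * (l * c2)) fun Y => ?_
  have e1 : (Y ^ 2 + e / l * Y + d / l) * (l * (d * c0) + l * (d * c1 + e * c0) * Y +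
      l * (d * c2 + e * c1 + l * c0) * Y ^ 2 + l * (e * c2 + l * c1) * Y ^ 3 + l * (l * c2) * Y ^ 4) =
      (l * Y ^ 2 + e * Y + d) ^ 2 * (c0 + c1 * Y + c2 * Y ^ 2) := by
    field_simp; ring
  have e2 : (l * Y ^ 2 + e * Y + d) ^ 2 = (Y ^ 2 + d1 * Y + d0) * Y ^ 2 +
      2 * (2 + 6 * Y + (5 + x0) * Y ^ 2 + x1 * Y ^ 3) * (s0 + s1 * Y) -
      (s0 + s1 * Y) ^ 2 * (c0 + c1 * Y + c2 * Y ^ 2) := by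
    linear_combination S.y0 + Y * S.y1 + Y ^ 2 * S.y2 + Y ^ 3 * S.y3 + Y ^ 4 * S.y4
  rw [e1, e2]
  linear_combination (-Y^2) * H.h0 + (-Y^3) * H.h1 + (-Y^4) * H.h2 + (-Y^5) * H.h3 - Y ^ 6 * H.h4

/-- `q` has exact 2-adic valuation `k`. -/
def E (k : ℕ) (q : ℚ) : Prop := ∃ z : ℤ_[2], (q : ℚ_[2]) = 2 ^ k * (1 + 2 * z)

section
variable {R S : Type*} [CommRing R] [CommRing S] {x w y g l c0 c1 c2 X0 X1 ch0 ch1 : R}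
lemma Loc.of_map (f : R →+* S) (hf : Function.Injective f)
    (h : Loc (f x) (f w) (f y) (f g) (f l) (f c0) (f c1) (f c2) (f X0) (f X1) (f ch0) (f ch1)) :
    Loc x w y g l c0 c1 c2 X0 X1 ch0 ch1 := by
  constructor <;> apply hf <;> simp only [map_add, map_sub, map_mul, map_pow, map_ofNat, map_neg, map_one]
  · exact h.hch0
  · exact h.hch1
  · exact h.hc0
  · exact h.hc1
  · exact h.hc2
  · exact h.y0
  · exact h.y1
  · exact h.y2
  · exact h.y3
end

section
variable {x w y g l c0 c1 c2 X0 X1 ch0 ch1 : ℚ}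

lemma D0_iff {q : ℚ} : D 0 q ↔ ∃ z : ℤ_[2], (q : ℚ_[2]) = z := by simp [D]

/-- The rational form of `Loc.main`. -/
lemma Loc.rat (L : Loc x w y g l c0 c1 c2 X0 X1 ch0 ch1) (hx : D 0 x) (hw : D 0 w) (hy : D 0 y) (hg : D 0 g)
    (hl : D 2 (l - 1)) (h0 : D 0 c0) (h1 : D 0 c1) (h2 : D 0 c2) (hX0 : D 0 X0) (hX1 : D 0 X1)
    (hch0 : D 0 ch0) (hch1 : D 0 ch1) {m : ℕ}
    (hA : E m (5 * X0 - X1 - 4 * X0 ^ 2)) (hX : D m (4 * X0)) :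
    E m (5 * y * l - g * l - 2 * y ^ 2) ∧ D m (4 * y) ∧ D 1 y := by
  obtain ⟨l1, hl1⟩ := hl
  obtain ⟨a, ha⟩ := hA
  obtain ⟨z, hz⟩ := hX
  have L' := L.map (Rat.castHom ℚ_[2])
  simp only [Rat.coe_castHom] at L'
  obtain ⟨x', hx⟩ := D0_iff.mp hx
  obtain ⟨w', hw⟩ := D0_iff.mp hw
  obtain ⟨y', hy⟩ := D0_iff.mp hy
  obtain ⟨g', hg⟩ := D0_iff.mp hg
  obtain ⟨c0', h0⟩ := D0_iff.mp h0
  obtain ⟨c1', h1⟩ := D0_iff.mp h1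
  obtain ⟨c2', h2⟩ := D0_iff.mp h2
  obtain ⟨X0', hX0⟩ := D0_iff.mp hX0
  obtain ⟨X1', hX1⟩ := D0_iff.mp hX1
  obtain ⟨ch0', hch0⟩ := D0_iff.mp hch0
  obtain ⟨ch1', hch1⟩ := D0_iff.mp hch1
  have hl : (l : ℚ_[2]) = ((1 + 4 * l1 : ℤ_[2]) : ℚ_[2]) := by
    push_cast at hl1 ⊢
    rw [show ((4 : ℤ_[2]) : ℚ_[2]) = 4 from rfl]
    linear_combination hl1
  rw [hx, hw, hy, hg, hl, h0, h1, h2, hX0, hX1, hch0, hch1] at L'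
  have inj : Function.Injective (PadicInt.Coe.ringHom (p := 2)) := fun a b h => Subtype.ext h
  have M : Loc x' w' y' g' (1 + 4 * l1) c0' c1' c2' X0' X1' ch0' ch1' :=
    Loc.of_map (PadicInt.Coe.ringHom (p := 2)) inj L'
  have c4 : ((4 : ℤ_[2]) : ℚ_[2]) = 4 := rfl
  have c5 : ((5 : ℤ_[2]) : ℚ_[2]) = 5 := rfl
  have hA' : 5 * X0' - X1' - 4 * X0' ^ 2 = 2 ^ m * (1 + 2 * a) := by
    apply inj
    change ((_ : ℤ_[2]) : ℚ_[2]) = ((_ : ℤ_[2]) : ℚ_[2])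
    push_cast at ha ⊢
    rw [hX0, hX1] at ha
    rw [c4, c5, ha]
  have hX' : 4 * X0' = 2 ^ m * z := by
    apply inj
    change ((_ : ℤ_[2]) : ℚ_[2]) = ((_ : ℤ_[2]) : ℚ_[2])
    push_cast at hz ⊢
    rw [hX0] at hz
    rw [c4, hz]
  obtain ⟨⟨a', ha'⟩, z', hz'⟩ := M.main ⟨l1, rfl⟩ hA' hX'
  obtain ⟨-, -, ⟨y1, hy1⟩, -⟩ := M.parity ⟨l1, rfl⟩
  refine ⟨⟨a', ?_⟩, ⟨z', ?_⟩, ⟨y1, ?_⟩⟩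
  · have := congrArg (fun t : ℤ_[2] => (t : ℚ_[2])) ha'
    push_cast at this ⊢
    rw [hy, hl, hg, ← this, ← c5]
    push_cast
    ring
  · have := congrArg (fun t : ℤ_[2] => (t : ℚ_[2])) hz'
    push_cast at this ⊢
    rw [hy, ← this, c4]
  · rw [hy, hy1]; push_cast; ring
end

section
variable {K : Type} [Field K] [NumberField K] {p : K} {v : K → ℝ}

/-- A state of the descent: a divisor `D` with `a = Y² + d₁ Y + d₀` and `b = 2 (t₀ + t₁ Y)` close to `2 P₀`, for
which `5 d₀ - d₁ - d₀² / 2`, the leading part of the 2-adic logarithm of `D - 2 P₀`, has exact valuation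
`n + 2`. -/
structure St (n : ℕ) (d0 d1 t0 t1 : ℚ) : Prop where
  h0 : D 3 d0
  h1 : D 2 d1
  ht0 : D 0 t0
  ht1 : D 0 t1
  H : OnJ d0 d1 (2 * t0) (2 * t1)
  hA : E (n + 2) (5 * d0 - d1 - d0 ^ 2 / 2)
  hn : D n d0

lemma E.D {k : ℕ} {q : ℚ} (h : E k q) : D k q := by
  obtain ⟨z, hz⟩ := h
  exact ⟨1 + 2 * z, by rw [hz]; push_cast; ring⟩

lemma E.scale {k j : ℕ} {q r : ℚ} (h : E (k + j) q) (hr : 2 ^ j * r = q) : E k r := by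
  obtain ⟨z, hz⟩ := h
  refine ⟨z, ?_⟩
  rw [← hr] at hz
  push_cast at hz
  have h2 : (2 : ℚ_[2]) ^ j ≠ 0 := pow_ne_zero _ two_ne_zero
  apply mul_left_cancel₀ h2
  rw [hz]; ring

lemma E.mul_od {k : ℕ} {q r : ℚ} (h : E k q) (hr : Od r) : E k (q * r) := by
  obtain ⟨a, ha⟩ := h
  obtain ⟨b, hb⟩ := hr
  refine ⟨a + b + 2 * a * b, ?_⟩
  push_cast
  rw [ha, hb]; ring

lemma E.mul {j k : ℕ} {q r : ℚ} (h : E j q) (hr : E k r) : E (j + k) (q * r) := by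
  obtain ⟨a, ha⟩ := h
  obtain ⟨b, hb⟩ := hr
  refine ⟨a + b + 2 * a * b, ?_⟩
  push_cast
  rw [ha, hb]; ring

lemma E.add {k : ℕ} {q r : ℚ} (h : E k q) (hr : _root_.D (k + 1) r) : E k (q + r) := by
  obtain ⟨a, ha⟩ := h
  obtain ⟨b, hb⟩ := hr
  refine ⟨a + b, ?_⟩
  push_cast
  rw [ha, hb]; ring

lemma E.neg {k : ℕ} {q : ℚ} (h : E k q) : E k (-q) := by
  obtain ⟨a, ha⟩ := h
  exact ⟨-1 - a, by push_cast; rw [ha]; ring⟩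

lemma E.div_od {k : ℕ} {q r : ℚ} (h : E k q) (hr : Od r) : E k (q / r) := by
  rw [div_eq_mul_inv]; exact h.mul_od hr.inv

/-- Halving a divisor lowers the valuation of its logarithm by one. -/
theorem St.step (hv : AV v) (hp : IsRt p) (hK : Module.finrank ℚ K = 4) {n : ℕ} {d0 d1 t0 t1 : ℚ}
    (S : St (n + 1) d0 d1 t0 t1) : ∃ d0' d1' t0' t1', St n d0' d1' t0' t1' := by
  have h1 : D 3 d1 := by
    rw [show d1 = 5 * d0 - d0 * d0 / 2 - (5 * d0 - d1 - d0 ^ 2 / 2) by ring]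
    refine (((D.int 5).mul' S.h0 (by norm_num)).sub (D.of_two_mul (j := 1) ?_)).sub (S.hA.D.mono (by omega))
    rw [show 2 ^ 1 * (d0 * d0 / 2) = d0 * d0 by ring]
    exact S.h0.mul' S.h0 (by norm_num)
  obtain ⟨x0, x1, c0, c1, c2, hx0, hx1, H⟩ := S.H.half S.h0 h1 S.ht0 S.ht1
  obtain ⟨hz, hq⟩ := selmer hv hp hK S.H S.h0 S.h1
  obtain ⟨s0, s1, d, e, l, hs0, hs1, hd, he, hl, T⟩ := exists_step hv hp hK S.h0 h1 hx0 hx1 H hz hq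
  have ol : Od l := D.od_of_sub (hl.mono (by norm_num))
  have l0 := ol.ne_zero
  have k2 : D 2 c2 := by
    rw [H.h4, show -x1 ^ 2 = -(x1 * x1) by ring]
    exact (hx1.mul' hx1 (by norm_num)).neg
  have k1 : D 1 c1 := by
    rw [H.h3, show 2 - 10 * x1 - 2 * x0 * x1 - d1 * c2 = 2 - 10 * x1 - 2 * (x0 * x1) - d1 * c2 by ring]
    exact ((D.two.sub ((D.int 10).mul' hx1 (by norm_num))).sub (D.two.mul' (hx0.mul hx1) (by norm_num))).sub
      (h1.mul' k2 (by norm_num))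
  have k0 : D 0 c0 := by
    rw [H.h2, show 1 - 12 * x1 - 10 * x0 - x0 ^ 2 - d1 * c1 - d0 * c2 =
      1 - 12 * x1 - 10 * x0 - x0 * x0 - d1 * c1 - d0 * c2 by ring]
    exact (((((by simpa using D.int 1 : D 0 1).sub ((D.int 12).mul' hx1 (by norm_num))).sub
      ((D.int 10).mul' hx0 (by norm_num))).sub (hx0.mul' hx0 (by norm_num))).sub (h1.mul' k1 (by norm_num))).sub
      (S.h0.mul' k2 (by norm_num))
  have sc2 {r : ℚ} (h : D 2 r) : D 0 (r / 4) := D.of_two_mul (j := 2) (by rwa [show 2 ^ 2 * (r / 4) = r by ring])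
  have sc3 {r : ℚ} (h : D 3 r) : D 0 (r / 8) := D.of_two_mul (j := 3) (by rwa [show 2 ^ 3 * (r / 8) = r by ring])
  have L : Loc (s0 / 4) (s1 / 4) (d / 4) (e / 4) l c0 c1 c2 (d0 / 8) (d1 / 8) x0 x1 := by
    constructor
    · linear_combination (1 / 4) * H.h0
    · linear_combination (1 / 4) * H.h1 - (3 / 4) * H.h0
    · linear_combination H.h2
    · linear_combination H.h3
    · linear_combination H.h4
    · linear_combination (1 / 16) * T.y0
    · linear_combination (1 / 16) * T.y1
    · linear_combination (-1 / 8) * T.y2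
    · linear_combination (-1 / 8) * T.y3
  obtain ⟨G, Y, Y1⟩ := L.rat (m := n) (sc2 hs0) (sc2 hs1) (sc2 hd) (sc2 he) hl k0 (k1.mono (by norm_num)) (k2.mono (by norm_num))
    (sc3 S.h0) (sc3 h1) (hx0.mono (by norm_num)) (hx1.mono (by norm_num))
    (by
      refine S.hA.scale (j := 3) ?_
      ring)
    (D.of_two_mul (j := 1) (by convert S.hn using 1; ring))
  rw [show 4 * (d / 4) = d by ring] at Y
  have hd3 : D 3 d := by
    rw [show d = 2 * 2 * (d / 4) by ring]
    exact (D.two.mul D.two).mul Y1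
  have hd' := hd3.div_od ol
  have he' := he.div_od ol
  have J := OnJ_halve H T l0
  have hm3 : D 1 (x1 - s1 * c2) := hx1.sub (hs1.mul' k2 (by norm_num))
  have hm2 : D 0 (5 + x0 - s0 * c2 - s1 * c1) :=
    (((D.int 5).add (hx0.mono (by norm_num))).sub (hs0.mul' k2 (by norm_num))).sub (hs1.mul' k1 (by norm_num))
  have hq0 : D 0 (5 + x0 - s0 * c2 - s1 * c1 - e / l * (x1 - s1 * c2)) :=
    hm2.sub (he'.mul' hm3 (by norm_num))
  have hb0 : D 1 (2 - s0 * c0 - d / l * (5 + x0 - s0 * c2 - s1 * c1 - e / l * (x1 - s1 * c2))) :=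
    (D.two.sub (hs0.mul' k0 (by norm_num))).sub (hd'.mul' hq0 (by norm_num))
  have hb1 : D 1 (6 - s0 * c1 - s1 * c0 - e / l * (5 + x0 - s0 * c2 - s1 * c1 - e / l * (x1 - s1 * c2)) -
        d / l * (x1 - s1 * c2)) := by
    have h6 : D 1 6 := by rw [show (6 : ℚ) = 2 * 3 by norm_num]; exact D.two.mul' (D.int 3) (by norm_num)
    exact (((h6.sub (hs0.mul' k1 (by norm_num))).sub (hs1.mul' k0 (by norm_num))).sub (he'.mul' hq0 (by norm_num))).sub
      (hd'.mul' hm3 (by norm_num))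
  have sc1 {r : ℚ} (h : D 1 r) : D 0 (r / 2) := D.of_two_mul (j := 1) (by rwa [show 2 ^ 1 * (r / 2) = r by ring])
  refine ⟨d / l, e / l, _, _, hd', he', sc1 hb0, sc1 hb1, ?_, ?_, Y.div_od ol⟩
  · convert J using 1 <;> ring
  · have G2 : E (n + 2) (4 * (5 * (d / 4) * l - e / 4 * l - 2 * (d / 4) ^ 2)) := by
      obtain ⟨z, hz⟩ := G
      refine ⟨z, ?_⟩
      rw [Rat.cast_mul, hz]; push_cast; ring
    have := (G2.div_od ol).div_od ol
    convert this using 1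
    field_simp
    ring

/-- When the valuation is `2` one has `d₁ ≡ 4` modulo `8`, and `a(π) / π² - 1` has odd valuation `7` in
terms of `π`. So `a(π)` is not a square, against `selmer`. -/
theorem St.base (hv : AV v) (hp : IsRt p) (hK : Module.finrank ℚ K = 4) {d0 d1 t0 t1 : ℚ}
    (S : St 0 d0 d1 t0 t1) : False := by
  obtain ⟨⟨z, hz⟩, -⟩ := selmer hv hp hK S.H S.h0 S.h1
  have hr := hv.p_pos hp
  have hr1 := hv.p_lt hp
  have hp0 : p ≠ 0 := by rintro rfl; rw [hv.zero'] at hr; exact lt_irrefl _ hr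
  have h3 : D 3 (d1 - 4) := by
    obtain ⟨a, ha⟩ := S.hA
    have : D 3 (5 * d0 - d1 - d0 ^ 2 / 2 + 4) := ⟨1 + a, by
      push_cast at ha ⊢
      rw [ha]; ring⟩
    rw [show d1 - 4 = 5 * d0 - d0 * d0 / 2 - (5 * d0 - d1 - d0 ^ 2 / 2 + 4) by ring]
    refine (((D.int 5).mul' S.h0 (by norm_num)).sub (D.of_two_mul (j := 1) ?_)).sub this
    rw [show 2 ^ 1 * (d0 * d0 / 2) = d0 * d0 by ring]
    exact S.h0.mul' S.h0 (by norm_num)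
  have v4 : v (4 : K) = v p ^ 8 := by
    rw [show (4 : K) = 2 ^ 2 by norm_num, hv.pow, hv.two, ← hv.p4 hp]; ring
  have v1 : v (d1 : K) = v p ^ 8 := by
    rw [show (d1 : K) = 4 + ((d1 - 4 : ℚ) : K) by push_cast; ring, hv.add_eq, v4]
    rw [v4]
    exact (hv.of_D hp h3).trans_lt (pow_lt_pow_right_of_lt_one₀ hr hr1 (by norm_num))
  refine hv.sq_ne hp hK (z / p) 7 (by norm_num) (by norm_num) ?_
  have e : (z / p) ^ 2 - 1 = (d1 * p + d0) / p ^ 2 := by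
    field_simp
    linear_combination -hz
  rw [e, hv.div, hv.add_eq, hv.mul, hv.pow, v1, div_eq_iff (pow_ne_zero _ hr.ne')]
  · ring
  · rw [hv.mul, v1]
    refine (hv.of_D hp S.h0).trans_lt ?_
    rw [← pow_succ]
    exact pow_lt_pow_right_of_lt_one₀ hr hr1 (by norm_num)

theorem St.false (hv : AV v) (hp : IsRt p) (hK : Module.finrank ℚ K = 4) {n : ℕ} : ∀ {d0 d1 t0 t1 : ℚ},
    St n d0 d1 t0 t1 → False := by
  induction n with
  | zero => exact fun S => S.base hv hp hK
  | succ n ih =>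
    intro _ _ _ _ S
    obtain ⟨_, _, _, _, T⟩ := S.step hv hp hK
    exact ih T
end

/-! ### Starting states from rational points -/

@[simp, norm_cast] lemma castOfNat (n : ℕ) [n.AtLeastTwo] :
    ((ofNat(n) : ℤ_[2]) : ℚ_[2]) = OfNat.ofNat n := rfl

lemma exists_E {k : ℕ} {q : ℚ} (h : _root_.D k q) (h0 : q ≠ 0) : ∃ j, E (k + j) q := by
  obtain ⟨z, hz⟩ := h
  have z0 : z ≠ 0 := by
    rintro rfl
    rw [PadicInt.coe_zero, mul_zero] at hz
    exact h0 (by exact_mod_cast hz)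
  obtain ⟨j, u, hu⟩ := exists_two_pow z0
  exact ⟨j, u, by rw [hz, hu]; push_cast; ring⟩

lemma E.uniq_le {j k : ℕ} {q : ℚ} (h : E k q) (h' : E j q) : j ≤ k := by
  obtain ⟨a, ha⟩ := h
  obtain ⟨b, hb⟩ := h'
  refine pow_odd_lt (u := a) (z := 1 + 2 * b) (Subtype.ext ?_)
  change ((_ : ℤ_[2]) : ℚ_[2]) = ((_ : ℤ_[2]) : ℚ_[2])
  push_cast
  rw [← ha, ← hb]

lemma E.ne_zero {k : ℕ} {q : ℚ} (h : E k q) : q ≠ 0 := by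
  rintro rfl
  have h2 : E (k + 1) 0 → False := fun h' => absurd (h.uniq_le h') (by omega)
  obtain ⟨a, ha⟩ := h
  exact h2 ⟨a, by rw [pow_succ, mul_comm ((2 : ℚ_[2]) ^ k), mul_assoc, ← ha]; simp⟩

lemma E.of_sq {m : ℕ} {x : ℚ} (h : E m (x ^ 2)) : ∃ j, m = 2 * j ∧ E j x := by
  have hx : _root_.D 0 x := _root_.D.of_sq (h.D.mono (Nat.zero_le _))
  have x0 : x ≠ 0 := by rintro rfl; exact h.ne_zero (by norm_num)
  obtain ⟨j, hj⟩ := exists_E hx x0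
  rw [zero_add] at hj
  have h2 := hj.mul hj
  rw [← pow_two] at h2
  exact ⟨j, by have := h.uniq_le h2; have := h2.uniq_le h; omega, hj⟩

lemma Od.toE {q : ℚ} (h : Od q) : _root_.E 0 q := by
  obtain ⟨z, hz⟩ := h; exact ⟨z, by rw [hz]; ring⟩

lemma E.od {q : ℚ} (h : E 0 q) : Od q := by
  obtain ⟨z, hz⟩ := h; exact ⟨z, by rw [hz]; ring⟩

section
variable {Y W : ℚ}

/-- For `Y` even the divisor is `P + P₀`, with the sign of `P` chosen suitably, and `a = Y (Y - Y(P))`. -/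
lemma start_even (hF : W ^ 2 = 4 + 24 * Y + 56 * Y ^ 2 + 60 * Y ^ 3 + 26 * Y ^ 4 + 2 * Y ^ 5)
    (hY : D 1 Y) (h0 : Y ≠ 0) : ∃ n d0 d1 t0 t1, St n d0 d1 t0 t1 := by
  obtain ⟨y, rfl⟩ : ∃ y, Y = 2 * y := ⟨Y / 2, by ring⟩
  obtain ⟨w, rfl⟩ : ∃ w, W = 2 * w := ⟨W / 2, by ring⟩
  have hy : D 0 y := D.of_two_mul (j := 1) (by simpa using hY)
  have e : w ^ 2 - 1 = 12 * y + 8 * (7 * y ^ 2 + 15 * y ^ 3 + 13 * y ^ 4 + 2 * y ^ 5) := by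
    linear_combination hF / 4
  have ow : Od w := by
    have h2 : Od (w ^ 2) := by
      apply D.od_of_sub
      rw [e]
      obtain ⟨z, hz⟩ := hy
      exact ⟨6 * z + 4 * (7 * z ^ 2 + 15 * z ^ 3 + 13 * z ^ 4 + 2 * z ^ 5), by push_cast; rw [hz]; ring⟩
    exact Od.of_sq (D.of_sq h2.D0) h2
  wlog hs : D 2 (w - 1) generalizing w
  · refine this (-w) (by linear_combination hF) (by linear_combination e) ?_ ?_
    · obtain ⟨a, ha⟩ := ow
      exact ⟨-1 - a, by push_cast; rw [ha]; ring⟩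
    · rcases ow.mod4 with h | h
      · exact absurd h hs
      · convert h.neg using 1; ring
  have hw1 : Od ((w + 1) / 2) := by
    obtain ⟨a, ha⟩ := hs
    push_cast at ha
    exact ⟨a, by push_cast; linear_combination ha / 2⟩
  have hy2 : D 1 y := by
    apply D.of_two_mul (j := 2)
    obtain ⟨a, ha⟩ := hs
    obtain ⟨z, hz⟩ := hy
    have e' := congrArg (fun q : ℚ => (q : ℚ_[2])) e
    push_cast at e' ha
    rw [hz] at e'
    refine ⟨2 * a ^ 2 + a - z - (7 * z ^ 2 + 15 * z ^ 3 + 13 * z ^ 4 + 2 * z ^ 5), ?_⟩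
    push_cast
    rw [hz]
    linear_combination -e' + ((w : ℚ_[2]) + 1 + 4 * a) * ha
  obtain ⟨n, hn⟩ := exists_E (k := 2) (q := 2 * y) (D.two.mul hy2) h0
  refine ⟨n, 0, -(2 * y), 1, (w - 1) / (2 * y), D.zero, (D.two.mul hy2).neg, by simpa using D.int 1, ?_, ?_, ?_, D.zero⟩
  · rw [show (w - 1) / (2 * y) = (3 + 14 * y + 30 * y ^ 2 + 26 * y ^ 3 + 4 * y ^ 4) / ((w + 1) / 2) by
      rw [div_eq_div_iff h0 hw1.ne_zero]; linear_combination e / 2]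
    refine D.div_od ?_ hw1
    obtain ⟨z, hz⟩ := hy
    exact ⟨3 + 14 * z + 30 * z ^ 2 + 26 * z ^ 3 + 4 * z ^ 4, by push_cast; rw [hz]; ring⟩
  · obtain ⟨b, hb⟩ : ∃ b, b = (w - 1) / (2 * y) := ⟨_, rfl⟩
    rw [← hb]
    have hb' : w = 1 + b * (2 * y) := by rw [hb, div_mul_cancel₀ _ h0]; ring
    refine ⟨56 - 4 * b ^ 2 + 120 * y + 104 * y ^ 2 + 16 * y ^ 3, 60 + 26 * (2 * y) + 2 * (2 * y) ^ 2, 26 + 2 * (2 * y), by ring, ?_, ?_, by ring, by ring⟩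
    · apply mul_left_cancel₀ h0
      rw [hb'] at hF
      linear_combination -hF
    · ring
  · convert hn using 1
    · omega
    · ring

end

lemma E.div {j k : ℕ} {q r : ℚ} (h : E (j + k) q) (hr : E k r) : E j (q / r) := by
  have r0 := hr.ne_zero
  obtain ⟨a, ha⟩ := h
  obtain ⟨b, hb⟩ := hr
  obtain ⟨m, hm⟩ := odd_inv b
  have hm' := congrArg (fun t : ℤ_[2] => (t : ℚ_[2])) hm
  push_cast at hm'
  refine ⟨a + m + 2 * a * m, ?_⟩
  have r1 : (r : ℚ_[2]) ≠ 0 := by exact_mod_cast r0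
  push_cast
  rw [div_eq_iff r1, ha, hb, pow_add]
  linear_combination (-(2 : ℚ_[2]) ^ j * 2 ^ k * (1 + 2 * a)) * hm'

lemma E.sub_E {k : ℕ} {q r : ℚ} (h : E k q) (hr : E k r) : _root_.D (k + 1) (q - r) := by
  obtain ⟨a, ha⟩ := h
  obtain ⟨b, hb⟩ := hr
  exact ⟨a - b, by push_cast; rw [ha, hb]; ring⟩

lemma E.two : E 1 2 := ⟨0, by push_cast; ring⟩

lemma Od.num_den {q : ℚ} (h : Od q) : q.num % 2 = 1 ∧ (q.den : ℤ) % 2 = 1 := by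
  obtain ⟨z, hz⟩ := h
  have e : (q.num : ℤ_[2]) = (q.den : ℤ) * (1 + 2 * z) := by
    apply Subtype.ext
    change ((_ : ℤ_[2]) : ℚ_[2]) = ((_ : ℤ_[2]) : ℚ_[2])
    push_cast
    rw [← hz]
    have h1 := Rat.mul_den_eq_num q
    have := congrArg (fun t : ℚ => (t : ℚ_[2])) h1
    push_cast at this
    rw [← this]; ring
  have hc : ¬ (2 ∣ q.num ∧ 2 ∣ (q.den : ℤ)) := fun ⟨h1, h2⟩ => by
    have hq := Rat.isCoprime_num_den q
    have := hq.isUnit_of_dvd' h1 h2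
    rw [Int.isUnit_iff] at this
    omega
  rcases Int.emod_two_eq_zero_or_one q.num with h1 | h1 <;>
    rcases Int.emod_two_eq_zero_or_one (q.den : ℤ) with h2 | h2
  · exact absurd ⟨by omega, by omega⟩ hc
  · exfalso
    obtain ⟨a, ha⟩ : ∃ a, q.num = 2 * a := ⟨q.num / 2, by omega⟩
    obtain ⟨b, hb⟩ : ∃ b, (q.den : ℤ) = 1 + 2 * b := ⟨(q.den : ℤ) / 2, by omega⟩
    rw [ha, hb] at e
    push_cast at e
    exact not_even_odd (a := a) (b := b + z + 2 * b * z) (by linear_combination e)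
  · exfalso
    obtain ⟨a, ha⟩ : ∃ a, q.num = 1 + 2 * a := ⟨q.num / 2, by omega⟩
    obtain ⟨b, hb⟩ : ∃ b, (q.den : ℤ) = 2 * b := ⟨(q.den : ℤ) / 2, by omega⟩
    rw [ha, hb] at e
    push_cast at e
    exact not_even_odd (a := b * (1 + 2 * z)) (b := a) (by linear_combination -e)
  · exact ⟨h1, h2⟩

lemma isCoprime_quartic {A B : ℤ} (h : IsCoprime A B) (hB : B % 2 = 1) :
    IsCoprime ((2 * A - B) ^ 4 + 12 * (2 * A - B) ^ 3 * B + 18 * (2 * A - B) ^ 2 * B ^ 2 +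
      10 * (2 * A - B) * B ^ 3 + 2 * B ^ 4) (A * B) := by
  apply IsCoprime.mul_right
  · have h1 : IsCoprime (-B ^ 4) A := (h.symm.pow_left (m := 4)).neg_left
    have h2 := h1.add_mul_left_left
      (16 * A ^ 3 + 64 * A ^ 2 * B - 48 * A * B ^ 2 + 12 * B ^ 3)
    ring_nf at h2 ⊢
    exact h2
  · have h2 : IsCoprime (2 : ℤ) B := by
      rw [Int.isCoprime_iff_gcd_eq_one]
      have : Nat.Coprime 2 B.natAbs := by
        rw [Nat.coprime_two_left, Int.natAbs_odd]
        exact Int.odd_iff.mpr hB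
      exact this
    have h1 : IsCoprime ((2 * A) ^ 4) B := (h2.mul_left h).pow_left
    have h3 := h1.add_mul_left_left
      (64 * A ^ 3 - 48 * A ^ 2 * B + 12 * A * B ^ 2 - B ^ 3)
    ring_nf at h3 ⊢
    exact h3

/-- The homogenised quartic at `Y = 2 A / B - 1` with `A`, `B` odd is not plus or minus a square
modulo `8`. -/
lemma quartic_mod {A B a : ℤ} (hA : A % 2 = 1) (hB : B % 2 = 1)
    (h : (2 * A - B) ^ 4 + 12 * (2 * A - B) ^ 3 * B + 18 * (2 * A - B) ^ 2 * B ^ 2 +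
      10 * (2 * A - B) * B ^ 3 + 2 * B ^ 4 = a ^ 2 ∨
      (2 * A - B) ^ 4 + 12 * (2 * A - B) ^ 3 * B + 18 * (2 * A - B) ^ 2 * B ^ 2 +
      10 * (2 * A - B) * B ^ 3 + 2 * B ^ 4 = -a ^ 2) : False := by
  obtain ⟨x, rfl⟩ : ∃ x, A = 1 + 2 * x := ⟨A / 2, by omega⟩
  obtain ⟨y, rfl⟩ : ∃ y, B = 1 + 2 * y := ⟨B / 2, by omega⟩
  have key : ∀ x y a : ZMod 8, ¬ ((2 * (1 + 2 * x) - (1 + 2 * y)) ^ 4 +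
      12 * (2 * (1 + 2 * x) - (1 + 2 * y)) ^ 3 * (1 + 2 * y) +
      18 * (2 * (1 + 2 * x) - (1 + 2 * y)) ^ 2 * (1 + 2 * y) ^ 2 +
      10 * (2 * (1 + 2 * x) - (1 + 2 * y)) * (1 + 2 * y) ^ 3 + 2 * (1 + 2 * y) ^ 4 = a ^ 2 ∨
      (2 * (1 + 2 * x) - (1 + 2 * y)) ^ 4 +
      12 * (2 * (1 + 2 * x) - (1 + 2 * y)) ^ 3 * (1 + 2 * y) +
      18 * (2 * (1 + 2 * x) - (1 + 2 * y)) ^ 2 * (1 + 2 * y) ^ 2 +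
      10 * (2 * (1 + 2 * x) - (1 + 2 * y)) * (1 + 2 * y) ^ 3 + 2 * (1 + 2 * y) ^ 4 = -a ^ 2) := by
    decide +kernel
  apply key x y a
  rcases h with h | h
  · left; simpa using congrArg (fun t : ℤ => (t : ZMod 8)) h
  · right; simpa using congrArg (fun t : ℤ => (t : ZMod 8)) h

lemma exists_int_of_sq {x : ℚ} {m : ℤ} (h : x ^ 2 = m) : ∃ n : ℤ, x = n := by
  have h1 : (x ^ 2).den = 1 := by rw [h]; rfl
  rw [Rat.den_pow] at h1
  have h2 : x.den = 1 := by
    rcases Nat.pow_eq_one.mp h1 with h | h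
    · exact h
    · omega
  exact ⟨x.num, (Rat.den_eq_one_iff x).mp h2 |>.symm⟩

/-- There is no rational point for which `q = (1 + Y) / 2` is odd: numerator and denominator of the two
factors of the equation are coprime, so the homogenised quartic would be plus or minus a square. -/
lemma no_unit_case {q w : ℚ} (hq : Od q) (h : w ^ 2 = q * ((2 * q - 1) ^ 4 + 12 * (2 * q - 1) ^ 3 +
    18 * (2 * q - 1) ^ 2 + 10 * (2 * q - 1) + 2)) : False := by
  obtain ⟨hA, hB⟩ := hq.num_den
  have hc := Rat.isCoprime_num_den q
  have hqe : (q.num : ℚ) = q * q.den := (Rat.mul_den_eq_num q).symm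
  generalize hA' : q.num = A at *
  generalize hB' : (q.den : ℤ) = B at *
  have hBq : (q.den : ℚ) = (B : ℚ) := by rw [← hB']; simp
  rw [hBq] at hqe
  have e : (w * B ^ 3) ^ 2 = (((2 * A - B) ^ 4 + 12 * (2 * A - B) ^ 3 * B + 18 * (2 * A - B) ^ 2 * B ^ 2 +
      10 * (2 * A - B) * B ^ 3 + 2 * B ^ 4) * (A * B) : ℤ) := by
    push_cast
    rw [mul_pow, h, hqe]
    ring
  obtain ⟨n, hn⟩ := exists_int_of_sq e
  rw [hn] at e
  have e' := (show n ^ 2 = _ by exact_mod_cast e).symm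
  obtain ⟨a, ha⟩ := Int.sq_of_isCoprime (isCoprime_quartic hc hB) e'
  exact quartic_mod hA hB ha

section
variable {Y W : ℚ}

/-- For `Y` odd, take the cubic `2 + 6 X + (4 + 1/s) X² + X³/s` through `(-1, 0)` and `P` which has double
contact with the curve at `P₀`. The other two intersections with the curve form the divisor. -/
lemma start_odd (hF : W ^ 2 = 4 + 24 * Y + 56 * Y ^ 2 + 60 * Y ^ 3 + 26 * Y ^ 4 + 2 * Y ^ 5)
    (hY : Od Y) (h0 : 1 + Y ≠ 0) : ∃ n d0 d1 t0 t1, St n d0 d1 t0 t1 := by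
  have Y0 := hY.ne_zero
  have hF' : W ^ 2 = 2 * (1 + Y) * (Y ^ 4 + 12 * Y ^ 3 + 18 * Y ^ 2 + 10 * Y + 2) := by
    rw [hF]; ring
  have hg : Od (Y ^ 4 + 12 * Y ^ 3 + 18 * Y ^ 2 + 10 * Y + 2) := by
    have := ((hY.mul hY).mul (hY.mul hY)).add (y := 2 * (6 * Y ^ 3 + 9 * Y ^ 2 + 5 * Y + 1)) (by
      obtain ⟨z, hz⟩ := hY.D0
      exact ⟨6 * z ^ 3 + 9 * z ^ 2 + 5 * z + 1, by push_cast; rw [hz]; ring⟩)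
    convert this using 1; ring
  have ht1 : D 1 (1 + Y) := by
    obtain ⟨z, hz⟩ := hY
    exact ⟨1 + z, by push_cast; rw [hz]; ring⟩
  obtain ⟨m, hm⟩ := exists_E ht1 h0
  have hW2 : E (1 + (1 + m)) (W ^ 2) := by rw [hF']; exact (E.two.mul hm).mul_od hg
  obtain ⟨j, hj, hW⟩ := hW2.of_sq
  obtain ⟨k, rfl⟩ : ∃ k, j = k + 1 := ⟨j - 1, by omega⟩
  obtain rfl : m = 2 * k := by omega
  rcases Nat.eq_zero_or_pos k with rfl | hk
  · exfalso
    have hq : Od ((1 + Y) / 2) := (E.div (j := 0) (by simpa using hm) E.two).od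
    refine no_unit_case (w := W / 2) hq ?_
    have : Y = 2 * ((1 + Y) / 2) - 1 := by ring
    rw [← this, div_pow, hF']
    ring
  have hK : E (k + 1) ((W - (1 + Y) * (2 + 4 * Y)) / Y ^ 2) := by
    refine E.div_od ?_ (by rw [pow_two]; exact hY.mul hY)
    rw [sub_eq_add_neg]
    refine hW.add (D.neg (D.mul' hm.D (k := 1) ?_ (by omega)))
    obtain ⟨z, hz⟩ := hY.D0
    exact ⟨1 + 2 * z, by push_cast; rw [hz]; ring⟩
  obtain ⟨κ, hκ⟩ : ∃ κ, κ = (W - (1 + Y) * (2 + 4 * Y)) / Y ^ 2 := ⟨_, rfl⟩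
  rw [← hκ] at hK
  have κ0 := hK.ne_zero
  have hs : E k ((1 + Y) / κ) := E.div (by convert hm using 1; omega) hK
  obtain ⟨s, hse⟩ : ∃ s, s = (1 + Y) / κ := ⟨_, rfl⟩
  rw [← hse] at hs
  have s0 := hs.ne_zero
  have hsκ : 1 + Y = s * κ := by rw [hse]; field_simp
  have hWκ : W = κ * (Y ^ 2 + s * (2 + 4 * Y)) := by
    have : κ * Y ^ 2 = W - (1 + Y) * (2 + 4 * Y) := by rw [hκ]; field_simp
    linear_combination -this + (2 + 4 * Y) * hsκ
  have R1 : (1 + Y) * (Y ^ 2 + 4 * (1 + 2 * Y) * s) = 2 * s ^ 2 * (Y ^ 2 + 4 * Y + 2) := by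
    apply mul_left_cancel₀ (pow_ne_zero 2 Y0)
    apply mul_left_cancel₀ κ0
    rw [hWκ] at hF'
    have : κ * (κ * (Y ^ 2 + s * (2 + 4 * Y)) ^ 2 -
      2 * s * (Y ^ 4 + 12 * Y ^ 3 + 18 * Y ^ 2 + 10 * Y + 2)) = 0 := by
      linear_combination hF' + 2 * (Y ^ 4 + 12 * Y ^ 3 + 18 * Y ^ 2 + 10 * Y + 2) * hsκ
    have h3 := (mul_eq_zero.mp this).resolve_left κ0
    linear_combination s * κ * h3 + κ * (Y ^ 2 + s * (2 + 4 * Y)) ^ 2 * hsκ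
  have os : Od (1 - s) := by
    obtain ⟨z, hz⟩ := hs.D.mono hk
    exact ⟨-z, by push_cast; rw [hz]; ring⟩
  obtain ⟨δ0, h0e⟩ : ∃ δ0, δ0 = -4 * s * (1 - s) / Y := ⟨_, rfl⟩
  obtain ⟨δ1, h1e⟩ : ∃ δ1, δ1 = 1 + Y + 8 * s - 2 * s ^ 2 := ⟨_, rfl⟩
  have E1 : Y * δ0 = -4 * s * (1 - s) := by rw [h0e]; field_simp
  have R : δ0 - Y * δ1 = 12 * s - 8 * s ^ 2 := by
    apply mul_left_cancel₀ Y0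
    rw [h1e]
    linear_combination E1 - R1
  have hd0 : E (k + 2) δ0 := by
    rw [h0e]
    refine E.div_od (E.mul_od ?_ os) hY
    obtain ⟨z, hz⟩ := hs
    exact ⟨-1 - z, by push_cast; rw [hz, pow_add]; ring⟩
  have hd1 : D 2 δ1 := by
    obtain ⟨z, hz⟩ := hm.D.mono (show 2 ≤ _ by omega)
    obtain ⟨a, ha⟩ := hs.D.mono hk
    push_cast at hz
    exact ⟨z + 4 * a - 2 * a ^ 2, by rw [h1e]; push_cast; rw [ha]; linear_combination hz⟩
  have hi0 : δ0 / s = -4 * (1 - s) / Y := by rw [h0e]; field_simp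
  have hi1 : δ1 / s = κ + 8 - 2 * s := by rw [h1e, hsκ]; field_simp
  have hr := OnJ_reduce (m0 := 2) (m1 := 6) (m2 := 4 + 1 / s) (m3 := 1 / s) (n0 := 0) (n1 := 0)
    (n2 := Y * (1 / s) ^ 2) (n3 := -(1 - Y) * (1 / s) ^ 2) (n4 := -(1 / s) ^ 2) (d0 := δ0) (d1 := δ1)
    (fun X => by
      have e1 : 4 + 24 * X + 56 * X ^ 2 + 60 * X ^ 3 + 26 * X ^ 4 + 2 * X ^ 5 -
          (2 + 6 * X + (4 + 1 / s) * X ^ 2 + 1 / s * X ^ 3) ^ 2 =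
          -(1 / s) ^ 2 * X ^ 2 * (1 + X) * (X ^ 3 + (1 + 8 * s - 2 * s ^ 2) * X ^ 2 +
            (12 * s - 8 * s ^ 2) * X + (4 * s - 4 * s ^ 2)) := by
        field_simp; ring
      rw [e1, h1e] at *
      linear_combination (1 / s) ^ 2 * X ^ 2 * (1 + X) * (X * R - E1))
  refine ⟨k, δ0, δ1, 1 - 2 * δ0 + 2 * ((1 - s) / Y) * (1 - δ1),
    3 - 2 * δ1 - (κ / 2 + 4 - s) * (1 - δ1) + 2 * ((1 - s) / Y), hd0.D.mono (by omega), hd1, ?_, ?_, ?_, ?_, ?_⟩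
  · obtain ⟨a, ha⟩ := hd0.D.mono (Nat.zero_le _)
    obtain ⟨b, hb⟩ := hd1.mono (Nat.zero_le _)
    obtain ⟨c, hc⟩ := (os.div hY).D0
    exact ⟨1 - 2 * a + 2 * c * (1 - b), by push_cast at hc ⊢; rw [ha, hb, hc]; ring⟩
  · obtain ⟨b, hb⟩ := hd1.mono (Nat.zero_le _)
    obtain ⟨c, hc⟩ := (os.div hY).D0
    obtain ⟨d, hd⟩ := hK.D.mono (show 1 ≤ k + 1 by omega)
    obtain ⟨e, he⟩ := hs.D.mono (Nat.zero_le _)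
    exact ⟨3 - 2 * b - (d + 4 - e) * (1 - b) + 2 * c, by push_cast at hc ⊢; rw [hb, hc, hd, he]; ring⟩
  · convert hr using 1
    · rw [show δ0 * (4 + 1 / s - δ1 * (1 / s)) = 4 * δ0 + δ0 / s * (1 - δ1) by ring, hi0]; ring
    · rw [show δ1 * (4 + 1 / s - δ1 * (1 / s)) = 4 * δ1 + δ1 / s * (1 - δ1) by ring,
        show δ0 * (1 / s) = δ0 / s by ring, hi0, hi1]; ring
  · have h5 : E (k + 2) (5 * δ0) := by
      rw [mul_comm]; exact hd0.mul_od ⟨2, by push_cast; ring⟩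
    have h6 : D (k + 3) (2 * s ^ 2 - (1 + Y)) := by
      have h2 : E (1 + (k + k)) (2 * (s * s)) := E.two.mul (hs.mul hs)
      have := (h2.sub_E (r := 1 + Y) (by convert hm using 1; omega)).mono (show k + 3 ≤ _ by omega)
      convert this using 1; ring
    have h7 : D (k + 3) (8 * s) := by
      obtain ⟨z, hz⟩ := hs
      exact ⟨1 + 2 * z, by push_cast; rw [hz, pow_add]; ring⟩
    have h8 : D (k + 3) (δ0 ^ 2 / 2) := by
      apply D.of_two_mul (j := 1)
      have := D.mul' hd0.D hd0.D (show k + 3 + 1 ≤ _ by omega)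
      convert this using 1; ring
    have := h5.add (D.sub (D.sub h6 h7) h8)
    convert this using 1
    rw [h1e]; ring
  · exact hd0.D.mono (by omega)
end

section
variable {Y W : ℚ}

/-- For `Y` of valuation `-1`, take the cubic `2 + 6 X + (5 + 1/(2 s)) X² + X³/s` through `P` and a point with
`X = -1/2` which has double contact with the curve at `P₀`. The other two intersections form the
divisor. The computation uses the coordinates `u = 1 + 2 Y` and `w = 4 W`. -/
lemma start_half (hF : W ^ 2 = 4 + 24 * Y + 56 * Y ^ 2 + 60 * Y ^ 3 + 26 * Y ^ 4 + 2 * Y ^ 5)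
    (hY : Od (2 * Y)) (h0 : 1 + 2 * Y ≠ 0) : ∃ n d0 d1 t0 t1, St n d0 d1 t0 t1 := by
  obtain ⟨u, hu⟩ : ∃ u, u = 1 + 2 * Y := ⟨_, rfl⟩
  obtain ⟨w, hw⟩ : ∃ w, w = 4 * W := ⟨_, rfl⟩
  have hYu : Y = (u - 1) / 2 := by rw [hu]; ring
  have hx : Od (u - 1) := by convert hY using 1; rw [hu]; ring
  have hx0 := hx.ne_zero
  rw [← hu] at h0
  have e : w ^ 2 = (5 * u ^ 2 + 2 * u + 1) ^ 2 + u * (u - 1) ^ 4 := by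
    rw [hYu] at hF
    rw [hw]
    linear_combination 16 * hF
  clear hw hF hu
  subst hYu
  have hx4 : Od ((u - 1) ^ 4) := by
    convert (hx.mul hx).mul (hx.mul hx) using 1; ring
  have hu1 : D 1 u := by
    obtain ⟨z, hz⟩ := hx
    push_cast at hz
    exact ⟨1 + z, by push_cast; linear_combination hz⟩
  have hf : D 3 ((5 * u ^ 2 + 2 * u + 1) ^ 2 - 1) := by
    obtain ⟨z, hz⟩ := hu1
    exact ⟨(z + 5 * z ^ 2) + 2 * (z + 5 * z ^ 2) ^ 2, by push_cast; rw [hz]; ring⟩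
  have hw2 : Od (w ^ 2) := by
    apply D.od_of_sub
    have := (hf.mono (show 1 ≤ 3 by norm_num)).add (hu1.mul' hx4.D0 (show 1 ≤ 1 + 0 by norm_num))
    convert this using 1
    rw [e]; ring
  have hwo : Od w := Od.of_sq (D.of_sq hw2.D0) hw2
  have hu3 : D 3 u := by
    have h8 : D 3 (w ^ 2 - 1) := by
      rcases hwo.mod4 with h | h
      · obtain ⟨z, hz⟩ := h
        push_cast at hz
        exact ⟨z + 2 * z ^ 2, by push_cast; linear_combination ((w : ℚ_[2]) + 1 + 4 * z) * hz⟩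
      · obtain ⟨z, hz⟩ := h
        push_cast at hz
        exact ⟨-z + 2 * z ^ 2, by push_cast; linear_combination ((w : ℚ_[2]) - 1 + 4 * z) * hz⟩
    have := (h8.sub hf).div_od hx4
    convert this using 1
    rw [e]; field_simp; ring
  wlog hs : D 2 (w + 1) generalizing w
  · refine this (-w) (by linear_combination e) (by convert hw2 using 1; ring) ?_ ?_
    · obtain ⟨a, ha⟩ := hwo
      exact ⟨-1 - a, by push_cast; rw [ha]; ring⟩
    · rcases hwo.mod4 with h | h
      · convert h.neg using 1; ring
      · exact absurd h hs
  obtain ⟨j, hj⟩ := exists_E hu3 h0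
  obtain ⟨κ, hκ⟩ : ∃ κ, κ = (w - (5 * u ^ 2 + 2 * u + 1)) / 2 := ⟨_, rfl⟩
  have hκo : Od κ := by
    obtain ⟨a, ha⟩ := hu3
    obtain ⟨b, hb⟩ := hs
    push_cast at hb
    exact ⟨-1 + b - 4 * a - 80 * a ^ 2, by
      rw [hκ]; push_cast; rw [ha]; linear_combination hb / 2⟩
  have κ0 := hκo.ne_zero
  have h4κ : E 2 (4 * κ) := (show E 2 4 from ⟨0, by push_cast; ring⟩).mul_od hκo
  have hx2 : Od ((u - 1) ^ 2) := by rw [pow_two]; exact hx.mul hx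
  obtain ⟨s, hse⟩ : ∃ s, s = u * (u - 1) ^ 2 / (4 * κ) := ⟨_, rfl⟩
  have hsE : E (j + 1) s := by
    rw [hse]
    refine E.div ?_ h4κ
    convert hj.mul_od hx2 using 1; omega
  obtain ⟨k, rfl⟩ : ∃ k, k = j + 1 := ⟨_, rfl⟩
  have s0 := hsE.ne_zero
  have hsκ : 4 * κ * s = u * (u - 1) ^ 2 := by rw [hse]; field_simp
  have R : s * (5 * u ^ 2 + 2 * u + 1) = (u - 1) ^ 2 * (s ^ 2 - u / 4) := by
    apply mul_left_cancel₀ κ0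
    have h1 : w = 2 * κ + (5 * u ^ 2 + 2 * u + 1) := by rw [hκ]; ring
    rw [h1] at e
    linear_combination s * e / 4 - ((u - 1) ^ 2 * s / 4 + κ / 4) * hsκ
  obtain ⟨g, hg⟩ : ∃ g, g = (3 * u - 1) / (u - 1) ^ 2 := ⟨_, rfl⟩
  obtain ⟨r, hr⟩ : ∃ r, r = 1 / (u - 1) := ⟨_, rfl⟩
  have hgo : Od g := by
    rw [hg]
    refine Od.div ?_ hx2
    obtain ⟨z, hz⟩ := hu1
    exact ⟨-1 + 3 * z, by push_cast; rw [hz]; ring⟩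
  have hro : Od r := by
    rw [hr]
    exact Od.div ⟨0, by push_cast; ring⟩ hx
  have E0 : r * (u - 1) = 1 := by rw [hr]; field_simp
  have E2 : g * (u - 1) ^ 2 = 3 * u - 1 := by rw [hg]; field_simp
  have E3 : g * (u - 1) = 3 + 2 * r := by
    apply mul_left_cancel₀ hx0
    linear_combination E2 - 2 * E0
  obtain ⟨δ0, h0e⟩ : ∃ δ0, δ0 = -8 * s * r := ⟨_, rfl⟩
  obtain ⟨δ1, h1e⟩ : ∃ δ1, δ1 = -8 * s * g := ⟨_, rfl⟩
  have a0 : -((u - 1) / 2) * δ0 = 4 * s := by rw [h0e]; linear_combination 4 * s * E0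
  have a1 : δ0 - (u - 1) / 2 * δ1 = 12 * s := by rw [h0e, h1e]; linear_combination 4 * s * E3
  have a2 : δ1 - (u - 1) / 2 = 1 / 2 - 2 * s ^ 2 + 10 * s := by
    apply mul_left_cancel₀ (pow_ne_zero 2 hx0)
    rw [h1e]
    linear_combination (-8 * s) * E2 - 2 * R
  have hi0 : δ0 * (1 / s) = -8 * r := by rw [h0e]; field_simp
  have hi1 : δ1 * (1 / s) = -8 * g := by rw [h1e]; field_simp
  have hr := OnJ_reduce (m0 := 2) (m1 := 6) (m2 := 5 + 1 / s / 2) (m3 := 1 / s) (n0 := 0) (n1 := 0)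
    (n2 := (u - 1) / 2 / 2 * (1 / s) ^ 2) (n3 := -(1 / 2 - (u - 1) / 2) * (1 / s) ^ 2)
    (n4 := -(1 / s) ^ 2) (d0 := δ0) (d1 := δ1)
    (fun X => by
      have e1 : 4 + 24 * X + 56 * X ^ 2 + 60 * X ^ 3 + 26 * X ^ 4 + 2 * X ^ 5 -
          (2 + 6 * X + (5 + 1 / s / 2) * X ^ 2 + 1 / s * X ^ 3) ^ 2 =
          -(1 / s) ^ 2 * X ^ 2 * (X + 1 / 2) * (X ^ 3 + (1 / 2 - 2 * s ^ 2 + 10 * s) * X ^ 2 +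
            12 * s * X + 4 * s) := by
        field_simp; ring
      rw [e1]
      linear_combination (1 / s) ^ 2 * X ^ 2 * (X + 1 / 2) * (X ^ 2 * a2 + X * a1 + a0))
  have h8s : E (j + 4) (8 * s) := by
    have := (show E 3 8 from ⟨0, by push_cast; ring⟩).mul hsE
    convert this using 1; omega
  have hd0 : D (j + 4) δ0 := by
    have := (h8s.mul_od hro).D.neg
    convert this using 1; rw [h0e]; ring
  have hd1 : D 2 δ1 := by
    have := (h8s.mul_od hgo).D.neg.mono (show 2 ≤ _ by omega)
    convert this using 1; rw [h1e]; ring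
  obtain ⟨a, ha⟩ := hsE.D.mono (show 1 ≤ _ by omega)
  obtain ⟨b, hb⟩ := hro.D0
  obtain ⟨c, hc⟩ := hgo.D0
  obtain ⟨d, hd⟩ := hd1
  refine ⟨j + 4, δ0, δ1, 1 + 20 * s * r + 4 * r * (1 / 2 - δ1),
    3 + 20 * s * g + 2 * g * (1 - 2 * δ1) + 4 * r, hd0.mono (by omega), ⟨d, hd⟩, ?_, ?_, ?_, ?_, hd0⟩
  · exact ⟨1 + 40 * a * b + 2 * b * (1 - 8 * d), by push_cast; rw [ha, hb, hd]; ring⟩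
  · exact ⟨3 + 40 * a * c + 2 * c * (1 - 8 * d) + 4 * b, by push_cast; rw [ha, hb, hc, hd]; ring⟩
  · convert hr using 1
    · linear_combination (5 : ℚ) * h0e + (1 / 2 - δ1) * hi0
    · linear_combination (5 : ℚ) * h1e + (1 / 2 - δ1) * hi1 + hi0
  · have : E (j + 4 + 2) (8 * s * (4 - 2 * u - 4 * s) * r ^ 2) := by
      have h2 : E 2 (4 - 2 * u - 4 * s) := by
        obtain ⟨z, hz⟩ := hu3
        exact ⟨-2 * z - a, by push_cast; rw [hz, ha]; ring⟩
      rw [pow_two]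
      exact (h8s.mul h2).mul_od (hro.mul hro)
    convert this using 1
    rw [h0e, h1e]
    apply mul_left_cancel₀ (pow_ne_zero 2 hx0)
    linear_combination 8 * s * E2 - 40 * s * (u - 1) * E0 -
      8 * s * (4 - 2 * u) * (1 + r * (u - 1)) * E0

/-- For `Y` of valuation at most `-2`, take the parabola `2 + 6 X + p X²` with `p = (W - 2 - 6 Y) / Y²`, which
has double contact at `P₀` and passes through `P`. The other two intersections form the divisor. -/
lemma start_pole (hF : W ^ 2 = 4 + 24 * Y + 56 * Y ^ 2 + 60 * Y ^ 3 + 26 * Y ^ 4 + 2 * Y ^ 5)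
    (hY : D 2 Y⁻¹) (Y0 : Y ≠ 0) : ∃ n d0 d1 t0 t1, St n d0 d1 t0 t1 := by
  obtain ⟨ρ, hρ⟩ : ∃ ρ, ρ = Y⁻¹ := ⟨_, rfl⟩
  rw [← hρ] at hY
  have hYρ : ρ * Y = 1 := by rw [hρ]; field_simp
  have ρ0 : ρ ≠ 0 := left_ne_zero_of_mul_eq_one hYρ
  obtain ⟨ω, hω⟩ : ∃ ω, ω = W * ρ ^ 3 := ⟨_, rfl⟩
  have hω2 : ω ^ 2 = 2 * ρ * (1 + 13 * ρ + 30 * ρ ^ 2 + 28 * ρ ^ 3 + 12 * ρ ^ 4 + 2 * ρ ^ 5) := by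
    have : Y = ρ⁻¹ := by rw [hρ, inv_inv]
    rw [hω, mul_pow, hF, this]
    field_simp; ring
  obtain ⟨j, hj⟩ := exists_E hY ρ0
  have ho : Od (1 + 13 * ρ + 30 * ρ ^ 2 + 28 * ρ ^ 3 + 12 * ρ ^ 4 + 2 * ρ ^ 5) := by
    obtain ⟨z, hz⟩ := hY
    exact ⟨26 * z + 30 * (2 * z) * (4 * z) + 14 * (4 * z) ^ 3 + 6 * (4 * z) ^ 4 + (4 * z) ^ 5, by
      push_cast; rw [hz]; ring⟩
  obtain ⟨i, hi, hωE⟩ : ∃ i, 1 + (2 + j) = 2 * i ∧ E i ω := by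
    apply E.of_sq
    rw [hω2]
    exact (E.two.mul hj).mul_od ho
  obtain ⟨k, rfl, hk⟩ : ∃ k, i = k + 1 ∧ 1 ≤ k := ⟨i - 1, by omega, by omega⟩
  obtain rfl : j = 2 * k - 1 := by omega
  have hρE : E (2 * k + 1) ρ := by convert hj using 1; omega
  obtain ⟨μ, hμ⟩ : ∃ μ, μ = ω - 2 * ρ ^ 3 - 6 * ρ ^ 2 := ⟨_, rfl⟩
  have hρD := hρE.D
  have hμE : E (k + 1) μ := by
    have h2 : D (k + 1 + 1) (-2 * ρ ^ 3 - 6 * ρ ^ 2) := by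
      obtain ⟨z, hz⟩ := hρD.mono (show k + 2 ≤ _ by omega)
      exact ⟨(-2 * (2 ^ (k + 2) * z) ^ 2 - 6 * (2 ^ (k + 2) * z)) * z, by push_cast; rw [hz]; ring⟩
    convert hωE.add h2 using 1
    rw [hμ]; ring
  obtain ⟨p, hp⟩ : ∃ p, p = μ * Y := ⟨_, rfl⟩
  have hpρ : p * ρ = μ := by rw [hp]; linear_combination μ * hYρ
  obtain ⟨l, hl⟩ : ∃ l, l = 2 + 26 * ρ + 60 * ρ ^ 2 + 20 * ρ ^ 3 - 12 * μ * ρ - 4 * μ * ρ ^ 2 := ⟨_, rfl⟩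
  have hpl : p * μ = l := by
    apply mul_left_cancel₀ ρ0
    have h1 : ω = μ + 2 * ρ ^ 3 + 6 * ρ ^ 2 := by rw [hμ]; ring
    rw [h1] at hω2
    rw [hl]
    linear_combination hω2 + μ * hpρ
  obtain ⟨d0, h0⟩ : ∃ d0, d0 = 2 * μ - 10 * ρ := ⟨_, rfl⟩
  obtain ⟨d1, h1⟩ : ∃ d1, d1 = ρ * d0 - 30 * ρ + 6 * μ := ⟨_, rfl⟩
  have hp0 : d0 * p = 2 * l - 10 * μ := by rw [h0]; linear_combination 2 * hpl - 10 * hpρ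
  have hp1 : d1 * p = ρ * (2 * l - 10 * μ) - 30 * μ + 6 * l := by
    rw [h1]; linear_combination 6 * hpl - 30 * hpρ + ρ * hp0
  have a0 : -2 * Y * d0 = 20 - 4 * p := by rw [h0, hp]; linear_combination 20 * hYρ
  have a1 : d0 - Y * d1 = 30 - 6 * p := by rw [h1, hp]; linear_combination (30 - d0) * hYρ
  have a2 : 2 * (d1 - Y) = 26 - p ^ 2 := by
    apply mul_left_cancel₀ ρ0
    rw [h1, h0]
    linear_combination -2 * hYρ + hl + hpl + p * hpρ
  have hr := OnJ_reduce (m0 := 2) (m1 := 6) (m2 := p) (m3 := 0) (n0 := 0) (n1 := 0)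
    (n2 := -2 * Y) (n3 := 2) (n4 := 0) (d0 := d0) (d1 := d1)
    (fun X => by linear_combination (-X ^ 2) * a0 - 2 * X ^ 3 * a1 - X ^ 4 * a2)
  obtain ⟨m, hm⟩ := hμE.D
  obtain ⟨r, hr'⟩ := hρD.mono (show k + 2 ≤ _ by omega)
  have hd0 : E (k + 2) d0 := by
    have h2 : E (1 + (k + 1)) (2 * μ) := E.two.mul hμE
    have h3 : D (1 + (k + 1) + 1) (-10 * ρ) := ⟨-5 * r, by push_cast; rw [hr']; ring⟩
    convert h2.add h3 using 1
    · omega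
    · rw [h0]; ring
  have hd1 : D 2 d1 := by
    obtain ⟨a, ha⟩ := hd0.D.mono (show 2 ≤ _ by omega)
    obtain ⟨b, hb⟩ := hρD.mono (show 2 ≤ _ by omega)
    obtain ⟨c, hc⟩ := hμE.D.mono (show 1 ≤ _ by omega)
    exact ⟨b * (4 * a) - 30 * b + 3 * c, by rw [h1]; push_cast; rw [ha, hb, hc]; ring⟩
  obtain ⟨b, hb⟩ := hρD.mono (Nat.zero_le _)
  obtain ⟨c, hc⟩ := hμE.D.mono (Nat.zero_le _)
  refine ⟨k + 1, d0, d1, 1 - l + 5 * μ, 3 - ρ * (l - 5 * μ) + 15 * μ - 3 * l,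
    hd0.D.mono (by omega), hd1, ?_, ?_, ?_, ?_, hd0.D.mono (by omega)⟩
  · exact ⟨1 - (2 + 26 * b + 60 * b ^ 2 + 20 * b ^ 3 - 12 * c * b - 4 * c * b ^ 2) + 5 * c, by
      rw [hl]; push_cast; rw [hb, hc]; ring⟩
  · exact ⟨3 - b * ((2 + 26 * b + 60 * b ^ 2 + 20 * b ^ 3 - 12 * c * b - 4 * c * b ^ 2) - 5 * c) + 15 * c -
      3 * (2 + 26 * b + 60 * b ^ 2 + 20 * b ^ 3 - 12 * c * b - 4 * c * b ^ 2), by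
      rw [hl]; push_cast; rw [hb, hc]; ring⟩
  · convert hr using 1
    · linear_combination hp0
    · linear_combination hp1
  · have h4 : E (2 + (k + 1)) (4 * μ) := (show E 2 4 from ⟨0, by push_cast; ring⟩).mul hμE
    obtain ⟨a, ha⟩ := hd0.D
    have h5 : D (2 + (k + 1) + 1) (-20 * ρ - ρ * d0) :=
      ⟨-5 * r - 2 ^ k * r * a, by push_cast; rw [hr', ha]; ring⟩
    have h6 : D (2 + (k + 1) + 1) (d0 ^ 2 / 2) := by
      apply D.of_two_mul (j := 1)
      have := D.mul' hd0.D hd0.D (show 2 + (k + 1) + 1 + 1 ≤ _ by omega)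
      convert this using 1; ring
    convert h4.add (h5.sub h6) using 1
    · omega
    · rw [h1, h0]; ring
end

/-! ### Conclusion -/

/-- Each rational point outside `Y = 0, -1, -1/2` yields a state. -/
lemma exists_start {Y W : ℚ} (hF : W ^ 2 = 4 + 24 * Y + 56 * Y ^ 2 + 60 * Y ^ 3 + 26 * Y ^ 4 + 2 * Y ^ 5)
    (h0 : Y ≠ 0) (h1 : 1 + Y ≠ 0) (h2 : 1 + 2 * Y ≠ 0) : ∃ n d0 d1 t0 t1, St n d0 d1 t0 t1 := by
  by_cases hY : D 0 Y
  · rcases hY.par with h | h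
    · exact start_even hF h h0
    · exact start_odd hF h h1
  have hρ : D 1 Y⁻¹ := by
    apply padic_norm_lt
    rw [D_iff, pow_zero, not_le] at hY
    push_cast
    rw [norm_inv]
    exact inv_lt_one_of_one_lt₀ hY
  obtain ⟨j, hj⟩ := exists_E hρ (inv_ne_zero h0)
  rcases j with _ | j
  · have := (E.div (j := 0) E.two hj).od
    exact start_half hF (by convert this using 1; field_simp) h2
  · exact start_pole hF (hj.D.mono (by omega)) h0

/-- The descent applied in `K = ℚ[X] / (g)`. -/
lemma no_start {n : ℕ} {d0 d1 t0 t1 : ℚ} (S : St n d0 d1 t0 t1) : False := by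
  have : Fact (Irreducible gpoly) := ⟨gpoly_irreducible⟩
  have : FiniteDimensional ℚ (AdjoinRoot gpoly) := (AdjoinRoot.powerBasis gpoly_monic.ne_zero).finite
  have : NumberField (AdjoinRoot gpoly) := { }
  obtain ⟨v, hv⟩ := exists_AV (AdjoinRoot gpoly)
  have hp : IsRt (AdjoinRoot.root gpoly) := by
    have := AdjoinRoot.eval₂_root gpoly
    conv at this => lhs; arg 3; unfold gpoly
    simpa [IsRt] using this
  have hK : Module.finrank ℚ (AdjoinRoot gpoly) = 4 := by
    rw [(AdjoinRoot.powerBasis gpoly_monic.ne_zero).finrank, AdjoinRoot.powerBasis_dim, gpoly_natDegree]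
  exact S.false hv hp hK

theorem rational_points_of_genus_two_curve :
    ∀ t w : ℚ,
      w^2 = t^5 + 21*t^4 + 26*t^3 + 10*t^2 + 5*t + 1 ↔
        (t, w) = (-1, 0) ∨ (t, w) = (0, 1) ∨ (t, w) = (0, -1) ∨
        (t, w) = (1, 8) ∨ (t, w) = (1, -8) := by
  intro t w
  simp only [Prod.mk.injEq]
  constructor
  · intro h
    by_cases h1 : t = 1
    · subst h1
      have : (w - 8) * (w + 8) = 0 := by linear_combination h
      rcases mul_eq_zero.mp this with h | h
      · exact .inr (.inr (.inr (.inl ⟨rfl, by linarith⟩)))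
      · exact .inr (.inr (.inr (.inr ⟨rfl, by linarith⟩)))
    by_cases h2 : t = -1
    · subst h2
      exact .inl ⟨rfl, pow_eq_zero_iff two_ne_zero |>.mp (by linear_combination h)⟩
    by_cases h3 : t = 0
    · subst h3
      have : (w - 1) * (w + 1) = 0 := by linear_combination h
      rcases mul_eq_zero.mp this with h | h
      · exact .inr (.inl ⟨rfl, by linarith⟩)
      · exact .inr (.inr (.inl ⟨rfl, by linarith⟩))
    exfalso
    obtain ⟨n, d0, d1, t0, t1, S⟩ := exists_start (Y := (t - 1) / 2) (W := w / 4)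
      (by linear_combination h / 16) (fun h => h1 (by linarith)) (fun h => h2 (by linarith))
      (fun h => h3 (by linarith))
    exact no_start S
  · rintro (⟨rfl, rfl⟩ | ⟨rfl, rfl⟩ | ⟨rfl, rfl⟩ | ⟨rfl, rfl⟩ | ⟨rfl, rfl⟩) <;> norm_num
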